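/- Let S be a quasi-hereditary algebra with a simple-preserving duality and Ringel dual S'. Then gfd(S) = wfd(S) = wfd(S') = gfd(S'). -/

import Mathlib

/-!
Common definitions for formalizing "On the global and ∇-filtration dimensions of
quasi-hereditary algebras" by Erdmann and Parker.

We work with a finite-dimensional algebra `S` over a field `k`; since `S` is
finite dimensional over `k`, the finite-dimensional `S`-modules are exactly the
finitely generated ones, so we express finite-dimensionality of a module `M` as
`Module.Finite S M`.
-/

open CategoryTheory

namespace QHPaper

variable (S : Type) [Ring S]

/-- The subquotient `B ⧸ A` associated to two submodules `A B` of `M`. -/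
abbrev subquot {M : ModuleCat.{0} S} (A B : Submodule S ↥M) : Type :=
  ↥B ⧸ (Submodule.comap B.subtype A)

/-- A filtration `⊥ = f 0 ≤ f 1 ≤ ⋯ ≤ f n = ⊤` of `M` whose `i`-th section
`f (i+1) / f i` is isomorphic to the prescribed module `D i`. -/
def HasFiltrationWithSections (M : ModuleCat.{0} S) (n : ℕ)
    (f : Fin (n + 1) → Submodule S ↥M) (D : Fin n → ModuleCat.{0} S) : Prop :=
  Monotone f ∧ f 0 = ⊥ ∧ f (Fin.last n) = ⊤ ∧
    ∀ i : Fin n, Nonempty ((subquot S (f i.castSucc) (f i.succ)) ≃ₗ[S] ↥(D i))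

/-- `L` occurs as a (simple) subquotient of `M`; for `L` simple this says that `L`
is a composition factor of `M`. -/
def IsCompFactor (L M : ModuleCat.{0} S) : Prop :=
  ∃ (A B : Submodule S ↥M), A ≤ B ∧ Nonempty ((subquot S A B) ≃ₗ[S] ↥L)

/-- `L` occurs with multiplicity `m` among the sections of a composition series of `M`. -/
def CompFactorMult (L M : ModuleCat.{0} S) (m : ℕ) : Prop :=
  ∃ (n : ℕ) (f : Fin (n + 1) → Submodule S ↥M),
    Monotone f ∧ f 0 = ⊥ ∧ f (Fin.last n) = ⊤ ∧
    (∀ i : Fin n, IsSimpleModule S (subquot S (f i.castSucc) (f i.succ))) ∧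
    Nat.card {i : Fin n // Nonempty ((subquot S (f i.castSucc) (f i.succ)) ≃ₗ[S] ↥L)} = m

/-- `P` is a projective cover of `M`: `P` is projective and there is a surjection
`P → M` whose kernel is superfluous in `P`. -/
def IsProjCover (P M : ModuleCat.{0} S) : Prop :=
  Module.Projective S ↥P ∧ ∃ π : ↥P →ₗ[S] ↥M, Function.Surjective π ∧
    ∀ N : Submodule S ↥P, N ⊔ LinearMap.ker π = ⊤ → N = ⊤

/-- `I` is an injective hull of `M`: `I` is injective and there is an injection
`M → I` with essential image. -/
def IsInjHull (I M : ModuleCat.{0} S) : Prop :=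
  Module.Injective S ↥I ∧ ∃ ι : ↥M →ₗ[S] ↥I, Function.Injective ι ∧
    ∀ N : Submodule S ↥I, N ⊓ LinearMap.range ι = ⊥ → N = ⊥

/-- The data of a quasi-hereditary algebra structure on `S` with weight poset `Λ`:
a full set `L` of pairwise non-isomorphic simple modules, their projective covers `P`
and injective hulls `I`, the standard modules `std` (largest quotient of `P lam` with
all composition factors `L mu`, `mu ≤ lam`), the costandard modules `costd`
(largest submodule of `I lam` with all composition factors `L mu`, `mu ≤ lam`),
such that `L lam` occurs exactly once in `std lam` and `P lam` is filtered by
standard modules `std mu` with `mu ≥ lam`, with `std lam` occurring exactly once. -/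
structure QHData (Λ : Type) [Fintype Λ] [PartialOrder Λ] where
  L : Λ → ModuleCat.{0} S
  P : Λ → ModuleCat.{0} S
  I : Λ → ModuleCat.{0} S
  std : Λ → ModuleCat.{0} S
  costd : Λ → ModuleCat.{0} S
  finiteL : ∀ lam, Module.Finite S ↥(L lam)
  simpleL : ∀ lam, IsSimpleModule S ↥(L lam)
  nonisoL : ∀ lam mu, lam ≠ mu → IsEmpty (↥(L lam) ≃ₗ[S] ↥(L mu))
  fullL : ∀ M : ModuleCat.{0} S, IsSimpleModule S ↥M → ∃ lam, Nonempty (↥M ≃ₗ[S] ↥(L lam))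
  projCover : ∀ lam, IsProjCover S (P lam) (L lam)
  injHull : ∀ lam, IsInjHull S (I lam) (L lam)
  stdSpec : ∀ lam, ∃ K : Submodule S ↥(P lam),
    Nonempty (↥(std lam) ≃ₗ[S] (↥(P lam) ⧸ K)) ∧
    (∀ mu, IsCompFactor S (L mu) (ModuleCat.of S (↥(P lam) ⧸ K)) → mu ≤ lam) ∧
    ∀ K' : Submodule S ↥(P lam),
      (∀ mu, IsCompFactor S (L mu) (ModuleCat.of S (↥(P lam) ⧸ K')) → mu ≤ lam) → K ≤ K'
  costdSpec : ∀ lam, ∃ V : Submodule S ↥(I lam),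
    Nonempty (↥(costd lam) ≃ₗ[S] ↥V) ∧
    (∀ mu, IsCompFactor S (L mu) (ModuleCat.of S ↥V) → mu ≤ lam) ∧
    ∀ V' : Submodule S ↥(I lam),
      (∀ mu, IsCompFactor S (L mu) (ModuleCat.of S ↥V') → mu ≤ lam) → V' ≤ V
  multOne : ∀ lam, CompFactorMult S (L lam) (std lam) 1
  projFilt : ∀ lam, ∃ (n : ℕ) (f : Fin (n + 1) → Submodule S ↥(P lam)) (g : Fin n → Λ),
    HasFiltrationWithSections S (P lam) n f (fun i => std (g i)) ∧
    (∀ i, lam ≤ g i) ∧ Nat.card {i : Fin n // g i = lam} = 1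

variable {Λ : Type} [Fintype Λ] [PartialOrder Λ]

/-- `M` has a filtration with costandard sections, i.e. `M ∈ F(∇)`. -/
def InCostdFilt (Q : QHData S Λ) (M : ModuleCat.{0} S) : Prop :=
  ∃ (n : ℕ) (f : Fin (n + 1) → Submodule S ↥M) (g : Fin n → Λ),
    HasFiltrationWithSections S M n f (fun i => Q.costd (g i))

/-- `M` has a filtration with standard sections, i.e. `M ∈ F(Δ)`. -/
def InStdFilt (Q : QHData S Λ) (M : ModuleCat.{0} S) : Prop :=
  ∃ (n : ℕ) (f : Fin (n + 1) → Submodule S ↥M) (g : Fin n → Λ),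
    HasFiltrationWithSections S M n f (fun i => Q.std (g i))

/-- `0 → N 0 → N 1 → ⋯ → N (n+1) → 0` is exact. -/
def IsExactSeq (n : ℕ) (N : Fin (n + 2) → ModuleCat.{0} S)
    (f : ∀ i : Fin (n + 1), ↥(N i.castSucc) →ₗ[S] ↥(N i.succ)) : Prop :=
  Function.Injective (f 0) ∧ Function.Surjective (f (Fin.last n)) ∧
    ∀ i : Fin n, LinearMap.range (f i.castSucc) = LinearMap.ker (f i.succ)

/-- `M` has a ∇-resolution (co-resolution by modules in `F(∇)`) of length `d`:
`0 → M → M₀ → ⋯ → M_d → 0` with each `Mᵢ ∈ F(∇)`. -/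
def GfdLE (Q : QHData S Λ) (M : ModuleCat.{0} S) (d : ℕ) : Prop :=
  ∃ (N : Fin (d + 2) → ModuleCat.{0} S)
    (f : ∀ i : Fin (d + 1), ↥(N i.castSucc) →ₗ[S] ↥(N i.succ)),
    IsExactSeq S d N f ∧ N 0 = M ∧ ∀ i : Fin (d + 1), InCostdFilt S Q (N i.succ)

/-- The ∇-filtration dimension (good filtration dimension) of a module. -/
noncomputable def gfd (Q : QHData S Λ) (M : ModuleCat.{0} S) : ℕ :=
  sInf {d | GfdLE S Q M d}

/-- `M` has a resolution `0 → M_d → ⋯ → M₀ → M → 0` with each `Mᵢ ∈ F(Δ)`. -/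
def WfdLE (Q : QHData S Λ) (M : ModuleCat.{0} S) (d : ℕ) : Prop :=
  ∃ (N : Fin (d + 2) → ModuleCat.{0} S)
    (f : ∀ i : Fin (d + 1), ↥(N i.castSucc) →ₗ[S] ↥(N i.succ)),
    IsExactSeq S d N f ∧ N (Fin.last (d + 1)) = M ∧
    ∀ i : Fin (d + 1), InStdFilt S Q (N i.castSucc)

/-- The Δ-filtration dimension of a module. -/
noncomputable def wfd (Q : QHData S Λ) (M : ModuleCat.{0} S) : ℕ :=
  sInf {d | WfdLE S Q M d}

/-- `M` has a projective resolution of length `d`. -/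
def ProjdimLE (M : ModuleCat.{0} S) (d : ℕ) : Prop :=
  ∃ (N : Fin (d + 2) → ModuleCat.{0} S)
    (f : ∀ i : Fin (d + 1), ↥(N i.castSucc) →ₗ[S] ↥(N i.succ)),
    IsExactSeq S d N f ∧ N (Fin.last (d + 1)) = M ∧
    ∀ i : Fin (d + 1), Module.Projective S ↥(N i.castSucc)

/-- The projective dimension of a module. -/
noncomputable def projdim (M : ModuleCat.{0} S) : ℕ :=
  sInf {d | ProjdimLE S M d}

/-- `M` has an injective resolution of length `d`. -/
def InjdimLE (M : ModuleCat.{0} S) (d : ℕ) : Prop :=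
  ∃ (N : Fin (d + 2) → ModuleCat.{0} S)
    (f : ∀ i : Fin (d + 1), ↥(N i.castSucc) →ₗ[S] ↥(N i.succ)),
    IsExactSeq S d N f ∧ N 0 = M ∧
    ∀ i : Fin (d + 1), Module.Injective S ↥(N i.succ)

/-- The injective dimension of a module. -/
noncomputable def injdim (M : ModuleCat.{0} S) : ℕ :=
  sInf {d | InjdimLE S M d}

/-- `gfd(S)`: the supremum of the ∇-filtration dimensions of all
finite-dimensional `S`-modules. -/
noncomputable def gfdAlg (Q : QHData S Λ) : ℕ :=
  sSup {d | ∃ M : ModuleCat.{0} S, Module.Finite S ↥M ∧ gfd S Q M = d}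

/-- `wfd(S)`: the supremum of the Δ-filtration dimensions of all
finite-dimensional `S`-modules. -/
noncomputable def wfdAlg (Q : QHData S Λ) : ℕ :=
  sSup {d | ∃ M : ModuleCat.{0} S, Module.Finite S ↥M ∧ wfd S Q M = d}

/-- The global dimension of `S`: the supremum of the projective dimensions of all
finite-dimensional `S`-modules. -/
noncomputable def globdim : ℕ :=
  sSup {d | ∃ M : ModuleCat.{0} S, Module.Finite S ↥M ∧ projdim S M = d}

/-- `Ext^n_S(A, B) ≠ 0`. -/
noncomputable def extNe (A B : ModuleCat.{0} S) (n : ℕ) : Prop :=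
  Nontrivial ↥(((Ext ℤ (ModuleCat.{0} S) n).obj (Opposite.op A)).obj B)

/-- A simple-preserving duality on `S`: a contravariant, exact, fully faithful,
additive self-functor `D` on the category of finite-dimensional `S`-modules with
`D (D M) ≅ M` and `D (L lam) ≅ L lam` for all `lam`. -/
structure Duality (Q : QHData S Λ) where
  D : ModuleCat.{0} S → ModuleCat.{0} S
  Dmap : ∀ {A B : ModuleCat.{0} S}, (↥A →ₗ[S] ↥B) → (↥(D B) →ₗ[S] ↥(D A))
  finD : ∀ M : ModuleCat.{0} S, Module.Finite S ↥M → Module.Finite S ↥(D M)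
  Did : ∀ A : ModuleCat.{0} S, Module.Finite S ↥A →
    Dmap (LinearMap.id : ↥A →ₗ[S] ↥A) = LinearMap.id
  Dcomp : ∀ {A B C : ModuleCat.{0} S}, Module.Finite S ↥A → Module.Finite S ↥B →
    Module.Finite S ↥C → ∀ (f : ↥A →ₗ[S] ↥B) (g : ↥B →ₗ[S] ↥C),
      Dmap (g ∘ₗ f) = Dmap f ∘ₗ Dmap g
  Dadd : ∀ {A B : ModuleCat.{0} S}, Module.Finite S ↥A → Module.Finite S ↥B →
    ∀ (f g : ↥A →ₗ[S] ↥B), Dmap (f + g) = Dmap f + Dmap g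
  Dfull : ∀ {A B : ModuleCat.{0} S}, Module.Finite S ↥A → Module.Finite S ↥B →
    Function.Bijective (fun f : ↥A →ₗ[S] ↥B => Dmap f)
  Dexact : ∀ {A B C : ModuleCat.{0} S}, Module.Finite S ↥A → Module.Finite S ↥B →
    Module.Finite S ↥C → ∀ (f : ↥A →ₗ[S] ↥B) (g : ↥B →ₗ[S] ↥C),
      Function.Injective f → Function.Surjective g →
      LinearMap.range f = LinearMap.ker g →
      Function.Injective (Dmap g) ∧ Function.Surjective (Dmap f) ∧
        LinearMap.range (Dmap g) = LinearMap.ker (Dmap f)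
  Dinvol : ∀ M : ModuleCat.{0} S, Module.Finite S ↥M → Nonempty (↥(D (D M)) ≃ₗ[S] ↥M)
  DL : ∀ lam, Nonempty (↥(D (Q.L lam)) ≃ₗ[S] ↥(Q.L lam))

/-- Strong property A: `mu < lam` implies `gfd (L mu) < gfd (L lam)`. -/
def StrongPropA (Q : QHData S Λ) : Prop :=
  ∀ mu lam : Λ, mu < lam → gfd S Q (Q.L mu) < gfd S Q (Q.L lam)

/-- Property A: `mu < lam` implies `gfd (L mu) ≤ gfd (L lam)`. -/
def PropA (Q : QHData S Λ) : Prop :=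
  ∀ mu lam : Λ, mu < lam → gfd S Q (Q.L mu) ≤ gfd S Q (Q.L lam)

/-- Property B: `mu < lam` implies `wfd (∇ mu) ≤ wfd (∇ lam)`. -/
def PropB (Q : QHData S Λ) : Prop :=
  ∀ mu lam : Λ, mu < lam → wfd S Q (Q.costd mu) ≤ wfd S Q (Q.costd lam)

/-- Property C: `wfd (∇ lam) = gfd S - inj (∇ lam)` for all `lam`. -/
def PropC (Q : QHData S Λ) : Prop :=
  ∀ lam : Λ, wfd S Q (Q.costd lam) = gfdAlg S Q - injdim S (Q.costd lam)

/-- Property D: `wfd (∇ lam) = wfd (L lam)` for all `lam`. -/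
def PropD (Q : QHData S Λ) : Prop :=
  ∀ lam : Λ, wfd S Q (Q.costd lam) = wfd S Q (Q.L lam)

/-- Property E: `mu < lam` implies `inj (∇ mu) ≥ inj (∇ lam)`. -/
def PropE (Q : QHData S Λ) : Prop :=
  ∀ mu lam : Λ, mu < lam → injdim S (Q.costd lam) ≤ injdim S (Q.costd mu)

/-- The partial order is minimal for the quasi-hereditary structure: whenever
`mu < lam` are adjacent, `L mu` is a composition factor of `Δ lam` or of `∇ lam`. -/
def MinimalOrder (Q : QHData S Λ) : Prop :=
  ∀ mu lam : Λ, mu < lam → (¬ ∃ nu, mu < nu ∧ nu < lam) →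
    IsCompFactor S (Q.L mu) (Q.std lam) ∨ IsCompFactor S (Q.L mu) (Q.costd lam)

/-- `S` is connected (indecomposable as an algebra, i.e. one block): the only
central idempotents are `0` and `1`. -/
def ConnectedRing : Prop :=
  ∀ c : S, c * c = c → (∀ s : S, c * s = s * c) → c = 0 ∨ c = 1

/-- A tilting module: a module in `F(Δ) ∩ F(∇)`. -/
def IsTilting (Q : QHData S Λ) (T : ModuleCat.{0} S) : Prop :=
  InStdFilt S Q T ∧ InCostdFilt S Q T

/-- The indecomposable tilting module `T(lam)`: an indecomposable tilting module in
which `L lam` occurs exactly once and all other composition factors `L mu` have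
`mu < lam`. -/
def IsIndecTilting (Q : QHData S Λ) (lam : Λ) (T : ModuleCat.{0} S) : Prop :=
  IsTilting S Q T ∧ Nontrivial ↥T ∧
    (∀ A B : Submodule S ↥T, IsCompl A B → A = ⊥ ∨ B = ⊥) ∧
    CompFactorMult S (Q.L lam) T 1 ∧
    ∀ mu, IsCompFactor S (Q.L mu) T → mu = lam ∨ mu < lam

/-- A full tilting module: a (finite-dimensional) tilting module having every
indecomposable tilting module as a direct summand. -/
def IsFullTilting (Q : QHData S Λ) (T : ModuleCat.{0} S) : Prop :=
  IsTilting S Q T ∧ Module.Finite S ↥T ∧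
    ∀ (lam : Λ) (Tl : ModuleCat.{0} S), IsIndecTilting S Q lam Tl →
      ∃ Cc : ModuleCat.{0} S, Nonempty (↥T ≃ₗ[S] (↥Tl × ↥Cc))

/-- The Ringel dual ring `S' = End_S(T)^op`. -/
abbrev RingelDualRing (T : ModuleCat.{0} S) : Type := (Module.End S ↥T)ᵐᵒᵖ

/-- `Hom_S(T, X)` is a module over `S' = End_S(T)^op` via `f • φ = φ ∘ f`. -/
instance homTModule (T X : ModuleCat.{0} S) :
    Module (RingelDualRing S T) (↥T →ₗ[S] ↥X) where
  smul a φ := φ ∘ₗ a.unop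
  one_smul φ := rfl
  mul_smul a b φ := rfl
  smul_zero a := rfl
  smul_add a φ ψ := rfl
  add_smul a b φ := by
    ext x
    show φ ((a.unop + b.unop) x) = φ (a.unop x) + φ (b.unop x)
    rw [LinearMap.add_apply, map_add]
  zero_smul φ := by
    ext x
    show φ ((0 : Module.End S ↥T) x) = 0
    rw [LinearMap.zero_apply, map_zero]

/-- The `S'`-module `Hom_S(T, X)`, i.e. the image of `X` under the functor
`F = Hom_S(T, -)`. -/
noncomputable def homTMod (T X : ModuleCat.{0} S) :
    ModuleCat.{0} (RingelDualRing S T) :=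
  ModuleCat.of (RingelDualRing S T) (↥T →ₗ[S] ↥X)

/-- `Q'` is a Ringel dual quasi-hereditary structure for `(Q, T)`:
`T` is a full tilting module, `Q'` is a quasi-hereditary structure on
`S' = End_S(T)^op` for the opposite poset, and its standard modules are
`Δ'(lam) = Hom_S(T, ∇(lam))`. -/
def IsRingelDualData (Q : QHData S Λ) (T : ModuleCat.{0} S)
    (Q' : QHData (RingelDualRing S T) Λᵒᵈ) : Prop :=
  IsFullTilting S Q T ∧
    ∀ lam : Λ, Nonempty
      (↥(Q'.std (OrderDual.toDual lam)) ≃ₗ[RingelDualRing S T]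
        (↥T →ₗ[S] ↥(Q.costd lam)))

/-- `0 → T_d → ⋯ → T_0 → M → 0` exact with all `T_i` tilting modules. -/
def TiltResLE (Q : QHData S Λ) (M : ModuleCat.{0} S) (d : ℕ) : Prop :=
  ∃ (N : Fin (d + 2) → ModuleCat.{0} S)
    (f : ∀ i : Fin (d + 1), ↥(N i.castSucc) →ₗ[S] ↥(N i.succ)),
    IsExactSeq S d N f ∧ N (Fin.last (d + 1)) = M ∧
    ∀ i : Fin (d + 1), IsTilting S Q (N i.castSucc)

/-- An idempotent `e` is primitive if it is nonzero and is not the sum of two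
nonzero orthogonal idempotents. -/
def IsPrimitiveIdempotent (e : S) : Prop :=
  e * e = e ∧ e ≠ 0 ∧ ∀ a b : S, a * a = a → b * b = b → a * b = 0 → b * a = 0 →
    e = a + b → a = 0 ∨ b = 0

/-- The additive subgroup `e•M = {m | e • m = m}` of `M` (for `e` idempotent). -/
def cornerSet (eG : S) (M : ModuleCat.{0} S) : AddSubgroup ↥M where
  carrier := {m | eG • m = m}
  add_mem' := by
    intro a b ha hb
    simp only [Set.mem_setOf_eq] at *
    rw [smul_add, ha, hb]
  zero_mem' := by
    simp only [Set.mem_setOf_eq]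
    rw [smul_zero]
  neg_mem' := by
    intro a ha
    simp only [Set.mem_setOf_eq] at *
    rw [smul_neg, ha]

/-- The `R`-module structure on `e•M`, where `ι : R → S` identifies `R` with the
corner ring `eSe` (as a non-unital ring, with `ι 1 = e`). -/
def cornerModuleStructure (R : Type) [Ring R] (ι : R →ₙ+* S) (eG : S)
    (hone : ι 1 = eG) (hrange : ∀ r : R, eG * ι r * eG = ι r)
    (M : ModuleCat.{0} S) : Module R ↥(cornerSet S eG M) where
  smul r m := ⟨ι r • (m : ↥M), by
    have hm : eG • (m : ↥M) = (m : ↥M) := m.2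
    show eG • (ι r • (m : ↥M)) = ι r • (m : ↥M)
    have h : eG • (ι r • (m : ↥M)) = (eG * ι r * eG) • (m : ↥M) := by
      rw [mul_assoc, mul_smul, mul_smul, hm]
    rw [h, hrange]⟩
  one_smul m := by
    apply Subtype.ext
    show ι 1 • (m : ↥M) = (m : ↥M)
    rw [hone]
    exact m.2
  mul_smul r s m := by
    apply Subtype.ext
    show ι (r * s) • (m : ↥M) = ι r • (ι s • (m : ↥M))
    rw [map_mul, mul_smul]
  smul_zero r := by
    apply Subtype.ext
    show ι r • (0 : ↥M) = 0
    rw [smul_zero]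
  smul_add r m n := by
    apply Subtype.ext
    show ι r • ((m : ↥M) + (n : ↥M)) = ι r • (m : ↥M) + ι r • (n : ↥M)
    rw [smul_add]
  add_smul r s m := by
    apply Subtype.ext
    show ι (r + s) • (m : ↥M) = ι r • (m : ↥M) + ι s • (m : ↥M)
    rw [map_add, add_smul]
  zero_smul m := by
    apply Subtype.ext
    show ι 0 • (m : ↥M) = 0
    rw [map_zero, zero_smul]

/-- The `R`-module `e•M`, where `R ≅ eSe` via `ι`. -/
noncomputable def cornerMod (R : Type) [Ring R] (ι : R →ₙ+* S) (eG : S)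
    (hone : ι 1 = eG) (hrange : ∀ r : R, eG * ι r * eG = ι r)
    (M : ModuleCat.{0} S) : ModuleCat.{0} R :=
  @ModuleCat.of R _ ↥(cornerSet S eG M) _
    (cornerModuleStructure S R ι eG hone hrange M)

end QHPaper

/-!
Filtration dimensions are read off from `Ext`: `gfd(S) ≤ d` iff `Ext^i(Δ(λ), S) = 0` for all
`i > d` and all `λ`, or equivalently iff `Ext^i(Δ(λ), Δ(μ)) = 0` for all `i > d`, and dually for
`wfd`. A simple-preserving duality exchanges `Δ(λ)` and `∇(λ)`, so `gfd(S) = wfd(S)`.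

The functor `Hom(T, -)` is fully faithful and exact on `F(∇)`, preserves `Ext` there, and sends
`∇(λ)` to the standard module of `S'` with the same index; comparing `Ext^i(∇(λ), ∇(μ))` with
`Ext^i` between standard modules of `S'` gives `wfd(S) = gfd(S')`.

For `wfd(S') = gfd(S)` one uses the functor `E = D Hom(-, T)`, which is exact on `F(Δ)` and takes
`T` to the injective module `D(S')`. Resolving `X` in `F(Δ)` by tilting modules shows that the
injective dimension of `E(X)` is at most `d` iff `Ext^i(Δ(λ), X) = 0` for all `i > d` and all `λ`.
On the other hand `E(S)` is the full tilting module of `S'`, in the sense that an `S'`-module `N`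
has a standard filtration iff `Ext^i(N, E(S)) = 0` for all `i > 0`; applied to `d`-th syzygies,
this says that the injective dimension of `E(S)` is at most `d` iff `wfd(S') ≤ d`.
-/

namespace QHPaper

universe u

section ShortExact

/-- `0 → A → B → C → 0` is a short exact sequence of modules. This is the unbundled form of
`ShortComplex.ShortExact`, so that the maps can be handled elementwise. -/
structure IsShortExact {R A B C : Type*} [Ring R] [AddCommGroup A] [Module R A]
    [AddCommGroup B] [Module R B] [AddCommGroup C] [Module R C]
    (f : A →ₗ[R] B) (g : B →ₗ[R] C) : Prop where
  injective : Function.Injective f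
  surjective : Function.Surjective g
  exact : Function.Exact f g

namespace IsShortExact

variable {R A B C X Y : Type*} [Ring R] [AddCommGroup A] [Module R A] [AddCommGroup B] [Module R B]
  [AddCommGroup C] [Module R C] [AddCommGroup X] [Module R X] [AddCommGroup Y] [Module R Y]
  {f : A →ₗ[R] B} {g : B →ₗ[R] C}

lemma subtype_mkQ (N : Submodule R B) : IsShortExact N.subtype N.mkQ :=
  ⟨N.injective_subtype, N.mkQ_surjective, LinearMap.exact_subtype_mkQ N⟩

lemma of_surjective (hg : Function.Surjective g) : IsShortExact (LinearMap.ker g).subtype g :=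
  ⟨Submodule.injective_subtype _, hg, LinearMap.exact_subtype_ker_map g⟩

lemma of_injective (hf : Function.Injective f) : IsShortExact f (LinearMap.range f).mkQ :=
  ⟨hf, Submodule.mkQ_surjective _, LinearMap.exact_map_mkQ_range f⟩

lemma of_linearEquiv [Subsingleton C] (e : A ≃ₗ[R] B) :
    IsShortExact e.toLinearMap (0 : B →ₗ[R] C) :=
  ⟨e.injective, fun _ => ⟨0, Subsingleton.elim _ _⟩,
    fun b => ⟨fun _ => e.surjective b, fun _ => Subsingleton.elim _ _⟩⟩

lemma congr {A' C' : Type*} [AddCommGroup A'] [Module R A'] [AddCommGroup C'] [Module R C']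
    (h : IsShortExact f g) (e : A' ≃ₗ[R] A) (e' : C ≃ₗ[R] C') :
    IsShortExact (f ∘ₗ e.toLinearMap) (e'.toLinearMap ∘ₗ g) where
  injective := h.injective.comp e.injective
  surjective := e'.surjective.comp h.surjective
  exact b := (e'.map_eq_zero_iff.trans (h.exact b)).trans e.surjective.exists

lemma exists_comp_right_eq (h : IsShortExact f g) (φ : B →ₗ[R] X) (hφ : φ ∘ₗ f = 0) :
    ∃ ψ : C →ₗ[R] X, ψ ∘ₗ g = φ := by
  refine ⟨(LinearMap.range f).liftQ φ (LinearMap.range_le_ker_iff.2 hφ) ∘ₗ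
    (h.exact.linearEquivOfSurjective h.surjective).symm.toLinearMap, LinearMap.ext fun b => ?_⟩
  have hb : (h.exact.linearEquivOfSurjective h.surjective).symm (g b) =
      Submodule.Quotient.mk b := by
    rw [LinearEquiv.symm_apply_eq]; rfl
  simp [hb]

lemma exists_comp_left_eq (h : IsShortExact f g) (φ : X →ₗ[R] B) (hφ : g ∘ₗ φ = 0) :
    ∃ ψ : X →ₗ[R] A, f ∘ₗ ψ = φ := by
  have hr : ∀ x, φ x ∈ LinearMap.range f := fun x => (h.exact _).1 (LinearMap.congr_fun hφ x)
  exact ⟨(LinearEquiv.ofInjective f h.injective).symm.toLinearMap ∘ₗ φ.codRestrict _ hr,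
    LinearMap.ext fun x => congrArg Subtype.val
      ((LinearEquiv.ofInjective f h.injective).apply_symm_apply (φ.codRestrict _ hr x))⟩

lemma cons_pi (Y : Type*) [AddCommGroup Y] [Module R Y] (m : ℕ) :
    IsShortExact (LinearMap.pi (Fin.cases 0 LinearMap.proj) : (Fin m → Y) →ₗ[R] (Fin (m + 1) → Y))
      (LinearMap.proj 0) where
  injective a b hab := funext fun i => by simpa using congrFun hab i.succ
  surjective y := ⟨fun _ => y, rfl⟩
  exact y := by
    refine ⟨fun hy => ⟨fun i => y i.succ, funext fun i => ?_⟩, ?_⟩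
    · cases i using Fin.cases with
      | zero => simpa using hy.symm
      | succ i => simp
    · rintro ⟨x, rfl⟩
      simp

lemma finite (h : IsShortExact f g) [Module.Finite R A] [Module.Finite R C] :
    Module.Finite R B :=
  have : Module.Finite R (LinearMap.ker g) := by
    rw [h.exact.linearMap_ker_eq]; infer_instance
  have : Module.Finite R (B ⧸ LinearMap.ker g) :=
    .equiv (g.quotKerEquivOfSurjective h.surjective).symm
  .of_submodule_quotient (LinearMap.ker g)

lemma finite_right (h : IsShortExact f g) [Module.Finite R B] : Module.Finite R C :=
  .of_surjective g h.surjective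

lemma finite_left [IsNoetherianRing R] (h : IsShortExact f g) [Module.Finite R B] :
    Module.Finite R A :=
  .of_injective f h.injective

lemma nonempty_equiv_right {A' C' : Type*} [AddCommGroup A'] [Module R A'] [AddCommGroup C']
    [Module R C'] {f' : A' →ₗ[R] B} {g' : B →ₗ[R] C'} (h : IsShortExact f g)
    (h' : IsShortExact f' g') (hr : LinearMap.range f = LinearMap.range f') :
    Nonempty (C ≃ₗ[R] C') :=
  have hker : LinearMap.ker g = LinearMap.ker g' := by
    rw [h.exact.linearMap_ker_eq, h'.exact.linearMap_ker_eq, hr]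
  ⟨(g.quotKerEquivOfSurjective h.surjective).symm ≪≫ₗ Submodule.quotEquivOfEq _ _ hker ≪≫ₗ
    g'.quotKerEquivOfSurjective h'.surjective⟩

lemma length_right_lt [IsArtinianRing R] (h : IsShortExact f g) [Nontrivial A]
    [Module.Finite R B] : Module.length R C < Module.length R B := by
  have := h.finite_right
  rw [Module.length_eq_add_of_exact f g h.injective h.surjective h.exact, add_comm]
  exact (add_zero _).symm.trans_lt
    ((ENat.add_lt_add_iff_left Module.length_ne_top).2 Module.length_pos)

lemma length_left_lt [IsArtinianRing R] (h : IsShortExact f g) [Nontrivial C]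
    [Module.Finite R B] : Module.length R A < Module.length R B := by
  have := h.finite_left
  rw [Module.length_eq_add_of_exact f g h.injective h.surjective h.exact]
  exact (add_zero _).symm.trans_lt
    ((ENat.add_lt_add_iff_left Module.length_ne_top).2 Module.length_pos)

end IsShortExact

/-- `N` is the pushout of `B ← A → X`, stated elementwise: the square commutes, `N` is generated
by the images of `X` and `B`, and these only satisfy the relations coming from `A`. -/
structure IsPushoutSquare {R A B X N : Type*} [Ring R] [AddCommGroup A] [Module R A]
    [AddCommGroup B] [Module R B] [AddCommGroup X] [Module R X] [AddCommGroup N] [Module R N]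
    (f : A →ₗ[R] B) (φ : A →ₗ[R] X) (Φ : B →ₗ[R] N) (ι : X →ₗ[R] N) : Prop where
  comm : Φ ∘ₗ f = ι ∘ₗ φ
  exists_eq_add : ∀ n, ∃ x b, n = ι x + Φ b
  exists_of_eq : ∀ {x b}, ι x = Φ b → ∃ a, φ a = x ∧ f a = b

namespace IsPushoutSquare

variable {R A B C X N : Type*} [Ring R] [AddCommGroup A] [Module R A] [AddCommGroup B] [Module R B]
  [AddCommGroup C] [Module R C] [AddCommGroup X] [Module R X] [AddCommGroup N] [Module R N]
  {f : A →ₗ[R] B} {φ : A →ₗ[R] X} {Φ : B →ₗ[R] N} {ι : X →ₗ[R] N}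

lemma symm (h : IsPushoutSquare f φ Φ ι) : IsPushoutSquare φ f ι Φ where
  comm := h.comm.symm
  exists_eq_add n := by
    obtain ⟨x, b, hn⟩ := h.exists_eq_add n
    exact ⟨b, x, by rw [hn, add_comm]⟩
  exists_of_eq hbx := (h.exists_of_eq hbx.symm).imp fun _ ha => ha.symm

lemma comm_apply (h : IsPushoutSquare f φ Φ ι) (a : A) : Φ (f a) = ι (φ a) :=
  LinearMap.congr_fun h.comm a

lemma exists_lift {Z : Type*} [AddCommGroup Z] [Module R Z] (h : IsPushoutSquare f φ Φ ι)
    (α : X →ₗ[R] Z) (β : B →ₗ[R] Z) (hαβ : β ∘ₗ f = α ∘ₗ φ) :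
    ∃ q : N →ₗ[R] Z, q ∘ₗ ι = α ∧ q ∘ₗ Φ = β := by
  have hse := IsShortExact.of_surjective (g := ι.coprod Φ) fun n => by
    obtain ⟨x, b, rfl⟩ := h.exists_eq_add n
    exact ⟨(x, b), rfl⟩
  obtain ⟨q, hq⟩ := hse.exists_comp_right_eq (α.coprod β) (LinearMap.ext fun z => by
    obtain ⟨⟨x, b⟩, hz⟩ := z
    have hxb : ι x = Φ (-b) := by
      rw [map_neg]; exact eq_neg_of_add_eq_zero_left hz
    obtain ⟨a, rfl, hb⟩ := h.exists_of_eq hxb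
    have := LinearMap.congr_fun hαβ a
    simp only [LinearMap.comp_apply, hb, map_neg] at this
    simp [← this])
  exact ⟨q, by rw [← LinearMap.coprod_inl α β, ← hq]; ext; simp,
    by rw [← LinearMap.coprod_inr α β, ← hq]; ext; simp⟩

lemma exists_isShortExact {g : B →ₗ[R] C} (h : IsPushoutSquare f φ Φ ι) (hfg : IsShortExact f g) :
    ∃ q : N →ₗ[R] C, IsShortExact ι q ∧ q ∘ₗ Φ = g := by
  obtain ⟨q, hqι, hqΦ⟩ := h.exists_lift 0 g (by
    rw [LinearMap.zero_comp]; exact hfg.exact.linearMap_comp_eq_zero)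
  refine ⟨q, ⟨?_, ?_, fun n => ⟨fun hn => ?_, ?_⟩⟩, hqΦ⟩
  · rw [← LinearMap.ker_eq_bot, LinearMap.ker_eq_bot']
    intro x hx
    obtain ⟨a, rfl, ha⟩ := h.exists_of_eq (hx.trans (map_zero Φ).symm)
    rw [hfg.injective (ha.trans (map_zero f).symm), map_zero]
  · exact Function.Surjective.of_comp (g := Φ) (by
      rw [← LinearMap.coe_comp, hqΦ]; exact hfg.surjective)
  · obtain ⟨x, b, rfl⟩ := h.exists_eq_add n
    rw [map_add, ← LinearMap.comp_apply, hqι, ← LinearMap.comp_apply, hqΦ, LinearMap.zero_apply,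
      zero_add] at hn
    obtain ⟨a, rfl⟩ := (hfg.exact b).1 hn
    exact ⟨x + φ a, by rw [map_add, h.comm_apply]⟩
  · rintro ⟨x, rfl⟩
    exact LinearMap.congr_fun hqι x

lemma of_isShortExact {g : B →ₗ[R] C} {q : N →ₗ[R] C} (hfg : IsShortExact f g)
    (hιq : IsShortExact ι q) (hf : Φ ∘ₗ f = ι ∘ₗ φ) (hg : q ∘ₗ Φ = g) :
    IsPushoutSquare f φ Φ ι where
  comm := hf
  exists_eq_add n := by
    obtain ⟨b, hb⟩ := hfg.surjective (q n)
    obtain ⟨x, hx⟩ := (hιq.exact (n - Φ b)).1 (by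
      rw [map_sub, ← hb, ← hg, LinearMap.comp_apply, sub_self])
    exact ⟨x, b, by rw [hx, sub_add_cancel]⟩
  exists_of_eq {x b} hxb := by
    obtain ⟨a, rfl⟩ := (hfg.exact b).1 (by
      rw [← hg, LinearMap.comp_apply, ← hxb, hιq.exact.apply_apply_eq_zero])
    exact ⟨a, hιq.injective ((LinearMap.congr_fun hf a).symm.trans hxb.symm), rfl⟩

lemma hom_ext {Z : Type*} [AddCommGroup Z] [Module R Z] (h : IsPushoutSquare f φ Φ ι)
    {u v : N →ₗ[R] Z} (hι : u ∘ₗ ι = v ∘ₗ ι) (hΦ : u ∘ₗ Φ = v ∘ₗ Φ) : u = v := by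
  ext n
  obtain ⟨x, b, rfl⟩ := h.exists_eq_add n
  rw [map_add, map_add]
  exact congrArg₂ (· + ·) (LinearMap.congr_fun hι x) (LinearMap.congr_fun hΦ b)

lemma nonempty_equiv {N' : Type*} [AddCommGroup N'] [Module R N'] {Φ' : B →ₗ[R] N'}
    {ι' : X →ₗ[R] N'} (h : IsPushoutSquare f φ Φ ι) (h' : IsPushoutSquare f φ Φ' ι') :
    Nonempty (N ≃ₗ[R] N') := by
  obtain ⟨u, huι, huΦ⟩ := h.exists_lift ι' Φ' h'.comm
  obtain ⟨v, hvι, hvΦ⟩ := h'.exists_lift ι Φ h.comm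
  refine ⟨.ofLinearMap u v (h'.hom_ext ?_ ?_) (h.hom_ext ?_ ?_)⟩ <;>
    simp only [LinearMap.comp_assoc, LinearMap.id_comp, huι, huΦ, hvι, hvΦ]

end IsPushoutSquare

lemma exists_isPushoutSquare {R A B X : Type u} [Ring R] [AddCommGroup A] [Module R A]
    [AddCommGroup B] [Module R B] [AddCommGroup X] [Module R X]
    (f : A →ₗ[R] B) (φ : A →ₗ[R] X) :
    ∃ (N : ModuleCat.{u} R) (Φ : B →ₗ[R] N) (ι : X →ₗ[R] N), IsPushoutSquare f φ Φ ι := by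
  let K : Submodule R (X × B) := LinearMap.range (φ.prod (-f))
  refine ⟨ModuleCat.of R ((X × B) ⧸ K), K.mkQ ∘ₗ LinearMap.inr R X B,
    K.mkQ ∘ₗ LinearMap.inl R X B, ?_, fun n => ?_, fun {x b} hxb => ?_⟩
  · refine LinearMap.ext fun a => ((Submodule.Quotient.eq K).2 ⟨-a, ?_⟩)
    simp
  · obtain ⟨⟨x, b⟩, rfl⟩ := K.mkQ_surjective n
    exact ⟨x, b, by simp [← Submodule.Quotient.mk_add]⟩
  · obtain ⟨a, ha⟩ := (Submodule.Quotient.eq K).1 hxb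
    have hx : φ a = x := by simpa using congrArg Prod.fst ha
    have hb : f a = b := by simpa using congrArg Prod.snd ha
    exact ⟨a, hx, hb⟩

end ShortExact

section Ext

/-- `Ext^n(X, Y) = 0`. -/
def ExtVanishes (R : Type u) [Ring R] (n : ℕ) (X Y : Type u) [AddCommGroup X] [Module R X]
    [AddCommGroup Y] [Module R Y] : Prop :=
  Subsingleton (Abelian.Ext (ModuleCat.of R X) (ModuleCat.of R Y) n)

variable {R A B C X Y Z : Type u} [Ring R] [AddCommGroup A] [Module R A]
  [AddCommGroup B] [Module R B] [AddCommGroup C] [Module R C] [AddCommGroup X] [Module R X]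
  [AddCommGroup Y] [Module R Y] [AddCommGroup Z] [Module R Z]
  {f : A →ₗ[R] B} {g : B →ₗ[R] C} {n : ℕ}

/-- The short complex in `ModuleCat R` given by a short exact sequence. -/
abbrev IsShortExact.shortComplex (h : IsShortExact f g) : ShortComplex (ModuleCat.{u} R) :=
  ShortComplex.mk (ModuleCat.ofHom f) (ModuleCat.ofHom g)
    (ModuleCat.hom_ext h.exact.linearMap_comp_eq_zero)

lemma IsShortExact.shortExact (h : IsShortExact f g) : h.shortComplex.ShortExact :=
  ModuleCat.shortComplex_shortExact _ h.exact h.injective h.surjective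

namespace ExtVanishes

lemma covariant₁ (h : IsShortExact f g) (hC : ExtVanishes R n X C)
    (hB : ExtVanishes R (n + 1) X B) : ExtVanishes R (n + 1) X A := by
  refine subsingleton_of_forall_eq 0 fun x => ?_
  obtain ⟨y, rfl⟩ := Abelian.Ext.covariant_sequence_exact₁ _ h.shortExact x (hB.elim _ _) rfl
  rw [hC.elim y 0, Abelian.Ext.zero_comp]

lemma covariant₂ (h : IsShortExact f g) (hA : ExtVanishes R n X A) (hC : ExtVanishes R n X C) :
    ExtVanishes R n X B := by
  refine subsingleton_of_forall_eq 0 fun x => ?_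
  obtain ⟨y, rfl⟩ := Abelian.Ext.covariant_sequence_exact₂ _ h.shortExact x (hC.elim _ _)
  rw [hA.elim y 0, Abelian.Ext.zero_comp]

lemma covariant₃ (h : IsShortExact f g) (hA : ExtVanishes R (n + 1) X A)
    (hB : ExtVanishes R n X B) : ExtVanishes R n X C := by
  refine subsingleton_of_forall_eq 0 fun x => ?_
  obtain ⟨y, rfl⟩ := Abelian.Ext.covariant_sequence_exact₃ _ h.shortExact x rfl (hA.elim _ _)
  rw [hB.elim y 0, Abelian.Ext.zero_comp]

lemma contravariant₁ (h : IsShortExact f g) (hC : ExtVanishes R (n + 1) C Y)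
    (hB : ExtVanishes R n B Y) : ExtVanishes R n A Y := by
  refine subsingleton_of_forall_eq 0 fun x => ?_
  obtain ⟨y, rfl⟩ :=
    Abelian.Ext.contravariant_sequence_exact₁ h.shortExact _ x (add_comm 1 n) (hC.elim _ _)
  rw [hB.elim y 0, Abelian.Ext.comp_zero]

lemma contravariant₂ (h : IsShortExact f g) (hA : ExtVanishes R n A Y)
    (hC : ExtVanishes R n C Y) : ExtVanishes R n B Y := by
  refine subsingleton_of_forall_eq 0 fun x => ?_
  obtain ⟨y, rfl⟩ := Abelian.Ext.contravariant_sequence_exact₂ h.shortExact _ x (hA.elim _ _)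
  rw [hC.elim y 0, Abelian.Ext.comp_zero]

lemma contravariant₃ (h : IsShortExact f g) (hA : ExtVanishes R n A Y)
    (hB : ExtVanishes R (n + 1) B Y) : ExtVanishes R (n + 1) C Y := by
  refine subsingleton_of_forall_eq 0 fun x => ?_
  obtain ⟨y, rfl⟩ :=
    Abelian.Ext.contravariant_sequence_exact₃ h.shortExact _ x (hB.elim _ _) (add_comm 1 n)
  rw [hA.elim y 0, Abelian.Ext.comp_zero]

lemma exists_lift (h : IsShortExact f g) (hA : ExtVanishes R 1 X A) (φ : X →ₗ[R] C) :
    ∃ ψ : X →ₗ[R] B, g ∘ₗ ψ = φ := by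
  obtain ⟨y, hy⟩ := Abelian.Ext.covariant_sequence_exact₃ (ModuleCat.of R X) h.shortExact
    (Abelian.Ext.mk₀ (ModuleCat.ofHom φ)) rfl (hA.elim _ _)
  obtain ⟨y, rfl⟩ := (Abelian.Ext.mk₀_bijective _ _).2 y
  rw [Abelian.Ext.mk₀_comp_mk₀] at hy
  exact ⟨y.hom, congrArg ModuleCat.Hom.hom ((Abelian.Ext.mk₀_bijective _ _).1 hy)⟩

lemma exists_extension (h : IsShortExact f g) (hC : ExtVanishes R 1 C Y) (φ : A →ₗ[R] Y) :
    ∃ ψ : B →ₗ[R] Y, ψ ∘ₗ f = φ := by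
  obtain ⟨y, hy⟩ := Abelian.Ext.contravariant_sequence_exact₁ h.shortExact (ModuleCat.of R Y)
    (Abelian.Ext.mk₀ (ModuleCat.ofHom φ)) rfl (hC.elim _ _)
  obtain ⟨y, rfl⟩ := (Abelian.Ext.mk₀_bijective _ _).2 y
  rw [Abelian.Ext.mk₀_comp_mk₀] at hy
  exact ⟨y.hom, congrArg ModuleCat.Hom.hom ((Abelian.Ext.mk₀_bijective _ _).1 hy)⟩

lemma exists_section (h : IsShortExact f g) (hA : ExtVanishes R 1 C A) :
    ∃ s : C →ₗ[R] B, g ∘ₗ s = LinearMap.id :=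
  exists_lift h hA LinearMap.id

lemma of_exists_lift (h : IsShortExact f g) (hB : ExtVanishes R 1 X B)
    (hlift : ∀ φ : X →ₗ[R] C, ∃ ψ : X →ₗ[R] B, g ∘ₗ ψ = φ) : ExtVanishes R 1 X A := by
  refine subsingleton_of_forall_eq 0 fun x => ?_
  obtain ⟨y, rfl⟩ := Abelian.Ext.covariant_sequence_exact₁ _ h.shortExact x (hB.elim _ _) rfl
  obtain ⟨y, rfl⟩ := (Abelian.Ext.mk₀_bijective _ _).2 y
  obtain ⟨ψ, hψ⟩ := hlift y.hom
  have hy : y = ModuleCat.ofHom ψ ≫ h.shortComplex.g := ModuleCat.hom_ext hψ.symm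
  rw [hy, ← Abelian.Ext.mk₀_comp_mk₀, Abelian.Ext.comp_assoc_of_second_deg_zero,
    ShortComplex.ShortExact.comp_extClass, Abelian.Ext.comp_zero]

lemma of_exists_extension (h : IsShortExact f g) (hB : ExtVanishes R 1 B Y)
    (hext : ∀ φ : A →ₗ[R] Y, ∃ ψ : B →ₗ[R] Y, ψ ∘ₗ f = φ) : ExtVanishes R 1 C Y := by
  refine subsingleton_of_forall_eq 0 fun x => ?_
  obtain ⟨y, rfl⟩ :=
    Abelian.Ext.contravariant_sequence_exact₃ h.shortExact _ x (hB.elim _ _) (add_comm 1 0)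
  obtain ⟨y, rfl⟩ := (Abelian.Ext.mk₀_bijective _ _).2 y
  obtain ⟨ψ, hψ⟩ := hext y.hom
  have hy : y = h.shortComplex.f ≫ ModuleCat.ofHom ψ := ModuleCat.hom_ext hψ.symm
  rw [hy, ← Abelian.Ext.mk₀_comp_mk₀]
  exact h.shortExact.extClass_comp_assoc _

lemma of_projective [Module.Projective R X] (n : ℕ) : ExtVanishes R (n + 1) X Y :=
  Abelian.Ext.subsingleton_of_projective _ _ n

lemma of_injective (hY : Module.Injective R Y) (n : ℕ) : ExtVanishes R (n + 1) X Y :=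
  have : Injective (ModuleCat.of R Y) := (Module.injective_iff_injective_object R Y).1 hY
  Abelian.Ext.subsingleton_of_injective _ _ n

lemma of_subsingleton_right [Subsingleton Y] : ExtVanishes R n X Y := by
  have hY : Limits.IsZero (ModuleCat.of R Y) := ModuleCat.isZero_of_subsingleton _
  refine subsingleton_of_forall_eq 0 fun x => ?_
  rw [← x.comp_mk₀_id, hY.eq_of_src (𝟙 _) 0, Abelian.Ext.mk₀_zero, Abelian.Ext.comp_zero]

lemma of_subsingleton_left [Subsingleton X] : ExtVanishes R n X Y := by
  have hX : Limits.IsZero (ModuleCat.of R X) := ModuleCat.isZero_of_subsingleton _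
  refine subsingleton_of_forall_eq 0 fun x => ?_
  rw [← x.mk₀_id_comp, hX.eq_of_src (𝟙 _) 0, Abelian.Ext.mk₀_zero, Abelian.Ext.zero_comp]

lemma retract_right (i : Y →ₗ[R] Z) (r : Z →ₗ[R] Y) (hri : r ∘ₗ i = LinearMap.id)
    (h : ExtVanishes R n X Z) : ExtVanishes R n X Y := by
  refine subsingleton_of_forall_eq 0 fun x => ?_
  have hid : 𝟙 (ModuleCat.of R Y) = ModuleCat.ofHom i ≫ ModuleCat.ofHom r :=
    ModuleCat.hom_ext hri.symm
  rw [← x.comp_mk₀_id, hid, ← Abelian.Ext.mk₀_comp_mk₀,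
    ← Abelian.Ext.comp_assoc_of_third_deg_zero, h.elim (x.comp _ _) 0, Abelian.Ext.zero_comp]

lemma retract_left (i : X →ₗ[R] Z) (r : Z →ₗ[R] X) (hri : r ∘ₗ i = LinearMap.id)
    (h : ExtVanishes R n Z Y) : ExtVanishes R n X Y := by
  refine subsingleton_of_forall_eq 0 fun x => ?_
  have hid : 𝟙 (ModuleCat.of R X) = ModuleCat.ofHom i ≫ ModuleCat.ofHom r :=
    ModuleCat.hom_ext hri.symm
  rw [← x.mk₀_id_comp, hid, ← Abelian.Ext.mk₀_comp_mk₀_assoc,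
    h.elim (Abelian.Ext.comp _ x _) 0, Abelian.Ext.comp_zero]

lemma congr_right (e : Y ≃ₗ[R] Z) (h : ExtVanishes R n X Z) : ExtVanishes R n X Y :=
  h.retract_right e.toLinearMap e.symm.toLinearMap (LinearMap.ext e.symm_apply_apply)

lemma congr_left (e : X ≃ₗ[R] Z) (h : ExtVanishes R n Z Y) : ExtVanishes R n X Y :=
  h.retract_left e.toLinearMap e.symm.toLinearMap (LinearMap.ext e.symm_apply_apply)

lemma pi_right (h : ExtVanishes R n X Y) (m : ℕ) : ExtVanishes R n X (Fin m → Y) := by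
  induction m with
  | zero => exact of_subsingleton_right
  | succ m ih => exact covariant₂ (IsShortExact.cons_pi Y m) ih h

lemma pi_left (h : ExtVanishes R n Y X) (m : ℕ) : ExtVanishes R n (Fin m → Y) X := by
  induction m with
  | zero => exact of_subsingleton_left
  | succ m ih => exact contravariant₂ (IsShortExact.cons_pi Y m) ih h

end ExtVanishes

end Ext

section Filtration

variable {S : Type} [Ring S] {ι κ : Type} {D : ι → ModuleCat.{0} S} {D' : κ → ModuleCat.{0} S}

lemma IsShortExact.exists_ker_comp {R A B C X Y : Type*} [Ring R] [AddCommGroup A] [Module R A]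
    [AddCommGroup B] [Module R B] [AddCommGroup C] [Module R C] [AddCommGroup X] [Module R X]
    [AddCommGroup Y] [Module R Y] {f : A →ₗ[R] B} {g : B →ₗ[R] C} {φ : X →ₗ[R] C} {ψ : C →ₗ[R] Y}
    (h : IsShortExact f g) (h' : IsShortExact φ ψ) :
    ∃ (f' : A →ₗ[R] LinearMap.ker (ψ ∘ₗ g)) (g' : LinearMap.ker (ψ ∘ₗ g) →ₗ[R] X),
      IsShortExact f' g' := by
  obtain ⟨g', hg'⟩ := h'.exists_comp_left_eq (g ∘ₗ (LinearMap.ker (ψ ∘ₗ g)).subtype)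
    (LinearMap.ext fun x => x.2)
  have hφg : ∀ x, φ (g' x) = g x := LinearMap.congr_fun hg'
  refine ⟨f.codRestrict _ fun a => ?_, g', ⟨?_, fun x => ?_, fun x => ⟨fun hx => ?_, ?_⟩⟩⟩
  · simp [h.exact.apply_apply_eq_zero]
  · exact fun a b hab => h.injective (congrArg Subtype.val hab)
  · obtain ⟨b, hb⟩ := h.surjective (φ x)
    exact ⟨⟨b, by simp [hb, h'.exact.apply_apply_eq_zero]⟩, h'.injective (by rw [hφg, hb])⟩
  · obtain ⟨a, ha⟩ := (h.exact x).1 (by rw [← hφg, hx, map_zero])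
    exact ⟨a, Subtype.ext ha⟩
  · rintro ⟨a, rfl⟩
    exact h'.injective ((hφg _).trans ((h.exact.apply_apply_eq_zero a).trans (map_zero φ).symm))

/-- `M` has a finite filtration all of whose sections are isomorphic to some `D i`; the inductive
form of `HasFiltrationWithSections`, which drops the submodules and keeps the extensions. -/
inductive Filtered {ι : Type} (D : ι → ModuleCat.{0} S) : ModuleCat.{0} S → Prop
  | zero (M : ModuleCat.{0} S) (hM : Subsingleton M) : Filtered D M
  | extend {A B : ModuleCat.{0} S} (i : ι) (f : A →ₗ[S] B) (g : B →ₗ[S] D i)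
      (h : IsShortExact f g) (hA : Filtered D A) : Filtered D B

namespace Filtered

lemma congr {M N : ModuleCat.{0} S} (e : M ≃ₗ[S] N) (hM : Filtered D M) : Filtered D N := by
  cases hM with
  | zero _ hM => exact zero _ e.symm.injective.subsingleton
  | extend i f g h hA =>
    refine extend i (e.toLinearMap ∘ₗ f) (g ∘ₗ e.symm.toLinearMap)
      ⟨e.injective.comp h.injective, h.surjective.comp e.symm.surjective, fun n => ?_⟩ hA
    refine (h.exact (e.symm n)).trans (exists_congr fun a => ?_)
    simp [LinearEquiv.eq_symm_apply]

lemma of_isShortExact {A B C : ModuleCat.{0} S} {f : A →ₗ[S] B} {g : B →ₗ[S] C}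
    (h : IsShortExact f g) (hA : Filtered D A) (hC : Filtered D C) : Filtered D B := by
  induction hC generalizing B with
  | zero M hM =>
    exact hA.congr (LinearEquiv.ofBijective f
      ⟨h.injective, fun b => (h.exact b).1 (Subsingleton.elim _ _)⟩)
  | extend i φ ψ h' _ ih =>
    obtain ⟨f', g', hker⟩ := h.exists_ker_comp h'
    exact extend (A := ModuleCat.of S (LinearMap.ker (ψ ∘ₗ g))) i _ _
      (.of_surjective (h'.surjective.comp h.surjective)) (ih hker)

lemma of_section (i : ι) : Filtered D (D i) :=
  extend (A := ModuleCat.of S PUnit) i 0 LinearMap.id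
    ⟨fun _ _ _ => rfl, Function.surjective_id, fun _ =>
      ⟨fun hx => ⟨0, hx.symm⟩, fun ⟨_, hx⟩ => hx.symm⟩⟩
    (zero _ (inferInstanceAs (Subsingleton PUnit)))

lemma mono {M : ModuleCat.{0} S} (hM : Filtered D M) (hD : ∀ i, Filtered D' (D i)) :
    Filtered D' M := by
  induction hM with
  | zero M hM => exact zero M hM
  | extend i f g h _ ih => exact of_isShortExact h ih (hD i)

lemma finite {M : ModuleCat.{0} S} (hM : Filtered D M) (hD : ∀ i, Module.Finite S (D i)) :
    Module.Finite S M := by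
  induction hM with
  | zero M hM => infer_instance
  | extend i f g h _ ih => have := hD i; exact h.finite

lemma extVanishes_left {X : Type} [AddCommGroup X] [Module S X] {M : ModuleCat.{0} S} {n : ℕ}
    (hM : Filtered D M) (hD : ∀ i, ExtVanishes S n (D i) X) : ExtVanishes S n M X := by
  induction hM with
  | zero M hM => exact ExtVanishes.of_subsingleton_left
  | extend i f g h _ ih => exact ExtVanishes.contravariant₂ h ih (hD i)

lemma extVanishes_right {X : Type} [AddCommGroup X] [Module S X] {M : ModuleCat.{0} S} {n : ℕ}
    (hM : Filtered D M) (hD : ∀ i, ExtVanishes S n X (D i)) : ExtVanishes S n X M := by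
  induction hM with
  | zero M hM => exact ExtVanishes.of_subsingleton_right
  | extend i f g h _ ih => exact ExtVanishes.covariant₂ h ih (hD i)

lemma pi {M : ModuleCat.{0} S} (hM : Filtered D M) (m : ℕ) :
    Filtered D (ModuleCat.of S (Fin m → M)) := by
  induction m with
  | zero => exact zero _ (inferInstanceAs (Subsingleton (Fin 0 → M)))
  | succ m ih =>
    exact of_isShortExact (B := ModuleCat.of S (Fin (m + 1) → M)) (IsShortExact.cons_pi M m) ih hM

end Filtered

lemma IsShortExact.inclusion_subquot {M : ModuleCat.{0} S} {A B : Submodule S M} {E : Type}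
    [AddCommGroup E] [Module S E] (hAB : A ≤ B) (e : subquot S A B ≃ₗ[S] E) :
    IsShortExact (Submodule.inclusion hAB)
      (e.toLinearMap ∘ₗ (Submodule.comap B.subtype A).mkQ) := by
  refine ⟨Submodule.inclusion_injective hAB, e.surjective.comp (Submodule.mkQ_surjective _),
    fun x => ?_⟩
  simp only [LinearMap.comp_apply, LinearEquiv.coe_coe, LinearEquiv.map_eq_zero_iff,
    Submodule.mkQ_apply, Submodule.Quotient.mk_eq_zero, Submodule.mem_comap,
    Submodule.subtype_apply]
  exact ⟨fun hx => ⟨⟨x, hx⟩, rfl⟩, fun ⟨y, hy⟩ => hy ▸ y.2⟩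

lemma nonempty_subquot_equiv {M : ModuleCat.{0} S} {U V : Submodule S M} {X : Type}
    [AddCommGroup X] [Module S X] {p : V →ₗ[S] X} (hp : Function.Surjective p)
    (hker : ∀ v, p v = 0 ↔ (v : M) ∈ U) : Nonempty (subquot S U V ≃ₗ[S] X) :=
  ⟨(Submodule.quotEquivOfEq _ _ (Submodule.ext fun v => (hker v).symm)).trans
    (p.quotKerEquivOfSurjective hp)⟩

lemma nonempty_subquot_map_equiv {A B : ModuleCat.{0} S} {f : A →ₗ[S] B}
    (hf : Function.Injective f) (U V : Submodule S A) :
    Nonempty (subquot S (U.map f) (V.map f) ≃ₗ[S] subquot S U V) := by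
  have he : ∀ v, f ((Submodule.equivMapOfInjective f hf V).symm v) = v := fun v =>
    congrArg Subtype.val ((Submodule.equivMapOfInjective f hf V).apply_symm_apply v)
  refine nonempty_subquot_equiv (p := (Submodule.comap V.subtype U).mkQ ∘ₗ
    (Submodule.equivMapOfInjective f hf V).symm.toLinearMap)
    ((Submodule.mkQ_surjective _).comp (LinearEquiv.surjective _)) fun v => ?_
  rw [LinearMap.comp_apply, Submodule.mkQ_apply, Submodule.Quotient.mk_eq_zero,
    Submodule.mem_comap, ← he v]
  exact ⟨fun h => Submodule.mem_map_of_mem h, fun ⟨_, hu, huv⟩ => by rwa [hf huv] at hu⟩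

namespace HasFiltrationWithSections

lemma filtered_initialSegment {M : ModuleCat.{0} S} {n : ℕ} {f : Fin (n + 1) → Submodule S M}
    {E : Fin n → ModuleCat.{0} S} (h : HasFiltrationWithSections S M n f E) (j : Fin (n + 1))
    (hE : ∀ i : Fin n, i.castSucc < j → Filtered D (E i)) :
    Filtered D (ModuleCat.of S (f j)) := by
  induction j using Fin.induction with
  | zero =>
    refine Filtered.zero _ ?_
    rw [h.2.1]
    exact inferInstanceAs (Subsingleton (⊥ : Submodule S M))
  | succ i ih =>
    obtain ⟨e⟩ := h.2.2.2 i
    exact Filtered.of_isShortExact (A := ModuleCat.of S (f i.castSucc))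
      (B := ModuleCat.of S (f i.succ)) (.inclusion_subquot (h.1 i.castSucc_lt_succ.le) e)
      (ih fun k hk => hE k (hk.trans i.castSucc_lt_succ)) (hE i i.castSucc_lt_succ)

lemma filtered {M : ModuleCat.{0} S} {n : ℕ} {f : Fin (n + 1) → Submodule S M}
    {g : Fin n → ι} (h : HasFiltrationWithSections S M n f (fun i => D (g i))) :
    Filtered D M := by
  have htop := h.filtered_initialSegment (D := D) (Fin.last n) fun i _ => .of_section (g i)
  rw [h.2.2.1] at htop
  exact htop.congr Submodule.topEquiv

lemma snoc {A B : ModuleCat.{0} S} {i : ι} {φ : A →ₗ[S] B} {ψ : B →ₗ[S] D i}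
    (hse : IsShortExact φ ψ) {n : ℕ} {f : Fin (n + 1) → Submodule S A} {g : Fin n → ι}
    (h : HasFiltrationWithSections S A n f (fun i => D (g i))) :
    HasFiltrationWithSections S B (n + 1)
      (Fin.snoc (α := fun _ => Submodule S B) (fun j => (f j).map φ) ⊤)
      (fun j => D (Fin.snoc (α := fun _ => ι) g i j)) := by
  obtain ⟨hmono, hbot, htop, hsec⟩ := h
  refine ⟨Fin.monotone_iff_le_succ.2 fun j => ?_, ?_, Fin.snoc_last _ _, fun j => ?_⟩
  · cases j using Fin.lastCases with
    | last => simp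
    | cast j =>
      rw [Fin.snoc_castSucc, ← Fin.castSucc_succ, Fin.snoc_castSucc]
      exact Submodule.map_mono (hmono j.castSucc_lt_succ.le)
  · rw [← Fin.castSucc_zero, Fin.snoc_castSucc, hbot, Submodule.map_bot]
  · cases j using Fin.lastCases with
    | last =>
      beta_reduce
      rw [Fin.snoc_castSucc, Fin.succ_last, Fin.snoc_last, Fin.snoc_last, htop, Submodule.map_top]
      exact nonempty_subquot_equiv (p := ψ ∘ₗ (⊤ : Submodule S B).subtype)
        (hse.surjective.comp fun b => ⟨⟨b, trivial⟩, rfl⟩) fun v => hse.exact v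
    | cast j =>
      beta_reduce
      rw [Fin.snoc_castSucc, ← Fin.castSucc_succ, Fin.snoc_castSucc, Fin.snoc_castSucc]
      exact (nonempty_subquot_map_equiv hse.injective _ _).map2 .trans (hsec j)

end HasFiltrationWithSections

lemma Filtered.exists_hasFiltrationWithSections {M : ModuleCat.{0} S} (hM : Filtered D M) :
    ∃ (n : ℕ) (f : Fin (n + 1) → Submodule S M) (g : Fin n → ι),
      HasFiltrationWithSections S M n f (fun i => D (g i)) := by
  induction hM with
  | zero M hM =>
    exact ⟨0, fun _ => ⊥, Fin.elim0, monotone_const, rfl, Subsingleton.elim _ _,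
      fun i => i.elim0⟩
  | extend i φ ψ hse _ ih =>
    obtain ⟨n, f, g, h⟩ := ih
    exact ⟨n + 1, _, _, h.snoc hse⟩

variable {Λ : Type} [Fintype Λ] [PartialOrder Λ] {Q : QHData S Λ} {M : ModuleCat.{0} S}

lemma inCostdFilt_iff_filtered : InCostdFilt S Q M ↔ Filtered Q.costd M :=
  ⟨fun ⟨_, _, _, h⟩ => h.filtered, fun h => h.exists_hasFiltrationWithSections⟩

lemma inStdFilt_iff_filtered : InStdFilt S Q M ↔ Filtered Q.std M :=
  ⟨fun ⟨_, _, _, h⟩ => h.filtered, fun h => h.exists_hasFiltrationWithSections⟩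

end Filtration

section FiniteDimensional

/-- `S` is a finite-dimensional algebra over some field. Only consequences that do not mention the
field are used, so the field is left out of the data. -/
class IsFiniteDimensionalAlgebra (S : Type) [Ring S] : Prop where
  exists_field : ∃ (k : Type) (_ : Field k) (_ : Algebra k S), FiniteDimensional k S

variable {S : Type} [Ring S]

instance [hS : IsFiniteDimensionalAlgebra S] : IsArtinianRing S := by
  obtain ⟨k, _, _, _⟩ := hS.exists_field
  exact .of_finite k S

open scoped ModuleCat.Algebra

lemma finite_hom_of_finite (k : Type) [Field k] [Algebra k S] [FiniteDimensional k S]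
    (A M : ModuleCat.{0} S) [Module.Finite S A] [Module.Finite S M] :
    Module.Finite k (A →ₗ[S] M) := by
  have := Module.Finite.trans (R := k) S A
  have := Module.Finite.trans (R := k) S M
  exact .of_injective (LinearMap.restrictScalarsₗ k S A M k)
    (LinearMap.restrictScalars_injective k)

lemma isScalarTower_ringelDualRing (k : Type) [Field k] [Algebra k S] (T X : ModuleCat.{0} S) :
    IsScalarTower k (RingelDualRing S T) (T →ₗ[S] X) :=
  ⟨fun c a φ => LinearMap.ext fun t => LinearMap.map_smul_of_tower φ c (a.unop t)⟩

instance [hS : IsFiniteDimensionalAlgebra S] (T : ModuleCat.{0} S) [Module.Finite S T] :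
    IsFiniteDimensionalAlgebra (RingelDualRing S T) := by
  obtain ⟨k, _, _, _⟩ := hS.exists_field
  have : Module.Finite k (Module.End S T) := finite_hom_of_finite k T T
  exact ⟨k, _, inferInstance, .equiv (MulOpposite.opLinearEquiv k)⟩

instance [hS : IsFiniteDimensionalAlgebra S] (T X : ModuleCat.{0} S) [Module.Finite S T]
    [Module.Finite S X] : Module.Finite (RingelDualRing S T) (T →ₗ[S] X) := by
  obtain ⟨k, _, _, _⟩ := hS.exists_field
  have := finite_hom_of_finite k T X
  have := isScalarTower_ringelDualRing k T X
  exact .of_restrictScalars_finite k _ _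

lemma finite_restrictScalars (k : Type) [Field k] [Algebra k S] [FiniteDimensional k S]
    (M : ModuleCat.{0} S) [Module.Finite S M] :
    Module.Finite k ((ModuleCat.restrictScalars (algebraMap k S)).obj M) :=
  (Module.Finite.trans S M : Module.Finite k M)

lemma finite_coextendScalars (k : Type) [Field k] [Algebra k S] [FiniteDimensional k S]
    (M : ModuleCat.{0} k) [Module.Finite k M] :
    Module.Finite S ((ModuleCat.coextendScalars (algebraMap k S)).obj M) := by
  let i := algebraMap k S
  let S' := (ModuleCat.restrictScalars i).obj (ModuleCat.of S S)
  have : Module.Finite S (ModuleCat.of S S) := inferInstanceAs (Module.Finite S S)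
  have : Module.Finite k S' := finite_restrictScalars k (ModuleCat.of S S)
  let incl : (ModuleCat.coextendScalars i).obj M →ₗ[k] (S' →ₗ[k] M) :=
    { toFun := fun v => v
      map_add' := fun _ _ => rfl
      map_smul' := fun c v => LinearMap.ext fun (x : S) =>
        (congrArg v (Algebra.commutes c x).symm).trans (v.map_smul c x) }
  have : Module.Finite k ((ModuleCat.coextendScalars i).obj M) :=
    .of_injective incl fun _ _ h => h
  exact .of_restrictScalars_finite k S _

lemma exists_finite_injective [hS : IsFiniteDimensionalAlgebra S] (M : ModuleCat.{0} S)
    [Module.Finite S M] : ∃ (E : ModuleCat.{0} S) (j : M →ₗ[S] E),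
      Module.Finite S E ∧ Module.Injective S E ∧ Function.Injective j := by
  obtain ⟨k, _, _, _⟩ := hS.exists_field
  let adj := ModuleCat.restrictCoextendScalarsAdj.{0} (algebraMap k S)
  let M' := (ModuleCat.restrictScalars (algebraMap k S)).obj M
  have : Module.Finite k M' := finite_restrictScalars k M
  have : Injective M' :=
    (Module.injective_iff_injective_object k M').1 (Module.injective_of_isSemisimpleRing k _)
  have : Mono (adj.unit.app M) := inferInstance
  exact ⟨_, (adj.unit.app M).hom, finite_coextendScalars k M',
    (Module.injective_iff_injective_object S _).2 (adj.map_injective _ inferInstance),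
    (ModuleCat.mono_iff_injective _).1 inferInstance⟩

lemma exists_pi_factorization [hS : IsFiniteDimensionalAlgebra S] (A M : ModuleCat.{0} S)
    [Module.Finite S A] [Module.Finite S M] : ∃ (m : ℕ) (φ : (Fin m → A) →ₗ[S] M),
      ∀ ψ : A →ₗ[S] M, ∃ χ : ∀ X : ModuleCat.{0} S, X →ₗ[S] (Fin m → X),
        φ ∘ₗ χ A = ψ ∧ ∀ (X Y : ModuleCat.{0} S) (f : X →ₗ[S] Y),
          f.compLeft (Fin m) ∘ₗ χ X = χ Y ∘ₗ f := by
  obtain ⟨k, _, _, _⟩ := hS.exists_field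
  have := finite_hom_of_finite k A M
  obtain ⟨m, φ, hφ⟩ := Module.Finite.exists_fin (R := k) (M := A →ₗ[S] M)
  refine ⟨m, LinearMap.lsum S (fun _ => A) ℕ φ, fun ψ => ?_⟩
  obtain ⟨c, rfl⟩ := (Submodule.mem_span_range_iff_exists_fun k).1 (hφ ▸ Submodule.mem_top (x := ψ))
  refine ⟨fun X => LinearMap.pi fun i => c i • LinearMap.id, ?_, fun X Y f => ?_⟩
  · ext x
    simp [LinearMap.map_smul_of_tower]
  · ext x i
    simp [LinearMap.map_smul_of_tower]

lemma IsShortExact.compLeft {A B C : Type} [AddCommGroup A] [Module S A] [AddCommGroup B]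
    [Module S B] [AddCommGroup C] [Module S C] {f : A →ₗ[S] B} {g : B →ₗ[S] C}
    (h : IsShortExact f g) (m : ℕ) :
    IsShortExact (f.compLeft (Fin m)) (g.compLeft (Fin m)) := by
  refine ⟨h.injective.comp_left, h.surjective.comp_left, fun y => ⟨fun hy => ?_, ?_⟩⟩
  · choose x hx using fun i => (h.exact (y i)).1 (congrFun hy i)
    exact ⟨x, funext hx⟩
  · rintro ⟨x, rfl⟩
    exact funext fun i => h.exact.apply_apply_eq_zero (x i)

-- The pushout of `Ω^m → P^m → X^m` along a map `Ω^m → M` through which every map `Ω → M` factors.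
lemma exists_isShortExact_extVanishes_one [IsFiniteDimensionalAlgebra S]
    (X M : ModuleCat.{0} S) [Module.Finite S X] [Module.Finite S M] (hX : ExtVanishes S 1 X X) :
    ∃ (m : ℕ) (N : ModuleCat.{0} S) (a : M →ₗ[S] N) (q : N →ₗ[S] (Fin m → X)),
      IsShortExact a q ∧ ExtVanishes S 1 X N := by
  obtain ⟨n, p, hp⟩ := Module.Finite.exists_fin' S X
  have hΩ := IsShortExact.of_surjective hp
  let Ω := ModuleCat.of S (LinearMap.ker p)
  have : Module.Finite S Ω := hΩ.finite_left
  obtain ⟨m, φ, hφ⟩ := exists_pi_factorization Ω M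
  obtain ⟨N, Φ, a, hpush⟩ := exists_isPushoutSquare ((LinearMap.ker p).subtype.compLeft (Fin m)) φ
  obtain ⟨q, haq, -⟩ := hpush.exists_isShortExact (hΩ.compLeft m)
  refine ⟨m, N, a, q, haq, .of_exists_extension hΩ (.of_projective 0) fun ψ => ?_⟩
  obtain ⟨θ, hθ⟩ := (ExtVanishes.pi_right hX m).exists_extension hΩ (q ∘ₗ ψ)
  obtain ⟨θ', rfl⟩ := Module.projective_lifting_property q θ haq.surjective
  obtain ⟨ψ', hψ'⟩ := haq.exists_comp_left_eq (ψ - θ' ∘ₗ (LinearMap.ker p).subtype) (by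
    rw [LinearMap.comp_sub, ← hθ, LinearMap.comp_assoc, sub_self])
  obtain ⟨χ, rfl, hχ⟩ := hφ ψ'
  refine ⟨Φ ∘ₗ χ (ModuleCat.of S (Fin n → S)) + θ', ?_⟩
  have hext : (Φ ∘ₗ χ (ModuleCat.of S (Fin n → S))) ∘ₗ (LinearMap.ker p).subtype =
      a ∘ₗ φ ∘ₗ χ Ω := by
    rw [LinearMap.comp_assoc, ← hχ Ω, ← LinearMap.comp_assoc, hpush.comm, LinearMap.comp_assoc]
  rw [LinearMap.add_comp, hext, hψ', sub_add_cancel]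

end FiniteDimensional

section Weights

variable {S : Type} [Ring S] {Λ : Type} [Fintype Λ] [PartialOrder Λ] {Q : QHData S Λ}
  {A B C M N : Type} [AddCommGroup A] [Module S A] [AddCommGroup B] [Module S B] [AddCommGroup C]
  [Module S C] [AddCommGroup M] [Module S M] [AddCommGroup N] [Module S N] {lam mu : Λ}

/-- `mu` is a weight of `M`: the simple module `L mu` is a composition factor of `M`
(`isCompFactor_iff_isWeight`), expressed through the projective cover `P mu`. -/
def QHData.IsWeight (Q : QHData S Λ) (M : Type) [AddCommGroup M] [Module S M] (mu : Λ) : Prop :=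
  ∃ φ : Q.P mu →ₗ[S] M, φ ≠ 0

namespace QHData

instance : IsSimpleModule S (Q.L lam) := Q.simpleL lam

instance : Nontrivial (Q.L lam) := IsSimpleModule.nontrivial S (Q.L lam)

instance : Module.Finite S (Q.L lam) := Q.finiteL lam

instance : Module.Projective S (Q.P lam) := (Q.projCover lam).1

instance : Module.Injective S (Q.I lam) := (Q.injHull lam).1

lemma exists_surjective_L_ker_maximum (Q : QHData S Λ) (lam : Λ) :
    ∃ π : Q.P lam →ₗ[S] Q.L lam, Function.Surjective π ∧
      ∀ N : Submodule S (Q.P lam), N ≠ ⊤ → N ≤ LinearMap.ker π := by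
  obtain ⟨-, π, hπ, hsmall⟩ := Q.projCover lam
  refine ⟨π, hπ, fun N hN => ?_⟩
  by_contra hNπ
  exact hN (hsmall N ((LinearMap.isCoatom_ker_of_surjective hπ).2 _ (right_lt_sup.2 hNπ)))

lemma exists_injective_L_range_minimum (Q : QHData S Λ) (lam : Λ) :
    ∃ j : Q.L lam →ₗ[S] Q.I lam, Function.Injective j ∧
      ∀ N : Submodule S (Q.I lam), N ≠ ⊥ → LinearMap.range j ≤ N := by
  obtain ⟨-, j, hj, hess⟩ := Q.injHull lam
  have : IsSimpleModule S (LinearMap.range j) := .congr (LinearEquiv.ofInjective j hj).symm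
  refine ⟨j, hj, fun N hN => (isSimpleModule_iff_isAtom.1 this).not_disjoint_iff_le.1 fun h => ?_⟩
  exact hN (hess N h.symm.eq_bot)

instance : Module.Finite S (Q.P lam) := by
  obtain ⟨π, hπ, hmax⟩ := Q.exists_surjective_L_ker_maximum lam
  obtain ⟨m, hm⟩ := exists_ne (0 : Q.L lam)
  obtain ⟨x, rfl⟩ := hπ m
  refine .of_surjective (LinearMap.toSpanSingleton S (Q.P lam) x) ?_
  rw [← LinearMap.range_eq_top]
  by_contra hx
  exact hm (hmax _ hx ⟨1, one_smul S x⟩)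

instance [IsFiniteDimensionalAlgebra S] : Module.Finite S (Q.I lam) := by
  obtain ⟨j, hj, hmin⟩ := Q.exists_injective_L_range_minimum lam
  obtain ⟨E, i, _, hE, hi⟩ := exists_finite_injective (Q.L lam)
  obtain ⟨φ, rfl⟩ := Module.Injective.extension_property S E _ _ j hj i
  obtain ⟨m, hm⟩ := exists_ne (0 : Q.L lam)
  refine .of_injective φ (LinearMap.ker_eq_bot.1 ?_)
  by_contra hφ
  exact hm (hi ((hmin _ hφ ⟨m, rfl⟩).trans (map_zero _).symm))

lemma nonempty_equiv_L_of_ne_zero [IsSimpleModule S N] {φ : Q.P lam →ₗ[S] N} (hφ : φ ≠ 0) :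
    Nonempty (N ≃ₗ[S] Q.L lam) := by
  obtain ⟨π, hπ, hmax⟩ := Q.exists_surjective_L_ker_maximum lam
  have hφ' := LinearMap.surjective_of_ne_zero hφ
  have hφmax := LinearMap.isCoatom_ker_of_surjective hφ'
  have hker : LinearMap.ker φ = LinearMap.ker π := (hφmax.le_iff_eq
    (LinearMap.isCoatom_ker_of_surjective hπ).ne_top).1 (hmax _ hφmax.ne_top) |>.symm
  exact ⟨(φ.quotKerEquivOfSurjective hφ').symm.trans
    ((Submodule.quotEquivOfEq _ _ hker).trans (π.quotKerEquivOfSurjective hπ))⟩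

namespace IsWeight

lemma of_injective (h : Q.IsWeight A mu) {f : A →ₗ[S] B} (hf : Function.Injective f) :
    Q.IsWeight B mu := by
  obtain ⟨φ, hφ⟩ := h
  refine ⟨f ∘ₗ φ, fun h0 => hφ (LinearMap.ext fun x => hf ?_)⟩
  exact (LinearMap.congr_fun h0 x).trans (map_zero f).symm

lemma of_surjective (h : Q.IsWeight B mu) {g : A →ₗ[S] B} (hg : Function.Surjective g) :
    Q.IsWeight A mu := by
  obtain ⟨φ, hφ⟩ := h
  obtain ⟨ψ, rfl⟩ := Module.projective_lifting_property g φ hg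
  exact ⟨ψ, fun h0 => hφ (by rw [h0, LinearMap.comp_zero])⟩

lemma of_isShortExact {f : A →ₗ[S] B} {g : B →ₗ[S] C} (h : Q.IsWeight B mu)
    (hfg : IsShortExact f g) : Q.IsWeight A mu ∨ Q.IsWeight C mu := by
  obtain ⟨φ, hφ⟩ := h
  by_cases h0 : g ∘ₗ φ = 0
  · obtain ⟨ψ, rfl⟩ := hfg.exists_comp_left_eq φ h0
    exact .inl ⟨ψ, fun h1 => hφ (by rw [h1, LinearMap.comp_zero])⟩
  · exact .inr ⟨_, h0⟩

lemma congr (h : Q.IsWeight A mu) (e : A ≃ₗ[S] B) : Q.IsWeight B mu :=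
  h.of_injective (f := e.toLinearMap) e.injective

lemma nontrivial (h : Q.IsWeight A mu) : Nontrivial A := by
  obtain ⟨φ, hφ⟩ := h
  obtain ⟨x, hx⟩ := DFunLike.ne_iff.1 hφ
  exact ⟨φ x, 0, hx⟩

end IsWeight

lemma isWeight_of_equiv_L (e : N ≃ₗ[S] Q.L lam) : Q.IsWeight N lam := by
  obtain ⟨π, hπ, -⟩ := Q.exists_surjective_L_ker_maximum lam
  refine IsWeight.congr ⟨π, ?_⟩ e.symm
  rintro rfl
  obtain ⟨x, hx⟩ := exists_ne (0 : Q.L lam)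
  obtain ⟨y, hy⟩ := hπ x
  exact hx hy.symm

lemma isWeight_L_iff : Q.IsWeight (Q.L lam) mu ↔ mu = lam := by
  refine ⟨fun ⟨φ, hφ⟩ => ?_, fun h => h ▸ isWeight_of_equiv_L (.refl S _)⟩
  by_contra h
  obtain ⟨e⟩ := nonempty_equiv_L_of_ne_zero hφ
  exact (Q.nonisoL lam mu (Ne.symm h)).elim e

lemma isCompFactor_iff_isWeight (M : ModuleCat.{0} S) :
    IsCompFactor S (Q.L mu) M ↔ Q.IsWeight M mu := by
  constructor
  · rintro ⟨A, B, -, ⟨e⟩⟩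
    exact ((isWeight_of_equiv_L e).of_surjective (Submodule.mkQ_surjective _)).of_injective
      B.injective_subtype
  rintro ⟨φ, hφ⟩
  obtain ⟨π, hπ, hmax⟩ := Q.exists_surjective_L_ker_maximum mu
  have hle : LinearMap.ker φ ≤ LinearMap.ker π := hmax _ fun h => hφ (LinearMap.ker_eq_top.1 h)
  have hrange : IsShortExact (LinearMap.ker φ.rangeRestrict).subtype φ.rangeRestrict :=
    .of_surjective φ.surjective_rangeRestrict
  obtain ⟨p, rfl⟩ := hrange.exists_comp_right_eq π
    (LinearMap.ext fun x => hle (congrArg Subtype.val x.2))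
  refine ⟨(LinearMap.ker (p ∘ₗ φ.rangeRestrict)).map φ, LinearMap.range φ,
    LinearMap.map_le_range, nonempty_subquot_equiv (p := p)
      (Function.Surjective.of_comp (g := φ.rangeRestrict) hπ) ?_⟩
  rintro ⟨_, x, rfl⟩
  refine ⟨fun hx => ⟨x, hx, rfl⟩, fun ⟨y, hy, hyx⟩ => ?_⟩
  exact (congrArg p (Subtype.ext hyx)).symm.trans hy

lemma exists_injective_L [IsArtinianRing S] (Q : QHData S Λ) (M : Type) [AddCommGroup M]
    [Module S M] [Module.Finite S M] [Nontrivial M] :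
    ∃ (mu : Λ) (j : Q.L mu →ₗ[S] M), Function.Injective j := by
  obtain ⟨a, ha⟩ := IsAtomic.exists_atom (Submodule S M)
  obtain ⟨mu, ⟨e⟩⟩ := Q.fullL (ModuleCat.of S a) (isSimpleModule_iff_isAtom.2 ha)
  exact ⟨mu, a.subtype ∘ₗ e.symm.toLinearMap, a.injective_subtype.comp e.symm.injective⟩

lemma exists_surjective_L (Q : QHData S Λ) (M : Type) [AddCommGroup M] [Module S M]
    [Module.Finite S M] [Nontrivial M] :
    ∃ (mu : Λ) (p : M →ₗ[S] Q.L mu), Function.Surjective p := by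
  obtain ⟨a, ha⟩ := IsCoatomic.exists_coatom (Submodule S M)
  obtain ⟨mu, ⟨e⟩⟩ := Q.fullL (ModuleCat.of S (M ⧸ a)) (isSimpleModule_iff_isCoatom.2 ha)
  exact ⟨mu, e.toLinearMap ∘ₗ a.mkQ, e.surjective.comp a.mkQ_surjective⟩

lemma exists_surjective_std (Q : QHData S Λ) (lam : Λ) :
    ∃ p : Q.P lam →ₗ[S] Q.std lam, Function.Surjective p ∧
      ∀ (M : Type) [AddCommGroup M] [Module S M] (φ : Q.P lam →ₗ[S] M),
        (∀ mu, Q.IsWeight M mu → mu ≤ lam) → ∃ ψ : Q.std lam →ₗ[S] M, ψ ∘ₗ p = φ := by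
  obtain ⟨K, ⟨e⟩, -, hmin⟩ := Q.stdSpec lam
  refine ⟨e.symm.toLinearMap ∘ₗ K.mkQ, e.symm.surjective.comp K.mkQ_surjective,
    fun M _ _ φ hM => ?_⟩
  have hK : K ≤ LinearMap.ker φ := hmin _ fun mu hmu => hM mu
    (((isCompFactor_iff_isWeight _).1 hmu).of_injective (f := (LinearMap.ker φ).liftQ φ le_rfl)
      (LinearMap.ker_eq_bot.1 (Submodule.ker_liftQ_eq_bot _ φ le_rfl le_rfl)))
  exact ⟨K.liftQ φ hK ∘ₗ e.toLinearMap, LinearMap.ext fun x => by simp⟩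

lemma IsWeight.le_of_std (h : Q.IsWeight (Q.std lam) mu) : mu ≤ lam := by
  obtain ⟨K, ⟨e⟩, hK, -⟩ := Q.stdSpec lam
  exact hK mu ((isCompFactor_iff_isWeight _).2 (h.congr e))

instance : Module.Finite S (Q.std lam) := by
  obtain ⟨p, hp, -⟩ := Q.exists_surjective_std lam
  exact .of_surjective p hp

lemma exists_injective_costd (Q : QHData S Λ) (lam : Λ) :
    ∃ i : Q.costd lam →ₗ[S] Q.I lam, Function.Injective i ∧
      ∀ (M : Type) [AddCommGroup M] [Module S M] (φ : M →ₗ[S] Q.I lam),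
        (∀ mu, Q.IsWeight M mu → mu ≤ lam) → ∃ ψ : M →ₗ[S] Q.costd lam, i ∘ₗ ψ = φ := by
  obtain ⟨V, ⟨e⟩, -, hmax⟩ := Q.costdSpec lam
  refine ⟨V.subtype ∘ₗ e.toLinearMap, V.injective_subtype.comp e.injective, fun M _ _ φ hM => ?_⟩
  have hV : LinearMap.range φ ≤ V := hmax _ fun mu hmu => hM mu
    (((isCompFactor_iff_isWeight _).1 hmu).of_surjective φ.surjective_rangeRestrict)
  exact ⟨e.symm.toLinearMap ∘ₗ φ.codRestrict V fun x => hV ⟨x, rfl⟩, LinearMap.ext fun x => by simp⟩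

lemma IsWeight.le_of_costd (h : Q.IsWeight (Q.costd lam) mu) : mu ≤ lam := by
  obtain ⟨V, ⟨e⟩, hV, -⟩ := Q.costdSpec lam
  exact hV mu ((isCompFactor_iff_isWeight _).2 (h.congr e))

instance [IsFiniteDimensionalAlgebra S] : Module.Finite S (Q.costd lam) := by
  obtain ⟨i, hi, -⟩ := Q.exists_injective_costd lam
  exact .of_injective i hi

lemma exists_injective_L_costd_range_minimum (Q : QHData S Λ) (lam : Λ) :
    ∃ j : Q.L lam →ₗ[S] Q.costd lam, Function.Injective j ∧
      ∀ N : Submodule S (Q.costd lam), N ≠ ⊥ → LinearMap.range j ≤ N := by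
  obtain ⟨i, hi, hlift⟩ := Q.exists_injective_costd lam
  obtain ⟨k, hk, hmin⟩ := Q.exists_injective_L_range_minimum lam
  obtain ⟨j, rfl⟩ := hlift (Q.L lam) k fun mu h => (isWeight_L_iff.1 h).le
  refine ⟨j, .of_comp hk, fun N hN => ?_⟩
  have hle := hmin (N.map i) fun h =>
    hN (Submodule.map_injective_of_injective hi (by simpa using h))
  rwa [LinearMap.range_comp, Submodule.map_le_map_iff_of_injective hi] at hle

end QHData

end Weights

section Multiplicity

/-- The map `φ ↦ f ∘ φ` from `Hom(T, X)` to `Hom(T, Y)`, linear over `End(T)ᵒᵖ`: the functor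
`F = Hom(T, -)` on morphisms. -/
def homTMap {S : Type} [Ring S] (T : ModuleCat.{0} S) {X Y : ModuleCat.{0} S} (f : X →ₗ[S] Y) :
    (T →ₗ[S] X) →ₗ[RingelDualRing S T] (T →ₗ[S] Y) where
  toFun φ := f ∘ₗ φ
  map_add' _ _ := LinearMap.comp_add _ _ _
  map_smul' _ _ := rfl

variable {S : Type} [Ring S] {Λ : Type} [Fintype Λ] [PartialOrder Λ] {Q : QHData S Λ}
  {T A B C M N : ModuleCat.{0} S} {f : A →ₗ[S] B} {g : B →ₗ[S] C} {lam mu : Λ}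

lemma IsShortExact.homTMap (h : IsShortExact f g) (hA : ExtVanishes S 1 T A) :
    IsShortExact (homTMap T f) (homTMap T g) where
  injective φ ψ hφψ := LinearMap.ext fun x => h.injective (LinearMap.congr_fun hφψ x)
  surjective φ := ExtVanishes.exists_lift h hA φ
  exact ψ := ⟨h.exists_comp_left_eq ψ, fun ⟨φ, hφ⟩ => by
    rw [← hφ]; exact LinearMap.ext fun x => h.exact.apply_apply_eq_zero (φ x)⟩

lemma eq_sum_of_succ_eq_add {α : Type*} [AddCommMonoid α] {n : ℕ} {a : Fin (n + 1) → α}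
    {b : Fin n → α} (hzero : a 0 = 0) (hsucc : ∀ i, a i.succ = a i.castSucc + b i) :
    a (Fin.last n) = ∑ i, b i := by
  induction n with
  | zero => simpa using hzero
  | succ n ih =>
    rw [Fin.sum_univ_castSucc, ← ih (a := fun i => a i.castSucc) hzero fun i => hsucc i.castSucc]
    exact hsucc (Fin.last n)

namespace QHData

/-- The multiplicity of `L mu` as a composition factor of `M` (`compFactorMult_iff`), defined
without choosing a composition series as the length of `Hom(P mu, M)` over `End(P mu)ᵒᵖ`. -/
noncomputable def mult (Q : QHData S Λ) (M : ModuleCat.{0} S) (mu : Λ) : ℕ∞ :=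
  Module.length (RingelDualRing S (Q.P mu)) (Q.P mu →ₗ[S] M)

lemma mult_eq_add (h : IsShortExact f g) (mu : Λ) : Q.mult B mu = Q.mult A mu + Q.mult C mu :=
  have h' := h.homTMap (.of_projective (X := Q.P mu) 0)
  Module.length_eq_add_of_exact _ _ h'.injective h'.surjective h'.exact

lemma mult_eq_zero_iff : Q.mult M mu = 0 ↔ ¬ Q.IsWeight M mu := by
  rw [mult, Module.length_eq_zero_iff, IsWeight, not_exists_not]
  exact ⟨fun h φ => Subsingleton.elim φ 0, fun h => ⟨fun φ ψ => (h φ).trans (h ψ).symm⟩⟩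

lemma mult_congr (e : M ≃ₗ[S] N) : Q.mult M mu = Q.mult N mu := by
  have hzero : Q.mult (ModuleCat.of S PUnit) mu = 0 :=
    mult_eq_zero_iff.2 fun h => not_subsingleton_iff_nontrivial.2 h.nontrivial
      (inferInstanceAs (Subsingleton PUnit))
  have : Subsingleton (ModuleCat.of S PUnit) := inferInstanceAs (Subsingleton PUnit)
  rw [mult_eq_add (.of_linearEquiv (C := ModuleCat.of S PUnit) e) mu, hzero, add_zero]

open scoped Classical in
lemma mult_of_isSimpleModule [IsSimpleModule S N] :
    Q.mult N mu = if Nonempty (N ≃ₗ[S] Q.L mu) then 1 else 0 := by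
  split_ifs with hN
  · obtain ⟨e⟩ := hN
    obtain ⟨φ₀, hφ₀⟩ := isWeight_of_equiv_L e
    refine Module.length_eq_one_iff.2 (isSimpleModule_iff_toSpanSingleton_surjective.2
      ⟨⟨φ₀, 0, hφ₀⟩, fun φ hφ ψ => ?_⟩)
    obtain ⟨χ, rfl⟩ := Module.projective_lifting_property φ ψ (LinearMap.surjective_of_ne_zero hφ)
    exact ⟨.op χ, rfl⟩
  · exact mult_eq_zero_iff.2 fun ⟨φ, hφ⟩ => hN (nonempty_equiv_L_of_ne_zero hφ)

lemma mult_eq_sum_subquot {n : ℕ} {f : Fin (n + 1) → Submodule S M} (hmono : Monotone f)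
    (hbot : f 0 = ⊥) (htop : f (Fin.last n) = ⊤) :
    Q.mult M mu =
      ∑ i : Fin n, Q.mult (ModuleCat.of S (subquot S (f i.castSucc) (f i.succ))) mu := by
  have hsucc (i : Fin n) : Q.mult (ModuleCat.of S (f i.succ)) mu =
      Q.mult (ModuleCat.of S (f i.castSucc)) mu +
        Q.mult (ModuleCat.of S (subquot S (f i.castSucc) (f i.succ))) mu :=
    mult_eq_add (A := ModuleCat.of S (f i.castSucc)) (B := ModuleCat.of S (f i.succ))
      (C := ModuleCat.of S (subquot S (f i.castSucc) (f i.succ)))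
      (.inclusion_subquot (hmono i.castSucc_lt_succ.le) (.refl S _)) mu
  rw [← eq_sum_of_succ_eq_add (a := fun j => Q.mult (ModuleCat.of S (f j)) mu) ?_ hsucc, htop]
  · exact mult_congr Submodule.topEquiv.symm
  · rw [hbot]
    exact mult_eq_zero_iff.2 fun h => not_subsingleton_iff_nontrivial.2 h.nontrivial
      (inferInstanceAs (Subsingleton (⊥ : Submodule S M)))

open scoped Classical in
lemma compFactorMult_iff [IsArtinianRing S] [Module.Finite S M] {m : ℕ} :
    CompFactorMult S (Q.L mu) M m ↔ Q.mult M mu = m := by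
  have hcard {n : ℕ} {f : Fin (n + 1) → Submodule S M} (hmono : Monotone f) (hbot : f 0 = ⊥)
      (htop : f (Fin.last n) = ⊤)
      (hsimple : ∀ i : Fin n, IsSimpleModule S (subquot S (f i.castSucc) (f i.succ))) :
      Q.mult M mu = Nat.card {i : Fin n //
        Nonempty (subquot S (f i.castSucc) (f i.succ) ≃ₗ[S] Q.L mu)} := by
    rw [mult_eq_sum_subquot hmono hbot htop, Finset.sum_congr rfl fun i _ =>
      mult_of_isSimpleModule (N := ModuleCat.of S (subquot S (f i.castSucc) (f i.succ))),
      Finset.sum_boole, Nat.card_eq_fintype_card, Fintype.card_subtype]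
  refine ⟨fun ⟨n, f, hmono, hbot, htop, hsimple, hm⟩ => ?_, fun hm => ?_⟩
  · rw [hcard hmono hbot htop hsimple, hm]
  · obtain ⟨s, hbot, htop⟩ := isFiniteLength_iff_exists_compositionSeries.1
      (isFiniteLength_iff_isNoetherian_isArtinian.2 ⟨inferInstance, inferInstance⟩ :
        IsFiniteLength S M)
    have hmono : Monotone s := Fin.monotone_iff_le_succ.2 fun i => (s.step i).le
    have hsimple (i : Fin s.length) : IsSimpleModule S (subquot S (s i.castSucc) (s i.succ)) :=
      (covBy_iff_quot_is_simple (s.step i).le).1 (s.step i)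
    refine ⟨s.length, s, hmono, hbot, htop, hsimple, ?_⟩
    exact_mod_cast (hcard hmono hbot htop hsimple).symm.trans hm

lemma mult_std (Q : QHData S Λ) [IsArtinianRing S] (lam : Λ) : Q.mult (Q.std lam) lam = 1 :=
  compFactorMult_iff.1 (Q.multOne lam)

lemma not_isWeight_right_of_mult_eq_one (h : IsShortExact f g) (hB : Q.mult B lam = 1)
    (hA : Q.IsWeight A lam) : ¬ Q.IsWeight C lam := by
  intro hC
  have hle := add_le_add (Order.one_le_iff_ne_zero.2 fun h0 => mult_eq_zero_iff.1 h0 hA)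
    (Order.one_le_iff_ne_zero.2 fun h0 => mult_eq_zero_iff.1 h0 hC)
  rw [← mult_eq_add h, hB] at hle
  exact absurd hle (by decide)

end QHData

end Multiplicity

section QuasiHereditary

variable {S : Type} [Ring S] {Λ : Type} [Fintype Λ] [PartialOrder Λ] {Q : QHData S Λ}
  {X Y : Type} [AddCommGroup X] [Module S X] [AddCommGroup Y] [Module S Y] {lam mu : Λ}

namespace Filtered

variable {ι : Type} {D : ι → ModuleCat.{0} S} {M N : ModuleCat.{0} S}

lemma hom_left_eq_zero (hM : Filtered D M) (hD : ∀ i (φ : D i →ₗ[S] X), φ = 0)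
    (φ : M →ₗ[S] X) : φ = 0 := by
  induction hM with
  | zero M hM => exact LinearMap.ext fun x => by rw [Subsingleton.elim x 0, map_zero, map_zero]
  | extend i f g h _ ih =>
    obtain ⟨ψ, rfl⟩ := h.exists_comp_right_eq φ (ih _)
    rw [hD i ψ, LinearMap.zero_comp]

lemma hom_right_eq_zero (hM : Filtered D M) (hD : ∀ i (φ : X →ₗ[S] D i), φ = 0)
    (φ : X →ₗ[S] M) : φ = 0 := by
  induction hM with
  | zero M hM => exact LinearMap.ext fun x => Subsingleton.elim _ _
  | extend i f g h _ ih =>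
    obtain ⟨ψ, rfl⟩ := h.exists_comp_left_eq φ (hD i _)
    rw [ih ψ, LinearMap.comp_zero]

end Filtered

namespace QHData

lemma filtered_L [IsArtinianRing S] (Q : QHData S Λ) (M : ModuleCat.{0} S) [Module.Finite S M] :
    Filtered (fun nu : {nu // Q.IsWeight M nu} => Q.L nu) M := by
  induction hl : Module.length S M using WellFoundedLT.induction generalizing M with
  | ind l ih =>
    subst hl
    rcases subsingleton_or_nontrivial M with hM | hM
    · exact .zero M hM
    obtain ⟨mu, p, hp⟩ := Q.exists_surjective_L M
    have hse := IsShortExact.of_surjective hp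
    have hmu : Q.IsWeight M mu := (isWeight_L_iff.2 rfl).of_surjective hp
    have hker := ih _ hse.length_left_lt (ModuleCat.of S (LinearMap.ker p)) rfl
    exact .extend (A := ModuleCat.of S (LinearMap.ker p)) ⟨mu, hmu⟩ _ p hse
      (hker.mono fun nu => .of_section (⟨nu, nu.2.of_injective hse.injective⟩ :
        {nu // Q.IsWeight M nu}))

lemma isWeight_of_ne_zero {φ : Q.std lam →ₗ[S] X} (hφ : φ ≠ 0) : Q.IsWeight X lam := by
  obtain ⟨p, hp, -⟩ := Q.exists_surjective_std lam
  exact ⟨φ ∘ₗ p, fun h => hφ ((LinearMap.cancel_right hp).1 h)⟩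

lemma exists_isShortExact_std_L [IsArtinianRing S] (Q : QHData S Λ) (lam : Λ) :
    ∃ (R : ModuleCat.{0} S) (i : R →ₗ[S] Q.std lam) (p : Q.std lam →ₗ[S] Q.L lam),
      IsShortExact i p ∧ ∀ mu, Q.IsWeight R mu → mu < lam := by
  obtain ⟨p, hp, huniv⟩ := Q.exists_surjective_std lam
  obtain ⟨π, hπ, -⟩ := Q.exists_surjective_L_ker_maximum lam
  obtain ⟨q, rfl⟩ := huniv (Q.L lam) π fun mu h => (isWeight_L_iff.1 h).le
  have hse := IsShortExact.of_surjective (Function.Surjective.of_comp (g := p) hπ)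
  refine ⟨ModuleCat.of S (LinearMap.ker q), _, q, hse, fun mu hmu => ?_⟩
  refine (hmu.of_injective hse.injective).le_of_std.lt_of_ne ?_
  rintro rfl
  exact not_isWeight_right_of_mult_eq_one (A := ModuleCat.of S (LinearMap.ker q)) hse
    (Q.mult_std mu) hmu (isWeight_L_iff.2 rfl)

lemma not_isWeight_costd_quotient_range [IsArtinianRing S] {j : Q.L lam →ₗ[S] Q.costd lam}
    (hj : Function.Injective j)
    (hmin : ∀ N : Submodule S (Q.costd lam), N ≠ ⊥ → LinearMap.range j ≤ N) :
    ¬ Q.IsWeight (Q.costd lam ⧸ LinearMap.range j) lam := by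
  rintro ⟨φ, hφ⟩
  obtain ⟨p, -, huniv⟩ := Q.exists_surjective_std lam
  obtain ⟨ψ, rfl⟩ := Module.projective_lifting_property _ φ (LinearMap.range j).mkQ_surjective
  obtain ⟨χ, rfl⟩ := huniv _ ψ fun mu h => h.le_of_costd
  set q := (LinearMap.range j).mkQ ∘ₗ χ with hq
  have hq0 : q ≠ 0 := fun h => hφ <| by rw [← LinearMap.comp_assoc, ← hq, h, LinearMap.zero_comp]
  have hχ0 : LinearMap.range χ ≠ ⊥ := fun h =>
    hq0 <| by rw [hq, LinearMap.range_eq_bot.1 h, LinearMap.comp_zero]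
  have hse := IsShortExact.subtype_mkQ (LinearMap.ker q)
  have hquot : Q.IsWeight (Q.std lam ⧸ LinearMap.ker q) lam :=
    isWeight_of_ne_zero (φ := (LinearMap.ker q).mkQ) fun h => hq0 <| LinearMap.ker_eq_top.1 <| by
      rw [← (LinearMap.ker q).ker_mkQ, h, LinearMap.ker_zero]
  obtain ⟨π, hπ⟩ := (isWeight_L_iff (Q := Q) (lam := lam)).2 rfl
  obtain ⟨π', hπ'⟩ := Module.projective_lifting_property χ.rangeRestrict
    ((j ∘ₗ π).codRestrict _ fun x => hmin _ hχ0 ⟨π x, rfl⟩) χ.surjective_rangeRestrict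
  have hχπ' : χ ∘ₗ π' = j ∘ₗ π := LinearMap.ext fun x => congrArg Subtype.val
    (LinearMap.congr_fun hπ' x)
  obtain ⟨κ, rfl⟩ := hse.exists_comp_left_eq π' <| by
    ext x
    simpa [hq] using ⟨π x, (LinearMap.congr_fun hχπ' x).symm⟩
  have hker : Q.IsWeight (LinearMap.ker q) lam := by
    refine ⟨κ, fun h => hπ ((LinearMap.cancel_left hj).1 ?_)⟩
    rw [← hχπ', h, LinearMap.comp_zero, LinearMap.comp_zero, LinearMap.comp_zero]
  exact not_isWeight_right_of_mult_eq_one (A := ModuleCat.of S (LinearMap.ker q))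
    (C := ModuleCat.of S (Q.std lam ⧸ LinearMap.ker q)) hse (Q.mult_std lam) hker hquot

lemma exists_isShortExact_L_costd [IsArtinianRing S] (Q : QHData S Λ) (lam : Λ) :
    ∃ (R : ModuleCat.{0} S) (i : Q.L lam →ₗ[S] Q.costd lam) (p : Q.costd lam →ₗ[S] R),
      IsShortExact i p ∧ (∀ mu, Q.IsWeight R mu → mu < lam) ∧
        ∀ N : Submodule S (Q.costd lam), N ≠ ⊥ → LinearMap.range i ≤ N := by
  obtain ⟨j, hj, hmin⟩ := Q.exists_injective_L_costd_range_minimum lam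
  have hse := IsShortExact.of_injective hj
  refine ⟨ModuleCat.of S (Q.costd lam ⧸ LinearMap.range j), j, _, hse, fun mu hmu => ?_, hmin⟩
  refine (hmu.of_surjective hse.surjective).le_of_costd.lt_of_ne ?_
  rintro rfl
  exact not_isWeight_costd_quotient_range hj hmin hmu

instance : Nontrivial (Q.std lam) := by
  obtain ⟨p, -, huniv⟩ := Q.exists_surjective_std lam
  obtain ⟨π, hπ, -⟩ := Q.exists_surjective_L_ker_maximum lam
  obtain ⟨q, rfl⟩ := huniv (Q.L lam) π fun mu h => (isWeight_L_iff.1 h).le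
  exact (Function.Surjective.of_comp (g := p) hπ).nontrivial

instance : Nontrivial (Q.costd lam) := by
  obtain ⟨j, hj, -⟩ := Q.exists_injective_L_costd_range_minimum lam
  exact hj.nontrivial

end QHData

lemma HasFiltrationWithSections.exists_isShortExact_last {M : ModuleCat.{0} S} {n : ℕ}
    {f : Fin (n + 2) → Submodule S M} {E : Fin (n + 1) → ModuleCat.{0} S}
    (h : HasFiltrationWithSections S M (n + 1) f E) :
    ∃ p : M →ₗ[S] E (Fin.last n), IsShortExact (f (Fin.last n).castSucc).subtype p := by
  obtain ⟨hmono, -, htop, hsec⟩ := h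
  obtain ⟨e⟩ := hsec (Fin.last n)
  have hse := IsShortExact.inclusion_subquot (hmono (Fin.last n).castSucc_lt_succ.le) e
  let t : f (Fin.last n).succ ≃ₗ[S] M := LinearEquiv.ofTop _ htop
  refine ⟨(e.toLinearMap ∘ₗ Submodule.mkQ _) ∘ₗ t.symm.toLinearMap, Submodule.injective_subtype _,
    hse.surjective.comp t.symm.surjective, ?_⟩
  exact (LinearEquiv.conj_exact_iff_exact _ _ t).2 hse.exact

namespace QHData

lemma exists_isShortExact_P_std [IsArtinianRing S] (Q : QHData S Λ) (lam : Λ) :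
    ∃ (Om : ModuleCat.{0} S) (f : Om →ₗ[S] Q.P lam) (p : Q.P lam →ₗ[S] Q.std lam),
      IsShortExact f p ∧ Filtered (fun nu : {nu // lam < nu} => Q.std nu) Om := by
  obtain ⟨n, f, g, hf, hg, hcard⟩ := Q.projFilt lam
  obtain ⟨⟨i₀, hi₀⟩⟩ := (Nat.card_eq_one_iff_unique.1 hcard).2
  obtain _ | n := n
  · exact i₀.elim0
  have hse := hf.exists_isShortExact_last
  have hlast : g (Fin.last n) = lam := by
    obtain ⟨p, hp⟩ := hse
    obtain ⟨_, _, q, hq, -⟩ := Q.exists_isShortExact_std_L (g (Fin.last n))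
    exact (isWeight_L_iff.1 ⟨q ∘ₗ p,
      LinearMap.ne_zero_of_surjective (hq.surjective.comp hp.surjective)⟩).symm
  have hlt (k : Fin (n + 1)) (hk : k < Fin.last n) : lam < g k := by
    refine (hg k).lt_of_ne fun h => hk.ne ?_
    have := (Nat.card_eq_one_iff_unique.1 hcard).1
    exact congrArg Subtype.val (Subsingleton.elim (⟨k, h.symm⟩ : {i // g i = lam}) ⟨_, hlast⟩)
  have hOm := hf.filtered_initialSegment (D := fun nu : {nu // lam < nu} => Q.std nu)
    (Fin.last n).castSucc fun k hk =>
      .of_section (⟨g k, hlt k (Fin.castSucc_lt_castSucc_iff.1 hk)⟩ : {nu // lam < nu})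
  rw [hlast] at hse
  obtain ⟨p, hp⟩ := hse
  exact ⟨_, _, p, hp, hOm⟩

lemma extVanishes_std_of_isWeight [IsArtinianRing S] (hX : ∀ mu, Q.IsWeight X mu → ¬ lam < mu) :
    ExtVanishes S 1 (Q.std lam) X := by
  obtain ⟨Om, f, p, hse, hOm⟩ := Q.exists_isShortExact_P_std lam
  refine .of_exists_extension hse (.of_projective 0) fun φ => ⟨0, ?_⟩
  rw [LinearMap.zero_comp, hOm.hom_left_eq_zero (fun nu ψ => ?_) φ]
  by_contra hψ
  exact hX nu (isWeight_of_ne_zero hψ) nu.2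

lemma extVanishes_costd_of_isWeight (hX : ∀ mu, Q.IsWeight X mu → mu ≤ lam) :
    ExtVanishes S 1 X (Q.costd lam) := by
  obtain ⟨i, hi, huniv⟩ := Q.exists_injective_costd lam
  have hse := IsShortExact.of_injective hi
  refine .of_exists_lift hse (.of_injective inferInstance 0) fun φ => ⟨0, ?_⟩
  -- The preimage of the image of `φ` in `I lam` has all weights `≤ lam`, so lies in `costd lam`.
  obtain ⟨_, _, hV⟩ := hse.exists_ker_comp (.subtype_mkQ (LinearMap.range φ))
  obtain ⟨ψ, hψ⟩ := huniv _ (LinearMap.ker _).subtype fun mu hmu =>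
    (hmu.of_isShortExact hV).elim IsWeight.le_of_costd fun h =>
      hX mu (h.of_surjective φ.surjective_rangeRestrict)
  rw [LinearMap.comp_zero]
  ext x
  obtain ⟨v, hv⟩ := hse.surjective (φ x)
  have hvV : v ∈ LinearMap.ker ((LinearMap.range φ).mkQ ∘ₗ (LinearMap.range i).mkQ) := by
    simp [hv]
  have hiv : i (ψ ⟨v, hvV⟩) = v := LinearMap.congr_fun hψ ⟨v, hvV⟩
  rw [← hv, ← hiv, hse.exact.apply_apply_eq_zero, LinearMap.zero_apply]

lemma extVanishes_std_costd [IsArtinianRing S] (Q : QHData S Λ) (n : ℕ) (lam mu : Λ) :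
    ExtVanishes S (n + 1) (Q.std lam) (Q.costd mu) := by
  induction n generalizing lam with
  | zero =>
    by_cases h : lam < mu
    · exact extVanishes_costd_of_isWeight fun nu hnu => hnu.le_of_std.trans h.le
    · exact extVanishes_std_of_isWeight fun nu hnu hlt => h (hlt.trans_le hnu.le_of_costd)
  | succ n ih =>
    obtain ⟨Om, f, p, hse, hOm⟩ := Q.exists_isShortExact_P_std lam
    exact .contravariant₃ hse (hOm.extVanishes_left fun nu => ih nu) (.of_projective _)

end QHData

variable {M N : ModuleCat.{0} S}

lemma Filtered.extVanishes [IsArtinianRing S] (hM : Filtered Q.std M) (hN : Filtered Q.costd N)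
    (n : ℕ) : ExtVanishes S (n + 1) M N :=
  hM.extVanishes_left fun lam => hN.extVanishes_right fun mu => Q.extVanishes_std_costd n lam mu

namespace QHData

lemma exists_minimal_hom_std [IsArtinianRing S] (Q : QHData S Λ) (M : ModuleCat.{0} S)
    [Module.Finite S M] [Nontrivial M] :
    ∃ lam, (∃ φ : Q.std lam →ₗ[S] M, φ ≠ 0) ∧
      ∀ mu < lam, ∀ φ : Q.std mu →ₗ[S] M, φ = 0 := by
  obtain ⟨mu, j, hj⟩ := Q.exists_injective_L M
  obtain ⟨_, _, p, hse, -⟩ := Q.exists_isShortExact_std_L mu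
  have hne : {mu | ∃ φ : Q.std mu →ₗ[S] M, φ ≠ 0}.Nonempty := by
    refine ⟨mu, j ∘ₗ p, fun h => LinearMap.ne_zero_of_injective hj ?_⟩
    exact (LinearMap.cancel_right hse.surjective).1 h
  obtain ⟨lam, hlam, hmin⟩ := (Set.toFinite _).exists_minimal hne
  refine ⟨lam, hlam, fun mu hmu φ => ?_⟩
  by_contra hφ
  exact hmu.not_ge (hmin ⟨φ, hφ⟩ hmu.le)

lemma exists_minimal_hom_costd [IsArtinianRing S] (Q : QHData S Λ) (M : ModuleCat.{0} S)
    [Module.Finite S M] [Nontrivial M] :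
    ∃ lam, (∃ φ : M →ₗ[S] Q.costd lam, φ ≠ 0) ∧
      ∀ mu < lam, ∀ φ : M →ₗ[S] Q.costd mu, φ = 0 := by
  obtain ⟨mu, p, hp⟩ := Q.exists_surjective_L M
  obtain ⟨_, i, _, hse, -⟩ := Q.exists_isShortExact_L_costd mu
  have hne : {mu | ∃ φ : M →ₗ[S] Q.costd mu, φ ≠ 0}.Nonempty := by
    refine ⟨mu, i ∘ₗ p, fun h => LinearMap.ne_zero_of_surjective hp ?_⟩
    exact (LinearMap.cancel_left hse.injective).1 (h.trans (LinearMap.comp_zero i).symm)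
  obtain ⟨lam, hlam, hmin⟩ := (Set.toFinite _).exists_minimal hne
  refine ⟨lam, hlam, fun mu hmu φ => ?_⟩
  by_contra hφ
  exact hmu.not_ge (hmin ⟨φ, hφ⟩ hmu.le)

lemma hom_eq_zero_of_isWeight_lt [IsArtinianRing S] {R : ModuleCat.{0} S} [Module.Finite S R]
    (hR : ∀ mu, Q.IsWeight R mu → mu < lam)
    (hX : ∀ mu < lam, ∀ φ : Q.std mu →ₗ[S] X, φ = 0) (φ : R →ₗ[S] X) : φ = 0 := by
  refine (Q.filtered_L R).hom_left_eq_zero (fun nu ψ => ?_) φ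
  obtain ⟨_, _, p, hse, -⟩ := Q.exists_isShortExact_std_L nu
  exact (LinearMap.cancel_right hse.surjective).1 (hX nu (hR nu nu.2) (ψ ∘ₗ p))

lemma hom_eq_zero_of_lt_isWeight [IsArtinianRing S] {R : ModuleCat.{0} S} [Module.Finite S R]
    (hR : ∀ mu, Q.IsWeight R mu → mu < lam)
    (hX : ∀ mu < lam, ∀ φ : X →ₗ[S] Q.costd mu, φ = 0) (φ : X →ₗ[S] R) : φ = 0 := by
  refine (Q.filtered_L R).hom_right_eq_zero (fun nu ψ => ?_) φ
  obtain ⟨_, i, _, hse, -⟩ := Q.exists_isShortExact_L_costd nu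
  refine (LinearMap.cancel_left hse.injective).1 ?_
  rw [hX nu (hR nu nu.2) (i ∘ₗ ψ), LinearMap.comp_zero]

lemma exists_injective_costd_of_extVanishes [IsFiniteDimensionalAlgebra S]
    (hX : ∀ mu, ExtVanishes S 1 (Q.std mu) X) {φ : Q.std lam →ₗ[S] X} (hφ : φ ≠ 0)
    (hmin : ∀ mu < lam, ∀ ψ : Q.std mu →ₗ[S] X, ψ = 0) :
    ∃ k : Q.costd lam →ₗ[S] X, Function.Injective k := by
  have hL (nu : Λ) (hnu : nu < lam) : ExtVanishes S 1 (Q.L nu) X := by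
    obtain ⟨R, i, p, hse, hR⟩ := Q.exists_isShortExact_std_L nu
    have := hse.finite_left
    refine .of_exists_extension hse (hX nu) fun φ => ⟨0, ?_⟩
    rw [LinearMap.zero_comp,
      hom_eq_zero_of_isWeight_lt (fun mu hmu => (hR mu hmu).trans hnu) hmin φ]
  obtain ⟨R, i, p, hse, hR⟩ := Q.exists_isShortExact_std_L lam
  have := hse.finite_left
  obtain ⟨j, rfl⟩ := hse.exists_comp_right_eq φ (hom_eq_zero_of_isWeight_lt hR hmin _)
  have hj0 : j ≠ 0 := fun h => hφ <| by rw [h, LinearMap.zero_comp]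
  obtain ⟨C, s, q, hse', hC, hsoc⟩ := Q.exists_isShortExact_L_costd lam
  have := hse'.finite_right
  have hCX : ExtVanishes S 1 C X := (Q.filtered_L C).extVanishes_left fun nu => hL nu (hC nu nu.2)
  obtain ⟨k, rfl⟩ := hCX.exists_extension hse' j
  refine ⟨k, LinearMap.ker_eq_bot.1 (by_contra fun hk => hj0 ?_)⟩
  exact LinearMap.ext fun x => hsoc _ hk ⟨x, rfl⟩

lemma exists_surjective_std_of_extVanishes [IsFiniteDimensionalAlgebra S]
    (hX : ∀ mu, ExtVanishes S 1 X (Q.costd mu)) {φ : X →ₗ[S] Q.costd lam} (hφ : φ ≠ 0)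
    (hmin : ∀ mu < lam, ∀ ψ : X →ₗ[S] Q.costd mu, ψ = 0) :
    ∃ k : X →ₗ[S] Q.std lam, Function.Surjective k := by
  have hL (nu : Λ) (hnu : nu < lam) : ExtVanishes S 1 X (Q.L nu) := by
    obtain ⟨R, i, p, hse, hR, -⟩ := Q.exists_isShortExact_L_costd nu
    have := hse.finite_right
    refine .of_exists_lift hse (hX nu) fun φ => ⟨0, ?_⟩
    rw [LinearMap.comp_zero,
      hom_eq_zero_of_lt_isWeight (fun mu hmu => (hR mu hmu).trans hnu) hmin φ]
  obtain ⟨R, i, p, hse, hR, -⟩ := Q.exists_isShortExact_L_costd lam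
  have := hse.finite_right
  obtain ⟨j, rfl⟩ := hse.exists_comp_left_eq φ (hom_eq_zero_of_lt_isWeight hR hmin _)
  have hj : Function.Surjective j := LinearMap.surjective_of_ne_zero fun h =>
    hφ <| by rw [h, LinearMap.comp_zero]
  obtain ⟨C, r, q, hse', hC⟩ := Q.exists_isShortExact_std_L lam
  have := hse'.finite_left
  have hXC : ExtVanishes S 1 X C := (Q.filtered_L C).extVanishes_right fun nu => hL nu (hC nu nu.2)
  obtain ⟨k, rfl⟩ := hXC.exists_lift hse' j
  refine ⟨k, LinearMap.range_eq_top.1 (by_contra fun hk => ?_)⟩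
  refine not_isWeight_right_of_mult_eq_one (A := ModuleCat.of S (LinearMap.range k))
    (C := ModuleCat.of S (Q.std lam ⧸ LinearMap.range k)) (.subtype_mkQ _) (Q.mult_std lam)
    (IsWeight.of_surjective (B := Q.L lam) (isWeight_L_iff.2 rfl)
      (g := q ∘ₗ (LinearMap.range k).subtype) fun x => ?_)
    (isWeight_of_ne_zero (φ := (LinearMap.range k).mkQ) fun h => hk ?_)
  · obtain ⟨y, hy⟩ := hj x
    exact ⟨⟨k y, y, rfl⟩, hy⟩
  · rw [← Submodule.ker_mkQ (LinearMap.range k), h, LinearMap.ker_zero]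

variable [IsFiniteDimensionalAlgebra S]

lemma filtered_costd_of_extVanishes (M : ModuleCat.{0} S) [Module.Finite S M]
    (hM : ∀ lam, ExtVanishes S 1 (Q.std lam) M) : Filtered Q.costd M := by
  induction hl : Module.length S M using WellFoundedLT.induction generalizing M with
  | ind l ih =>
    subst hl
    rcases subsingleton_or_nontrivial M with hM0 | hM0
    · exact .zero M hM0
    obtain ⟨lam, ⟨φ, hφ⟩, hmin⟩ := Q.exists_minimal_hom_std M
    obtain ⟨k, hk⟩ := exists_injective_costd_of_extVanishes hM hφ hmin
    have hse := IsShortExact.of_injective hk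
    exact .of_isShortExact (C := ModuleCat.of S (M ⧸ LinearMap.range k)) hse (.of_section lam)
      (ih _ hse.length_right_lt _
        (fun mu => .covariant₃ hse (Q.extVanishes_std_costd 1 mu lam) (hM mu)) rfl)

lemma filtered_std_of_extVanishes (M : ModuleCat.{0} S) [Module.Finite S M]
    (hM : ∀ lam, ExtVanishes S 1 M (Q.costd lam)) : Filtered Q.std M := by
  induction hl : Module.length S M using WellFoundedLT.induction generalizing M with
  | ind l ih =>
    subst hl
    rcases subsingleton_or_nontrivial M with hM0 | hM0
    · exact .zero M hM0
    obtain ⟨lam, ⟨φ, hφ⟩, hmin⟩ := Q.exists_minimal_hom_costd M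
    obtain ⟨k, hk⟩ := exists_surjective_std_of_extVanishes hM hφ hmin
    have hse := IsShortExact.of_surjective hk
    exact .extend (A := ModuleCat.of S (LinearMap.ker k)) lam _ k hse
      (ih _ hse.length_left_lt _
        (fun mu => .contravariant₁ hse (Q.extVanishes_std_costd 1 lam mu) (hM mu)) rfl)

lemma filtered_costd_iff [Module.Finite S M] :
    Filtered Q.costd M ↔ ∀ lam, ExtVanishes S 1 (Q.std lam) M :=
  ⟨fun h lam => (Filtered.of_section lam).extVanishes h 0, filtered_costd_of_extVanishes M⟩

lemma filtered_std_iff [Module.Finite S M] :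
    Filtered Q.std M ↔ ∀ lam, ExtVanishes S 1 M (Q.costd lam) :=
  ⟨fun h lam => h.extVanishes (.of_section lam) 0, filtered_std_of_extVanishes M⟩

end QHData

section FiniteGlobalDimension

variable [IsArtinianRing S]

lemma exists_nat_forall_of_forall_exists {α : Type} [Finite α] {p : α → ℕ → Prop}
    (h : ∀ a, ∃ n, ∀ i ≥ n, p a i) : ∃ n, ∀ a, ∀ i ≥ n, p a i := by
  have := Fintype.ofFinite α
  choose n hn using h
  exact ⟨Finset.univ.sup n, fun a i hi => hn a i ((Finset.le_sup (Finset.mem_univ a)).trans hi)⟩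

lemma QHData.exists_forall_extVanishes_std (Q : QHData S Λ) :
    ∃ n, ∀ lam, ∀ i ≥ n, ∀ Y : ModuleCat.{0} S, ExtVanishes S i (Q.std lam) Y := by
  refine exists_nat_forall_of_forall_exists fun lam => ?_
  induction lam using WellFoundedGT.induction with
  | ind lam ih =>
    obtain ⟨n, hn⟩ := exists_nat_forall_of_forall_exists fun nu : {nu // lam < nu} => ih nu nu.2
    refine ⟨n + 1, fun i hi Y => ?_⟩
    obtain ⟨i, rfl⟩ := Nat.exists_eq_add_one_of_ne_zero (by lia : i ≠ 0)
    obtain ⟨Om, f, p, hse, hOm⟩ := Q.exists_isShortExact_P_std lam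
    exact .contravariant₃ hse (hOm.extVanishes_left fun nu => hn nu i (by lia) Y)
      (.of_projective i)

lemma QHData.exists_forall_extVanishes_L (Q : QHData S Λ) :
    ∃ n, ∀ lam, ∀ i ≥ n, ∀ Y : ModuleCat.{0} S, ExtVanishes S i (Q.L lam) Y := by
  obtain ⟨m, hm⟩ := Q.exists_forall_extVanishes_std
  refine exists_nat_forall_of_forall_exists fun lam => ?_
  induction lam using WellFoundedLT.induction with
  | ind lam ih =>
    obtain ⟨n, hn⟩ := exists_nat_forall_of_forall_exists fun nu : {nu // nu < lam} => ih nu nu.2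
    refine ⟨n + 1 + m, fun i hi Y => ?_⟩
    obtain ⟨i, rfl⟩ := Nat.exists_eq_add_one_of_ne_zero (by lia : i ≠ 0)
    obtain ⟨R, f, p, hse, hR⟩ := Q.exists_isShortExact_std_L lam
    have := hse.finite_left
    exact .contravariant₃ hse ((Q.filtered_L R).extVanishes_left fun nu =>
      hn ⟨nu, hR nu nu.2⟩ i (by lia) Y) (hm lam _ (by lia) Y)

lemma QHData.exists_forall_extVanishes (Q : QHData S Λ) :
    ∃ n, ∀ i ≥ n, ∀ X Y : ModuleCat.{0} S, Module.Finite S X → ExtVanishes S i X Y := by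
  obtain ⟨n, hn⟩ := Q.exists_forall_extVanishes_L
  exact ⟨n, fun i hi X Y _ => (Q.filtered_L X).extVanishes_left fun nu => hn nu i hi Y⟩

end FiniteGlobalDimension

end QuasiHereditary

section Resolutions

variable {S : Type} [Ring S] {X Y : Type} [AddCommGroup X] [Module S X] [AddCommGroup Y]
  [Module S Y] {d : ℕ}

/-- The objects of the Yoneda splice of `0 → A → B → N 0 → 0` with
`0 → N 0 → N 1 → ⋯ → N (d + 1) → 0`: the head `N 0` is replaced by `A, B`. -/
def spliceObj (A B : ModuleCat.{0} S) (N : Fin (d + 2) → ModuleCat.{0} S) :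
    Fin (d + 3) → ModuleCat.{0} S
  | ⟨0, _⟩ => A
  | ⟨1, _⟩ => B
  | ⟨n + 2, _⟩ => N ⟨n + 1, by lia⟩

variable {A B : ModuleCat.{0} S} {N : Fin (d + 2) → ModuleCat.{0} S}
  {f : ∀ i : Fin (d + 1), N i.castSucc →ₗ[S] N i.succ}

/-- The maps of the Yoneda splice whose objects are given by `spliceObj`. -/
def spliceMap (f : ∀ i : Fin (d + 1), N i.castSucc →ₗ[S] N i.succ) (a : A →ₗ[S] B)
    (b : B →ₗ[S] N 0) :
    ∀ i : Fin (d + 2), spliceObj A B N i.castSucc →ₗ[S] spliceObj A B N i.succ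
  | ⟨0, _⟩ => a
  | ⟨1, _⟩ => f 0 ∘ₗ b
  | ⟨n + 2, _⟩ => f ⟨n + 1, by lia⟩

namespace IsExactSeq

lemma splice (hf : IsExactSeq S d N f) {a : A →ₗ[S] B} {b : B →ₗ[S] N 0}
    (hab : IsShortExact a b) :
    IsExactSeq S (d + 1) (spliceObj A B N) (spliceMap f a b) := by
  obtain ⟨hinj, hsurj, hex⟩ := hf
  refine ⟨hab.injective, ?_, ?_⟩
  · cases d with
    | zero => exact hsurj.comp hab.surjective
    | succ d => exact hsurj
  · rintro ⟨i, hi⟩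
    match i, hi with
    | 0, hi =>
      change LinearMap.range a = LinearMap.ker (f 0 ∘ₗ b)
      exact hab.exact.linearMap_ker_eq.symm.trans
        (LinearMap.ker_comp_of_ker_eq_bot b (LinearMap.ker_eq_bot.2 hinj)).symm
    | 1, hi =>
      cases d with
      | zero => lia
      | succ d =>
        exact (LinearMap.range_comp_of_range_eq_top (f 0)
          (LinearMap.range_eq_top.2 hab.surjective)).trans (hex 0)
    | n + 2, hi => exact hex ⟨n + 1, by lia⟩

lemma refl (M : ModuleCat.{0} S) : IsExactSeq S 0 (fun _ => M) (fun _ => LinearMap.id) :=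
  ⟨Function.injective_id, Function.surjective_id, fun i => i.elim0⟩

lemma isShortExact (hf : IsExactSeq S d N f) (i : Fin d) :
    IsShortExact (LinearMap.range (f i.castSucc)).subtype (f i.succ).rangeRestrict := by
  refine ⟨Submodule.injective_subtype _, LinearMap.surjective_rangeRestrict _, ?_⟩
  rw [LinearMap.exact_iff, LinearMap.ker_rangeRestrict, Submodule.range_subtype]
  exact (hf.2.2 i).symm

lemma extVanishes_head (hf : IsExactSeq S d N f)
    (h : ∀ i : Fin (d + 1), ∀ n, ExtVanishes S (n + 1) X (N i.succ)) (n : ℕ) :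
    ExtVanishes S (n + d + 1) X (N 0) := by
  have hrange (i : Fin (d + 1)) : ExtVanishes S (n + (d - i) + 1) X (LinearMap.range (f i)) := by
    induction i using Fin.reverseInduction with
    | last =>
      rw [LinearMap.range_eq_top.2 hf.2.1]
      exact .congr_right Submodule.topEquiv (h _ _)
    | cast i ih =>
      have hshift : n + (d - (i.castSucc : Fin (d + 1)).val) + 1 =
          (n + (d - i.succ.val) + 1) + 1 := by
        simp only [Fin.val_castSucc, Fin.val_succ]
        lia
      rw [hshift]
      exact .covariant₁ (hf.isShortExact i) ih (h i.castSucc _)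
  exact .congr_right (LinearEquiv.ofInjective (f 0) hf.1) (hrange 0)

lemma extVanishes_last (hf : IsExactSeq S d N f)
    (h : ∀ i : Fin (d + 1), ∀ n, ExtVanishes S (n + 1) (N i.castSucc) Y) (n : ℕ) :
    ExtVanishes S (n + d + 1) (N (Fin.last (d + 1))) Y := by
  have hrange (i : Fin (d + 1)) : ExtVanishes S (n + i + 1) (LinearMap.range (f i)) Y := by
    induction i using Fin.induction with
    | zero => exact .congr_left (LinearEquiv.ofInjective (f 0) hf.1).symm (h 0 _)
    | succ i ih => exact .contravariant₃ (hf.isShortExact i) ih (h i.succ _)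
  have hlast := hrange (Fin.last d)
  rw [LinearMap.range_eq_top.2 hf.2.1] at hlast
  exact hlast.congr_left Submodule.topEquiv.symm

end IsExactSeq

end Resolutions

section FiltrationDimension

variable {S : Type} [Ring S] {Λ : Type} [Fintype Λ] [PartialOrder Λ] {Q : QHData S Λ}
  {M : ModuleCat.{0} S} {d : ℕ}

lemma QHData.filtered_std_of_projective [IsFiniteDimensionalAlgebra S] [Module.Finite S M]
    [Module.Projective S M] : Filtered Q.std M :=
  filtered_std_iff.2 fun _ => .of_projective 0

lemma QHData.filtered_costd_of_injective [IsFiniteDimensionalAlgebra S] [Module.Finite S M]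
    [hM : Module.Injective S M] : Filtered Q.costd M :=
  filtered_costd_iff.2 fun _ => .of_injective hM 0

lemma GfdLE.of_isShortExact {E C : ModuleCat.{0} S} {a : M →ₗ[S] E} {b : E →ₗ[S] C}
    (hab : IsShortExact a b) (hE : Filtered Q.costd E) (hC : GfdLE S Q C d) :
    GfdLE S Q M (d + 1) := by
  obtain ⟨N, f, hf, rfl, hN⟩ := hC
  refine ⟨_, _, hf.splice hab, rfl, ?_⟩
  rintro ⟨i, hi⟩
  match i, hi with
  | 0, hi => exact inCostdFilt_iff_filtered.2 hE
  | n + 1, hi => exact hN ⟨n, by lia⟩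

variable [IsFiniteDimensionalAlgebra S]

lemma gfdLE_iff [Module.Finite S M] :
    GfdLE S Q M d ↔ ∀ i > d, ∀ lam, ExtVanishes S i (Q.std lam) M := by
  constructor
  · rintro ⟨N, f, hf, rfl, hN⟩ i hi lam
    obtain ⟨n, rfl⟩ := Nat.exists_eq_add_of_lt hi
    rw [add_comm d n]
    exact hf.extVanishes_head
      (fun j => (Filtered.of_section lam).extVanishes (inCostdFilt_iff_filtered.1 (hN j))) n
  · intro h
    induction d generalizing M with
    | zero =>
      exact ⟨_, _, .refl M, rfl, fun _ =>
        inCostdFilt_iff_filtered.2 (QHData.filtered_costd_iff.2 (h 1 one_pos))⟩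
    | succ d ih =>
      obtain ⟨E, j, _, hE, hj⟩ := exists_finite_injective M
      have hse := IsShortExact.of_injective hj
      have : Module.Finite S (ModuleCat.of S (E ⧸ LinearMap.range j)) := hse.finite_right
      refine .of_isShortExact (C := ModuleCat.of S (E ⧸ LinearMap.range j)) hse
        QHData.filtered_costd_of_injective (ih fun i hi lam => ?_)
      obtain ⟨i, rfl⟩ := Nat.exists_eq_add_one_of_ne_zero hi.ne_bot
      exact .covariant₃ hse (h _ (Nat.succ_lt_succ hi) lam) (.of_injective hE i)

lemma exists_isExactSeq_extVanishes (Q : QHData S Λ) (d : ℕ) (M : ModuleCat.{0} S)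
    [Module.Finite S M] :
    ∃ (N : Fin (d + 2) → ModuleCat.{0} S) (f : ∀ i : Fin (d + 1), N i.castSucc →ₗ[S] N i.succ),
      IsExactSeq S d N f ∧ N (Fin.last (d + 1)) = M ∧ Module.Finite S (N 0) ∧
      (∀ i : Fin d, Filtered Q.std (N i.succ.castSucc)) ∧
      ∀ n lam, ExtVanishes S (n + d + 1) M (Q.costd lam) →
        ExtVanishes S (n + 1) (N 0) (Q.costd lam) := by
  induction d with
  | zero => exact ⟨_, _, .refl M, rfl, ‹_›, fun i => i.elim0, fun n lam h => h⟩
  | succ d ih =>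
    obtain ⟨N, f, hf, rfl, _, hN, hExt⟩ := ih
    obtain ⟨m, p, hp⟩ := Module.Finite.exists_fin' S (N 0)
    have hse := IsShortExact.of_surjective hp
    have : Module.Finite S (ModuleCat.of S (Fin m → S)) :=
      inferInstanceAs (Module.Finite S (Fin m → S))
    have : Module.Projective S (ModuleCat.of S (Fin m → S)) :=
      inferInstanceAs (Module.Projective S (Fin m → S))
    refine ⟨_, _, hf.splice (A := ModuleCat.of S (LinearMap.ker p))
      (B := ModuleCat.of S (Fin m → S)) hse, rfl, hse.finite_left, ?_, fun n lam h => ?_⟩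
    · rintro ⟨i, hi⟩
      match i, hi with
      | 0, _ => exact QHData.filtered_std_of_projective (M := ModuleCat.of S (Fin m → S))
      | n + 1, hi => exact hN ⟨n, by lia⟩
    · refine .contravariant₁ hse (hExt (n + 1) lam ?_) (.of_projective n)
      rwa [add_right_comm n 1 d]

lemma wfdLE_iff [Module.Finite S M] :
    WfdLE S Q M d ↔ ∀ i > d, ∀ lam, ExtVanishes S i M (Q.costd lam) := by
  constructor
  · rintro ⟨N, f, hf, rfl, hN⟩ i hi lam
    obtain ⟨n, rfl⟩ := Nat.exists_eq_add_of_lt hi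
    rw [add_comm d n]
    exact hf.extVanishes_last
      (fun j => (inStdFilt_iff_filtered.1 (hN j)).extVanishes (Filtered.of_section lam)) n
  · intro h
    obtain ⟨N, f, hf, hM, hfin, hN, hExt⟩ := exists_isExactSeq_extVanishes Q d M
    have : Module.Finite S (N (Fin.castSucc 0)) := hfin
    refine ⟨N, f, hf, hM, fun i => inStdFilt_iff_filtered.2 ?_⟩
    induction i using Fin.cases with
    | zero => exact QHData.filtered_std_iff.2 fun lam => hExt 0 lam (h _ (by lia) lam)
    | succ i => exact hN i

lemma gfd_le_iff [Module.Finite S M] :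
    gfd S Q M ≤ d ↔ ∀ i > d, ∀ lam, ExtVanishes S i (Q.std lam) M := by
  refine ⟨fun h i hi => ?_, fun h => Nat.sInf_le (gfdLE_iff.2 h)⟩
  obtain ⟨n, hn⟩ := Q.exists_forall_extVanishes
  have hne : {d | GfdLE S Q M d}.Nonempty :=
    ⟨n, gfdLE_iff.2 fun i hi lam => hn i hi.le _ _ inferInstance⟩
  exact gfdLE_iff.1 (Nat.sInf_mem hne) i (h.trans_lt hi)

lemma wfd_le_iff [Module.Finite S M] :
    wfd S Q M ≤ d ↔ ∀ i > d, ∀ lam, ExtVanishes S i M (Q.costd lam) := by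
  refine ⟨fun h i hi => ?_, fun h => Nat.sInf_le (wfdLE_iff.2 h)⟩
  obtain ⟨n, hn⟩ := Q.exists_forall_extVanishes
  have hne : {d | WfdLE S Q M d}.Nonempty :=
    ⟨n, wfdLE_iff.2 fun i hi lam => hn i hi.le _ _ inferInstance⟩
  exact wfdLE_iff.1 (Nat.sInf_mem hne) i (h.trans_lt hi)

lemma gfdAlg_le_iff : gfdAlg S Q ≤ d ↔
    ∀ i > d, ∀ lam, ∀ M : ModuleCat.{0} S, Module.Finite S M → ExtVanishes S i (Q.std lam) M := by
  obtain ⟨n, hn⟩ := Q.exists_forall_extVanishes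
  have hbdd : BddAbove {d | ∃ M : ModuleCat.{0} S, Module.Finite S M ∧ gfd S Q M = d} := by
    refine ⟨n, ?_⟩
    rintro _ ⟨M, _, rfl⟩
    exact gfd_le_iff.2 fun i hi lam => hn i hi.le _ _ inferInstance
  rw [gfdAlg, csSup_le_iff' hbdd]
  constructor
  · exact fun h i hi lam M _ => gfd_le_iff.1 (h _ ⟨M, ‹_›, rfl⟩) i hi lam
  · rintro h _ ⟨M, hM, rfl⟩
    exact gfd_le_iff.2 fun i hi lam => h i hi lam M hM

lemma wfdAlg_le_iff : wfdAlg S Q ≤ d ↔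
    ∀ i > d, ∀ lam, ∀ M : ModuleCat.{0} S, Module.Finite S M →
      ExtVanishes S i M (Q.costd lam) := by
  obtain ⟨n, hn⟩ := Q.exists_forall_extVanishes
  have hbdd : BddAbove {d | ∃ M : ModuleCat.{0} S, Module.Finite S M ∧ wfd S Q M = d} := by
    refine ⟨n, ?_⟩
    rintro _ ⟨M, hM, rfl⟩
    exact wfd_le_iff.2 fun i hi lam => hn i hi.le _ _ hM
  rw [wfdAlg, csSup_le_iff' hbdd]
  constructor
  · exact fun h i hi lam M _ => wfd_le_iff.1 (h _ ⟨M, ‹_›, rfl⟩) i hi lam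
  · rintro h _ ⟨M, hM, rfl⟩
    exact wfd_le_iff.2 fun i hi lam => h i hi lam M hM

lemma QHData.extVanishes_of_self_right (Q : QHData S Λ) {X : ModuleCat.{0} S} [Module.Finite S X]
    (h : ∀ i > d, ExtVanishes S i X S) {i : ℕ} (hi : d < i) (M : ModuleCat.{0} S)
    [Module.Finite S M] : ExtVanishes S i X M := by
  obtain ⟨n, hn⟩ := Q.exists_forall_extVanishes
  obtain ⟨k, hk⟩ : ∃ k, n ≤ i + k := ⟨n, Nat.le_add_left n i⟩
  induction k generalizing i M with
  | zero => exact hn i hk X M ‹_›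
  | succ k ih =>
    obtain ⟨m, p, hp⟩ := Module.Finite.exists_fin' S M
    have hse := IsShortExact.of_surjective hp
    have : Module.Finite S (ModuleCat.of S (LinearMap.ker p)) := hse.finite_left
    exact .covariant₃ hse (ih (by lia) (ModuleCat.of S (LinearMap.ker p)) (by lia))
      ((h i hi).pi_right m)

lemma QHData.extVanishes_of_costd_left (Q : QHData S Λ) {Y : ModuleCat.{0} S}
    (h : ∀ i > d, ∀ lam, ExtVanishes S i (Q.costd lam) Y) {i : ℕ} (hi : d < i)
    (M : ModuleCat.{0} S) [Module.Finite S M] : ExtVanishes S i M Y := by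
  obtain ⟨n, hn⟩ := Q.exists_forall_extVanishes
  obtain ⟨k, hk⟩ : ∃ k, n ≤ i + k := ⟨n, Nat.le_add_left n i⟩
  induction k generalizing i M with
  | zero => exact hn i hk M Y ‹_›
  | succ k ih =>
    obtain ⟨E, j, _, hE, hj⟩ := exists_finite_injective M
    have hse := IsShortExact.of_injective hj
    have : Module.Finite S (ModuleCat.of S (E ⧸ LinearMap.range j)) := hse.finite_right
    exact .contravariant₁ hse
      (ih (by lia) (ModuleCat.of S (E ⧸ LinearMap.range j)) (by lia))
      (filtered_costd_of_injective.extVanishes_left (h i hi))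

lemma gfdAlg_le_iff_self : gfdAlg S Q ≤ d ↔ ∀ i > d, ∀ lam, ExtVanishes S i (Q.std lam) S := by
  rw [gfdAlg_le_iff]
  exact ⟨fun h i hi lam => h i hi lam (ModuleCat.of S S) (inferInstanceAs (Module.Finite S S)),
    fun h i hi lam M _ => Q.extVanishes_of_self_right (fun i hi => h i hi lam) hi M⟩

lemma gfdAlg_le_iff_std :
    gfdAlg S Q ≤ d ↔ ∀ i > d, ∀ lam mu, ExtVanishes S i (Q.std lam) (Q.std mu) := by
  refine ⟨fun h i hi lam mu => gfdAlg_le_iff.1 h i hi lam _ inferInstance,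
    fun h => gfdAlg_le_iff_self.2 fun i hi lam => ?_⟩
  have : Module.Finite S (ModuleCat.of S S) := inferInstanceAs (Module.Finite S S)
  have : Module.Projective S (ModuleCat.of S S) := inferInstanceAs (Module.Projective S S)
  exact (QHData.filtered_std_of_projective (M := ModuleCat.of S S)).extVanishes_right (h i hi lam)

lemma wfdAlg_le_iff_costd :
    wfdAlg S Q ≤ d ↔ ∀ i > d, ∀ lam mu, ExtVanishes S i (Q.costd lam) (Q.costd mu) :=
  wfdAlg_le_iff.trans
    ⟨fun h i hi _ mu => h i hi mu _ inferInstance,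
      fun h _ hi mu M _ => Q.extVanishes_of_costd_left (fun i hi lam => h i hi lam mu) hi M⟩

end FiltrationDimension

section Tilting

lemma IsShortExact.exists_comp {R : Type u} {M N D X C : Type u} [Ring R] [AddCommGroup M]
    [Module R M] [AddCommGroup N] [Module R N] [AddCommGroup D] [Module R D] [AddCommGroup X]
    [Module R X] [AddCommGroup C] [Module R C] {a : M →ₗ[R] N} {q : N →ₗ[R] D} {i : N →ₗ[R] X}
    {p : X →ₗ[R] C} (h : IsShortExact a q) (h' : IsShortExact i p) :
    ∃ (Z : ModuleCat.{u} R) (r : X →ₗ[R] Z) (v : D →ₗ[R] Z) (w : Z →ₗ[R] C),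
      IsShortExact (i ∘ₗ a) r ∧ IsShortExact v w := by
  obtain ⟨Z, r, v, hpush⟩ := exists_isPushoutSquare i q
  obtain ⟨w, hvw, -⟩ := hpush.exists_isShortExact h'
  refine ⟨Z, r, v, w, ⟨h'.injective.comp h.injective, fun z => ?_, fun x => ⟨fun hx => ?_, ?_⟩⟩,
    hvw⟩
  · obtain ⟨d, x, rfl⟩ := hpush.exists_eq_add z
    obtain ⟨n, rfl⟩ := h.surjective d
    exact ⟨i n + x, by rw [map_add, hpush.comm_apply]⟩
  · obtain ⟨n, hn, rfl⟩ := hpush.exists_of_eq ((map_zero v).trans hx.symm)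
    obtain ⟨m, rfl⟩ := (h.exact n).1 hn
    exact ⟨m, rfl⟩
  · rintro ⟨m, rfl⟩
    rw [LinearMap.comp_apply, hpush.comm_apply, h.exact.apply_apply_eq_zero, map_zero]

namespace IsShortExact

variable {R A B C M N Z : Type*} [Ring R] [AddCommGroup A] [Module R A] [AddCommGroup B]
  [Module R B] [AddCommGroup C] [Module R C] [AddCommGroup M] [Module R M] [AddCommGroup N]
  [Module R N] [AddCommGroup Z] [Module R Z] {f : A →ₗ[R] B} {g : B →ₗ[R] C} {d : C →ₗ[R] N}
  {k : B →ₗ[R] M}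

lemma injective_prod (h : IsShortExact f g) (hd : Function.Injective d)
    (hk : Function.Injective (k ∘ₗ f)) : Function.Injective ((d ∘ₗ g).prod k) := by
  rw [← LinearMap.ker_eq_bot, LinearMap.ker_eq_bot']
  intro b hb
  obtain ⟨hdb, hkb⟩ := Prod.ext_iff.1 hb
  obtain ⟨a, rfl⟩ := (h.exact b).1 (hd (hdb.trans (map_zero d).symm))
  rw [hk (hkb.trans (map_zero (k ∘ₗ f)).symm), map_zero]

lemma exists_extension_prod (h : IsShortExact f g)
    (hd : ∀ φ : C →ₗ[R] Z, ∃ ψ : N →ₗ[R] Z, ψ ∘ₗ d = φ)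
    (hk : ∀ φ : A →ₗ[R] Z, ∃ ψ : M →ₗ[R] Z, ψ ∘ₗ k ∘ₗ f = φ) (φ : B →ₗ[R] Z) :
    ∃ ψ : N × M →ₗ[R] Z, ψ ∘ₗ (d ∘ₗ g).prod k = φ := by
  obtain ⟨α, hα⟩ := hk (φ ∘ₗ f)
  obtain ⟨δ, hδ⟩ := h.exists_comp_right_eq (φ - α ∘ₗ k) (by
    rw [LinearMap.sub_comp, LinearMap.comp_assoc, hα, sub_self])
  obtain ⟨β, rfl⟩ := hd δ
  refine ⟨β.coprod α, ?_⟩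
  rw [LinearMap.coprod_comp_prod, ← LinearMap.comp_assoc, hδ, sub_add_cancel]

end IsShortExact

variable {S : Type} [Ring S] {Λ : Type} [Fintype Λ] [PartialOrder Λ] {Q : QHData S Λ}
  {lam mu : Λ}

lemma Filtered.exists_isWeight {ι : Type} {D : ι → ModuleCat.{0} S} {M : ModuleCat.{0} S}
    (hM : Filtered D M) (h : Q.IsWeight M mu) : ∃ i, Q.IsWeight (D i) mu := by
  obtain ⟨φ, hφ⟩ := h
  by_contra! hD
  exact hφ (hM.hom_right_eq_zero (fun i ψ => by_contra fun hψ => hD i ⟨ψ, hψ⟩) φ)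

/-- The module `Tⁿ` as an object of `ModuleCat S`, so that `Hom(T, Tⁿ)` is a module over the Ringel
dual of `S`. -/
def finPow (T : ModuleCat.{0} S) (n : ℕ) : ModuleCat.{0} S := ModuleCat.of S (Fin n → T)

instance (T : ModuleCat.{0} S) (n : ℕ) [Module.Finite S T] : Module.Finite S (finPow T n) :=
  inferInstanceAs (Module.Finite S (Fin n → T))

/-- `j` embeds `Δ(lam)` into the tilting module `A`, with the properties of the canonical
embedding of `Δ(lam)` into `T(lam)` other than the indecomposability of `A`. -/
structure IsTiltingEmbedding (Q : QHData S Λ) (A : ModuleCat.{0} S) (j : Q.std lam →ₗ[S] A) :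
    Prop where
  filtered_std : Filtered Q.std A
  filtered_costd : Filtered Q.costd A
  injective : Function.Injective j
  exists_extension : ∀ mu (φ : Q.std lam →ₗ[S] Q.costd mu), ∃ ψ : A →ₗ[S] Q.costd mu, ψ ∘ₗ j = φ
  lt_of_isWeight : ∀ mu, Q.IsWeight (A ⧸ LinearMap.range j) mu → mu < lam

lemma IsTiltingEmbedding.eq_or_lt_of_isWeight {A : ModuleCat.{0} S} {j : Q.std lam →ₗ[S] A}
    (h : IsTiltingEmbedding Q A j) (hmu : Q.IsWeight A mu) : mu = lam ∨ mu < lam := by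
  rcases hmu.of_isShortExact (IsShortExact.of_injective h.injective) with hstd | hquot
  · exact hstd.le_of_std.eq_or_lt
  · exact .inr (h.lt_of_isWeight mu hquot)

lemma IsFullTilting.filtered_std {T : ModuleCat.{0} S} (hT : IsFullTilting S Q T) :
    Filtered Q.std T :=
  inStdFilt_iff_filtered.1 hT.1.1

lemma IsFullTilting.filtered_costd {T : ModuleCat.{0} S} (hT : IsFullTilting S Q T) :
    Filtered Q.costd T :=
  inCostdFilt_iff_filtered.1 hT.1.2

variable [IsFiniteDimensionalAlgebra S] {M N : ModuleCat.{0} S} {i : M →ₗ[S] N} {r : N →ₗ[S] M}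

lemma Filtered.costd_of_retract (hN : Filtered Q.costd N) (hri : r ∘ₗ i = LinearMap.id) :
    Filtered Q.costd M := by
  have := hN.finite fun _ => inferInstance
  have : Module.Finite S M := .of_surjective r (LinearMap.surjective_of_comp_eq_id i r hri)
  exact QHData.filtered_costd_iff.2 fun lam =>
    .retract_right i r hri (QHData.filtered_costd_iff.1 hN lam)

lemma Filtered.std_of_retract (hN : Filtered Q.std N) (hri : r ∘ₗ i = LinearMap.id) :
    Filtered Q.std M := by
  have := hN.finite fun _ => inferInstance
  have : Module.Finite S M := .of_surjective r (LinearMap.surjective_of_comp_eq_id i r hri)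
  exact QHData.filtered_std_iff.2 fun lam =>
    .retract_left i r hri (QHData.filtered_std_iff.1 hN lam)

namespace QHData

-- Split off a maximal `lam ∈ s` by a universal extension of `M` by copies of `Δ(lam)`.
lemma exists_isShortExact_costd_of_lowerClosed (Q : QHData S Λ) (s : Finset Λ)
    (hs : ∀ a ∈ s, ∀ b ≤ a, b ∈ s) (M : ModuleCat.{0} S) [Module.Finite S M]
    (hM : ∀ mu ∉ s, ExtVanishes S 1 (Q.std mu) M) :
    ∃ (K C : ModuleCat.{0} S) (i : M →ₗ[S] K) (q : K →ₗ[S] C), IsShortExact i q ∧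
      Filtered Q.costd K ∧ Filtered (fun mu : {mu // mu ∈ s} => Q.std mu) C := by
  classical
  induction s using Finset.strongInduction generalizing M with
  | H s ih =>
  rcases s.eq_empty_or_nonempty with rfl | hne
  · have : Subsingleton (ModuleCat.of S PUnit) := inferInstanceAs (Subsingleton PUnit)
    exact ⟨M, ModuleCat.of S PUnit, _, _, .of_linearEquiv (LinearEquiv.refl S M),
      filtered_costd_iff.2 fun mu => hM mu (Finset.notMem_empty mu), .zero _ this⟩
  obtain ⟨lam, hlam, hmax⟩ := s.exists_maximal hne
  obtain ⟨m, N, a, q, haq, hN⟩ := exists_isShortExact_extVanishes_one (Q.std lam) M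
    (extVanishes_std_of_isWeight fun mu hmu => hmu.le_of_std.not_gt)
  have : Module.Finite S N := haq.finite
  have hNs (mu : Λ) (hmu : mu ∉ s.erase lam) : ExtVanishes S 1 (Q.std mu) N := by
    by_cases hml : mu = lam
    · exact hml ▸ hN
    have hmus : mu ∉ s := fun h => hmu (Finset.mem_erase.2 ⟨hml, h⟩)
    have hstd : ExtVanishes S 1 (Q.std mu) (Q.std lam) :=
      extVanishes_std_of_isWeight fun nu hnu hlt =>
        hmus (hs lam hlam mu (hlt.le.trans hnu.le_of_std))
    exact .covariant₂ haq (hM mu hmus) (hstd.pi_right m)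
  have hserase : ∀ x ∈ s.erase lam, ∀ b ≤ x, b ∈ s.erase lam := by
    intro x hx b hb
    obtain ⟨hxl, hxs⟩ := Finset.mem_erase.1 hx
    refine Finset.mem_erase.2 ⟨?_, hs x hxs b hb⟩
    rintro rfl
    exact hxl (le_antisymm (hmax hxs hb) hb)
  obtain ⟨K, C, i, r, hir, hK, hC⟩ := ih _ (Finset.erase_ssubset hlam) hserase N hNs
  obtain ⟨Z, r', v, w, hr', hvw⟩ := haq.exists_comp hir
  let D (mu : {mu // mu ∈ s}) := Q.std mu
  exact ⟨K, Z, i ∘ₗ a, r', hr', hK,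
    .of_isShortExact (A := ModuleCat.of S (Fin m → Q.std lam)) hvw
      ((Filtered.of_section (D := D) ⟨lam, hlam⟩).pi m)
      (hC.mono fun mu => .of_section (D := D) ⟨mu, Finset.mem_of_mem_erase mu.2⟩)⟩

lemma exists_isShortExact_costd_std (Q : QHData S Λ) (M : ModuleCat.{0} S) [Module.Finite S M] :
    ∃ (K C : ModuleCat.{0} S) (i : M →ₗ[S] K) (q : K →ₗ[S] C), IsShortExact i q ∧
      Filtered Q.costd K ∧ Filtered Q.std C := by
  obtain ⟨K, C, i, q, hse, hK, hC⟩ := Q.exists_isShortExact_costd_of_lowerClosed Finset.univ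
    (fun _ _ b _ => Finset.mem_univ b) M fun mu hmu => absurd (Finset.mem_univ mu) hmu
  exact ⟨K, C, i, q, hse, hK, hC.mono fun mu => .of_section mu.1⟩

end QHData

namespace IsTiltingEmbedding

variable {A B : ModuleCat.{0} S} {j : Q.std lam →ₗ[S] A}

lemma of_retract (h : IsTiltingEmbedding Q A j) {i : B →ₗ[S] A} {r : A →ₗ[S] B}
    (hri : r ∘ₗ i = LinearMap.id) {j' : Q.std lam →ₗ[S] B} (hj' : i ∘ₗ j' = j) :
    IsTiltingEmbedding Q B j' where
  filtered_std := h.filtered_std.std_of_retract hri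
  filtered_costd := h.filtered_costd.costd_of_retract hri
  injective := .of_comp (f := i) (by rw [← LinearMap.coe_comp, hj']; exact h.injective)
  exists_extension mu φ := by
    obtain ⟨ψ, hψ⟩ := h.exists_extension mu φ
    exact ⟨ψ ∘ₗ i, by rw [LinearMap.comp_assoc, hj', hψ]⟩
  lt_of_isWeight mu hmu := by
    have hrj : r ∘ₗ j = j' := by rw [← hj', ← LinearMap.comp_assoc, hri, LinearMap.id_comp]
    have hle : LinearMap.range j ≤ (LinearMap.range j').comap r := by
      rintro _ ⟨x, rfl⟩
      exact ⟨x, LinearMap.congr_fun hrj.symm x⟩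
    refine h.lt_of_isWeight mu (hmu.of_surjective (g := Submodule.mapQ _ _ r hle) fun y => ?_)
    obtain ⟨b, rfl⟩ := Submodule.mkQ_surjective _ y
    exact ⟨Submodule.Quotient.mk (i b), congrArg _ (LinearMap.congr_fun hri b)⟩

lemma mult_eq_one (h : IsTiltingEmbedding Q A j) : Q.mult A lam = 1 := by
  have hquot : Q.mult (ModuleCat.of S (A ⧸ LinearMap.range j)) lam = 0 :=
    QHData.mult_eq_zero_iff.2 fun hlam => lt_irrefl lam (h.lt_of_isWeight lam hlam)
  rw [QHData.mult_eq_add (C := ModuleCat.of S (A ⧸ LinearMap.range j))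
    (IsShortExact.of_injective h.injective), QHData.mult_std, hquot, add_zero]

lemma exists_of_isCompl (h : IsTiltingEmbedding Q A j) {U V : Submodule S A} (hUV : IsCompl U V)
    (hV : ¬ Q.IsWeight V lam) :
    ∃ j' : Q.std lam →ₗ[S] U, IsTiltingEmbedding Q (ModuleCat.of S U) j' := by
  have hVj : V.projectionOnto U hUV.symm ∘ₗ j = 0 :=
    by_contra fun hne => hV (QHData.isWeight_of_ne_zero hne)
  have hjU (x : Q.std lam) : j x ∈ U :=
    (Submodule.projectionOnto_apply_eq_zero_iff hUV.symm).1 (LinearMap.congr_fun hVj x)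
  exact ⟨j.codRestrict U hjU, h.of_retract (B := ModuleCat.of S U) (i := U.subtype)
    (r := U.projectionOnto V hUV)
    (LinearMap.ext fun u => Submodule.projectionOnto_apply_left hUV u) rfl⟩

end IsTiltingEmbedding

namespace QHData

lemma exists_isTiltingEmbedding (Q : QHData S Λ) (lam : Λ) :
    ∃ (A : ModuleCat.{0} S) (j : Q.std lam →ₗ[S] A), IsTiltingEmbedding Q A j := by
  classical
  obtain ⟨A, C, j, q, hse, hA, hC⟩ := Q.exists_isShortExact_costd_of_lowerClosed
    (Finset.univ.filter (· < lam)) (by simpa using fun a ha b hb => lt_of_le_of_lt hb ha)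
    (Q.std lam) fun mu hmu => extVanishes_std_of_isWeight fun nu hnu hlt =>
      hmu (by simpa using hlt.trans_le hnu.le_of_std)
  have hCstd : Filtered Q.std C := hC.mono fun mu => .of_section mu.1
  refine ⟨A, j, ⟨.of_isShortExact hse (.of_section lam) hCstd, hA, hse.injective, fun mu φ =>
    (hCstd.extVanishes (.of_section mu) 0).exists_extension hse φ, fun mu hmu => ?_⟩⟩
  obtain ⟨nu, hnu⟩ := hC.exists_isWeight (hmu.congr
    (hse.exact.linearEquivOfSurjective hse.surjective))
  exact hnu.le_of_std.trans_lt (Finset.mem_filter.1 nu.2).2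

lemma exists_isIndecTilting (Q : QHData S Λ) (lam : Λ) :
    ∃ (A : ModuleCat.{0} S) (j : Q.std lam →ₗ[S] A),
      IsIndecTilting S Q lam A ∧ IsTiltingEmbedding Q A j := by
  obtain ⟨A, ⟨j, h⟩, hmin⟩ : ∃ A : ModuleCat.{0} S, (∃ j, IsTiltingEmbedding Q (lam := lam) A j) ∧
      ∀ B : ModuleCat.{0} S, (∃ j, IsTiltingEmbedding Q (lam := lam) B j) →
        ¬ Module.length S B < Module.length S A :=
    WellFounded.has_min (InvImage.wf (fun A : ModuleCat.{0} S => Module.length S A) wellFounded_lt)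
      {A | ∃ j, IsTiltingEmbedding Q (lam := lam) A j} (Q.exists_isTiltingEmbedding lam)
  have : Module.Finite S A := h.filtered_std.finite fun _ => inferInstance
  have hbot {U V : Submodule S A} (hUV : IsCompl U V) (hV : ¬ Q.IsWeight V lam) : V = ⊥ := by
    have hse : IsShortExact U.subtype (V.projectionOnto U hUV.symm) :=
      ⟨U.injective_subtype, fun v => ⟨v, Submodule.projectionOnto_apply_left hUV.symm v⟩, by
        rw [LinearMap.exact_iff, Submodule.range_subtype, Submodule.ker_projectionOnto]⟩
    by_contra hne
    have : Nontrivial V := Submodule.nontrivial_iff_ne_bot.2 hne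
    exact hmin (ModuleCat.of S U) (h.exists_of_isCompl hUV hV) hse.length_left_lt
  refine ⟨A, j, ⟨⟨inStdFilt_iff_filtered.2 h.filtered_std, inCostdFilt_iff_filtered.2
    h.filtered_costd⟩, h.injective.nontrivial, fun U V hUV => ?_,
    compFactorMult_iff.2 h.mult_eq_one, fun mu hmu =>
      h.eq_or_lt_of_isWeight ((isCompFactor_iff_isWeight A).1 hmu)⟩, h⟩
  by_cases hV : Q.IsWeight V lam
  · refine .inl (hbot hUV.symm fun hU => ?_)
    exact not_isWeight_right_of_mult_eq_one (A := ModuleCat.of S U) (C := ModuleCat.of S (A ⧸ U))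
      (.subtype_mkQ U) h.mult_eq_one hU (hV.congr (Submodule.quotientEquivOfIsCompl U V hUV).symm)
  · exact .inr (hbot hUV hV)

end QHData

namespace IsFullTilting

variable {T X Y : ModuleCat.{0} S}

lemma exists_injective_of_std (hT : IsFullTilting S Q T) (lam : Λ) :
    ∃ d : Q.std lam →ₗ[S] T, Function.Injective d ∧
      ∀ mu (φ : Q.std lam →ₗ[S] Q.costd mu), ∃ ψ : T →ₗ[S] Q.costd mu, ψ ∘ₗ d = φ := by
  obtain ⟨A, j, hA, hj⟩ := Q.exists_isIndecTilting lam
  obtain ⟨Cc, ⟨e⟩⟩ := hT.2.2 lam A hA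
  refine ⟨e.symm.toLinearMap ∘ₗ LinearMap.inl S A Cc ∘ₗ j,
    e.symm.injective.comp (LinearMap.inl_injective.comp hj.injective), fun mu φ => ?_⟩
  obtain ⟨ψ, rfl⟩ := hj.exists_extension mu φ
  exact ⟨ψ ∘ₗ LinearMap.fst S A Cc ∘ₗ e.toLinearMap, by ext x; simp⟩

lemma exists_injective_pi (hT : IsFullTilting S Q T) (hY : Filtered Q.std Y) :
    ∃ (n : ℕ) (j : Y →ₗ[S] finPow T n), Function.Injective j ∧
      ∀ mu (φ : Y →ₗ[S] Q.costd mu), ∃ ψ : finPow T n →ₗ[S] Q.costd mu, ψ ∘ₗ j = φ := by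
  induction hY with
  | zero M hM =>
    exact ⟨0, 0, fun x y _ => Subsingleton.elim x y, fun mu φ => ⟨0, LinearMap.ext fun x => by
      rw [Subsingleton.elim x 0, map_zero, map_zero]⟩⟩
  | extend lam f g hse _ ih =>
    obtain ⟨n, j, hj, hjext⟩ := ih
    obtain ⟨d, hd, hdext⟩ := hT.exists_injective_of_std lam
    have hstd : ExtVanishes S 1 (Q.std lam) T :=
      (Filtered.of_section lam).extVanishes hT.filtered_costd 0
    obtain ⟨k, rfl⟩ := (hstd.pi_right n).exists_extension hse j
    let e : (T × finPow T n) ≃ₗ[S] finPow T (n + 1) :=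
      Fin.consLinearEquiv S fun _ : Fin (n + 1) => (T : Type)
    refine ⟨n + 1, e.toLinearMap ∘ₗ (d ∘ₗ g).prod k,
      e.injective.comp (hse.injective_prod hd hj), fun mu φ => ?_⟩
    obtain ⟨ψ, hψ⟩ := hse.exists_extension_prod (hdext mu) (hjext mu) φ
    refine ⟨ψ ∘ₗ e.symm.toLinearMap, ?_⟩
    rw [← hψ, LinearMap.comp_assoc, ← LinearMap.comp_assoc _ e.toLinearMap]
    simp

lemma exists_isShortExact_pi_std (hT : IsFullTilting S Q T) (hY : Filtered Q.std Y) :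
    ∃ (n : ℕ) (C : ModuleCat.{0} S) (j : Y →ₗ[S] finPow T n) (q : finPow T n →ₗ[S] C),
      IsShortExact j q ∧ Filtered Q.std C := by
  obtain ⟨n, j, hj, hext⟩ := hT.exists_injective_pi hY
  have hse := IsShortExact.of_injective hj
  have : Module.Finite S T := hT.2.1
  have : Module.Finite S (ModuleCat.of S (finPow T n ⧸ LinearMap.range j)) := hse.finite_right
  refine ⟨n, ModuleCat.of S (finPow T n ⧸ LinearMap.range j), j, _, hse,
    QHData.filtered_std_iff.2 fun mu => .of_exists_extension hse ?_ (hext mu)⟩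
  exact (QHData.filtered_std_iff.1 hT.filtered_std mu).pi_left n

lemma exists_retract_pi (hT : IsFullTilting S Q T) (hY : Filtered Q.std Y)
    (hY' : Filtered Q.costd Y) :
    ∃ (n : ℕ) (i : Y →ₗ[S] finPow T n) (r : finPow T n →ₗ[S] Y), r ∘ₗ i = LinearMap.id := by
  obtain ⟨n, C, j, q, hse, hC⟩ := hT.exists_isShortExact_pi_std hY
  exact ⟨n, j, (hC.extVanishes hY' 0).exists_extension hse LinearMap.id⟩

lemma exists_isShortExact_costd_pi (hT : IsFullTilting S Q T) (hX : Filtered Q.costd X) :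
    ∃ (n : ℕ) (K : ModuleCat.{0} S) (i : K →ₗ[S] finPow T n) (p : finPow T n →ₗ[S] X),
      IsShortExact i p ∧ Filtered Q.costd K := by
  have := hX.finite fun _ => inferInstance
  obtain ⟨m, p₀, hp₀⟩ := Module.Finite.exists_fin' S X
  have hse₀ := IsShortExact.of_surjective hp₀
  have : Module.Finite S (ModuleCat.of S (LinearMap.ker p₀)) := hse₀.finite_left
  obtain ⟨K, C, i, q, hse, hK, hC⟩ :=
    Q.exists_isShortExact_costd_std (ModuleCat.of S (LinearMap.ker p₀))
  -- The pushout `N` is an extension of `X` by `K`, and of `C` by a free module: it is tilting.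
  obtain ⟨N, Φ, ι, hpush⟩ := exists_isPushoutSquare (LinearMap.ker p₀).subtype i
  obtain ⟨b, hιb, -⟩ := hpush.exists_isShortExact hse₀
  obtain ⟨c, hΦc, -⟩ := hpush.symm.exists_isShortExact hse
  have : Module.Finite S (ModuleCat.of S (Fin m → S)) :=
    inferInstanceAs (Module.Finite S (Fin m → S))
  have : Module.Projective S (ModuleCat.of S (Fin m → S)) :=
    inferInstanceAs (Module.Projective S (Fin m → S))
  have hN : Filtered Q.std N := .of_isShortExact (A := ModuleCat.of S (Fin m → S)) hΦc
    QHData.filtered_std_of_projective hC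
  obtain ⟨n, j, r, hrj⟩ := hT.exists_retract_pi hN (.of_isShortExact hιb hK hX)
  have hr : Function.Surjective r := LinearMap.surjective_of_comp_eq_id j r hrj
  have hse' := IsShortExact.of_surjective (g := b ∘ₗ r) (hιb.surjective.comp hr)
  have : Module.Finite S T := hT.2.1
  have : Module.Finite S K := hK.finite fun _ => inferInstance
  have : Module.Finite S (ModuleCat.of S (LinearMap.ker (b ∘ₗ r))) := hse'.finite_left
  refine ⟨n, ModuleCat.of S (LinearMap.ker (b ∘ₗ r)), _, _, hse',
    QHData.filtered_costd_iff.2 fun mu => .of_exists_lift hse' ?_ fun φ => ?_⟩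
  · exact (QHData.filtered_costd_iff.1 hT.filtered_costd mu).pi_right n
  · obtain ⟨ψ, rfl⟩ := (QHData.filtered_costd_iff.1 hK mu).exists_lift hιb φ
    exact ⟨j ∘ₗ ψ, LinearMap.ext fun x => congrArg b (LinearMap.congr_fun hrj (ψ x))⟩

end IsFullTilting

end Tilting

section Duality

variable {S : Type} [Ring S] {Λ : Type} [Fintype Λ] [PartialOrder Λ] {Q : QHData S Λ}
  {A B C M X Y : ModuleCat.{0} S} {lam mu : Λ}

lemma ExtVanishes.one_of_exists_retraction [Module.Finite S X] [Module.Finite S Y]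
    (H : ∀ (N : ModuleCat.{0} S) (i : Y →ₗ[S] N) (q : N →ₗ[S] X), Module.Finite S N →
      IsShortExact i q → ∃ r : N →ₗ[S] Y, r ∘ₗ i = LinearMap.id) : ExtVanishes S 1 X Y := by
  obtain ⟨m, p, hp⟩ := Module.Finite.exists_fin' S X
  have hse := IsShortExact.of_surjective hp
  refine .of_exists_extension hse (.of_projective 0) fun φ => ?_
  obtain ⟨N, Φ, i, hpush⟩ := exists_isPushoutSquare (LinearMap.ker p).subtype φ
  obtain ⟨q, hiq, -⟩ := hpush.exists_isShortExact hse
  obtain ⟨r, hr⟩ := H N i q hiq.finite hiq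
  exact ⟨r ∘ₗ Φ, by
    rw [LinearMap.comp_assoc, hpush.comm, ← LinearMap.comp_assoc, hr, LinearMap.id_comp]⟩

namespace QHData

lemma isWeight_of_ne_zero_costd [IsArtinianRing S] {φ : X →ₗ[S] Q.costd mu} (hφ : φ ≠ 0) :
    Q.IsWeight X mu := by
  obtain ⟨R, i, p, hse, -, hmin⟩ := Q.exists_isShortExact_L_costd mu
  have hle : LinearMap.range i ≤ LinearMap.range φ := hmin _ (mt LinearMap.range_eq_bot.1 hφ)
  have hi : Q.IsWeight (LinearMap.range i) mu :=
    isWeight_of_equiv_L (LinearEquiv.ofInjective i hse.injective).symm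
  exact (hi.of_injective (Submodule.inclusion_injective hle)).of_surjective
    φ.surjective_rangeRestrict

lemma extVanishes_costd_of_not_lt [IsArtinianRing S] [Module.Finite S M]
    (hM : ∀ nu, Q.IsWeight M nu → ¬ mu < nu) : ExtVanishes S 1 M (Q.costd mu) := by
  refine (Q.filtered_L M).extVanishes_left fun nu => ?_
  obtain ⟨R, i, p, hse, hR⟩ := Q.exists_isShortExact_std_L nu.1
  refine .of_exists_extension hse (Q.extVanishes_std_costd 0 nu.1 mu) fun φ => ⟨0, ?_⟩
  by_contra hφ
  exact hM nu nu.2 (hR mu (isWeight_of_ne_zero_costd (φ := φ) (Ne.symm hφ)))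

end QHData

namespace Duality

variable (d : Duality S Q)

lemma isShortExact [Module.Finite S A] [Module.Finite S B] [Module.Finite S C] {f : A →ₗ[S] B}
    {g : B →ₗ[S] C} (h : IsShortExact f g) : IsShortExact (d.Dmap g) (d.Dmap f) := by
  obtain ⟨hinj, hsurj, hexact⟩ := d.Dexact ‹_› ‹_› ‹_› f g h.injective h.surjective
    h.exact.linearMap_ker_eq.symm
  exact ⟨hinj, hsurj, LinearMap.exact_iff.2 hexact.symm⟩

lemma isWeight_D [IsArtinianRing S] [Module.Finite S M] (h : Q.IsWeight M mu) :
    Q.IsWeight (d.D M) mu := by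
  obtain ⟨A, B, hAB, ⟨e⟩⟩ := (QHData.isCompFactor_iff_isWeight M).2 h
  have hB := d.isShortExact (A := ModuleCat.of S B) (B := M) (C := ModuleCat.of S (M ⧸ B))
    (.subtype_mkQ B)
  have hAB' := d.isShortExact (A := ModuleCat.of S A) (B := ModuleCat.of S B) (C := Q.L mu)
    (.inclusion_subquot hAB e)
  obtain ⟨e'⟩ := d.DL mu
  exact ((QHData.isWeight_of_equiv_L e').of_injective hAB'.injective).of_surjective hB.surjective

lemma isWeight_D_iff [IsArtinianRing S] [Module.Finite S M] :
    Q.IsWeight (d.D M) mu ↔ Q.IsWeight M mu := by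
  have := d.finD M ‹_›
  obtain ⟨e⟩ := d.Dinvol M ‹_›
  exact ⟨fun h => (d.isWeight_D h).congr e, d.isWeight_D⟩

lemma extVanishes_one_of_D [Module.Finite S A] [Module.Finite S B]
    (h : ExtVanishes S 1 (d.D A) (d.D B)) : ExtVanishes S 1 B A := by
  refine .one_of_exists_retraction fun N i q hN hse => ?_
  obtain ⟨s, hs⟩ := h.exists_section (d.isShortExact hse)
  obtain ⟨r, rfl⟩ := (d.Dfull hN ‹_›).2 s
  refine ⟨r, (d.Dfull ‹_› ‹_›).1 ?_⟩
  change d.Dmap (r ∘ₗ i) = d.Dmap LinearMap.id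
  rwa [d.Dcomp ‹_› hN ‹_›, d.Did A ‹_›]

lemma extVanishes_one_D [Module.Finite S A] [Module.Finite S B] (h : ExtVanishes S 1 A B) :
    ExtVanishes S 1 (d.D B) (d.D A) := by
  have := d.finD A ‹_›
  have := d.finD B ‹_›
  obtain ⟨eA⟩ := d.Dinvol A ‹_›
  obtain ⟨eB⟩ := d.Dinvol B ‹_›
  exact d.extVanishes_one_of_D (.congr_left eA (.congr_right eB h))

variable [IsFiniteDimensionalAlgebra S]

lemma extVanishes_D_of_projective [Module.Finite S A] [Module.Projective S A] (n : ℕ)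
    [Module.Finite S X] : ExtVanishes S (n + 1) X (d.D A) := by
  induction n generalizing X with
  | zero =>
    have := d.finD X ‹_›
    obtain ⟨e⟩ := d.Dinvol X ‹_›
    exact .congr_left e.symm (d.extVanishes_one_D (.of_projective 0))
  | succ n ih =>
    obtain ⟨m, p, hp⟩ := Module.Finite.exists_fin' S X
    have hse := IsShortExact.of_surjective hp
    have : Module.Finite S (ModuleCat.of S (LinearMap.ker p)) := hse.finite_left
    exact .contravariant₃ hse (ih (X := ModuleCat.of S (LinearMap.ker p))) (.of_projective _)

lemma extVanishes_D [Module.Finite S A] [Module.Finite S B] {n : ℕ}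
    (h : ExtVanishes S (n + 1) A B) : ExtVanishes S (n + 1) (d.D B) (d.D A) := by
  induction n generalizing A with
  | zero => exact d.extVanishes_one_D h
  | succ n ih =>
    obtain ⟨m, p, hp⟩ := Module.Finite.exists_fin' S A
    have hse := IsShortExact.of_surjective hp
    have : Module.Finite S (ModuleCat.of S (LinearMap.ker p)) := hse.finite_left
    have : Module.Finite S (ModuleCat.of S (Fin m → S)) :=
      inferInstanceAs (Module.Finite S (Fin m → S))
    have : Module.Projective S (ModuleCat.of S (Fin m → S)) :=
      inferInstanceAs (Module.Projective S (Fin m → S))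
    have := d.finD B ‹_›
    refine .covariant₁ (d.isShortExact (A := ModuleCat.of S (LinearMap.ker p))
      (B := ModuleCat.of S (Fin m → S)) hse) ?_ (d.extVanishes_D_of_projective _)
    exact ih (A := ModuleCat.of S (LinearMap.ker p)) (.contravariant₁ hse h (.of_projective n))

lemma extVanishes_D_iff [Module.Finite S A] [Module.Finite S B] {n : ℕ} :
    ExtVanishes S (n + 1) (d.D B) (d.D A) ↔ ExtVanishes S (n + 1) A B := by
  have := d.finD A ‹_›
  have := d.finD B ‹_›
  obtain ⟨eA⟩ := d.Dinvol A ‹_›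
  obtain ⟨eB⟩ := d.Dinvol B ‹_›
  exact ⟨fun h => .congr_left eA.symm (.congr_right eB.symm (d.extVanishes_D h)), d.extVanishes_D⟩

lemma filtered_std_D_costd (lam : Λ) : Filtered Q.std (d.D (Q.costd lam)) := by
  have hfin (nu : Λ) : Module.Finite S (d.D (Q.costd nu)) := d.finD _ inferInstance
  have hExt {lam mu : Λ} (h : ¬ mu < lam) : ExtVanishes S 1 (d.D (Q.costd lam)) (Q.costd mu) :=
    QHData.extVanishes_costd_of_not_lt fun nu hnu hlt =>
      h (hlt.trans_le (d.isWeight_D_iff.1 hnu).le_of_costd)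
  refine QHData.filtered_std_iff.2 fun mu => ?_
  by_cases h : mu < lam
  · obtain ⟨e⟩ := d.Dinvol (Q.costd mu) inferInstance
    exact .congr_right e.symm (d.extVanishes_D (hExt h.not_gt))
  · exact hExt h

lemma filtered_costd_D_std (lam : Λ) : Filtered Q.costd (d.D (Q.std lam)) := by
  have hfin (nu : Λ) : Module.Finite S (d.D (Q.std nu)) := d.finD _ inferInstance
  have hExt {lam mu : Λ} (h : ¬ mu < lam) : ExtVanishes S 1 (Q.std mu) (d.D (Q.std lam)) :=
    QHData.extVanishes_std_of_isWeight fun nu hnu hlt =>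
      h (hlt.trans_le (d.isWeight_D_iff.1 hnu).le_of_std)
  refine QHData.filtered_costd_iff.2 fun mu => ?_
  by_cases h : mu < lam
  · obtain ⟨e⟩ := d.Dinvol (Q.std mu) inferInstance
    exact .congr_left e.symm (d.extVanishes_D (hExt h.not_gt))
  · exact hExt h

theorem gfdAlg_eq_wfdAlg (d : Duality S Q) : gfdAlg S Q = wfdAlg S Q := by
  refine eq_of_forall_ge_iff fun n => ?_
  rw [gfdAlg_le_iff, wfdAlg_le_iff]
  refine ⟨fun h i hi lam M hM => ?_, fun h i hi lam M hM => ?_⟩ <;>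
    obtain ⟨i, rfl⟩ := Nat.exists_eq_add_one.2 (Nat.zero_lt_of_lt hi) <;>
    refine d.extVanishes_D_iff.1 ?_ <;> have := d.finD M hM
  · exact (d.filtered_std_D_costd lam).extVanishes_left fun nu => h _ hi nu _ this
  · exact (d.filtered_costd_D_std lam).extVanishes_right fun nu => h _ hi nu _ this

end Duality

end Duality

section HomFunctor

variable {S : Type} [Ring S] {T X Y : ModuleCat.{0} S} {n : ℕ}

/-- The inclusion `T → Tⁿ` of the `i`-th summand, as an element of the `S'`-module
`Hom(T, Tⁿ)`. -/
abbrev finPowSingle (T : ModuleCat.{0} S) (i : Fin n) : T →ₗ[S] finPow T n :=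
  LinearMap.single S (fun _ => T) i

/-- `Hom(T, Tⁿ)` is free of rank `n` over `S' = End(T)ᵒᵖ`. -/
def homTFinPowEquiv (T : ModuleCat.{0} S) (n : ℕ) :
    (T →ₗ[S] finPow T n) ≃ₗ[RingelDualRing S T] (Fin n → RingelDualRing S T) where
  toFun φ i := .op (LinearMap.proj i ∘ₗ φ)
  map_add' _ _ := rfl
  map_smul' _ _ := rfl
  invFun a := LinearMap.pi fun i => (a i).unop
  left_inv _ := rfl
  right_inv _ := rfl

instance : Module.Projective (RingelDualRing S T) (T →ₗ[S] finPow T n) :=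
  .of_equiv (homTFinPowEquiv T n).symm

lemma homTFinPowEquiv_finPowSingle (i : Fin n) :
    homTFinPowEquiv T n (finPowSingle T i) = Pi.single i 1 := by
  refine funext fun j => MulOpposite.unop_injective ?_
  rcases eq_or_ne j i with rfl | hji
  · rw [Pi.single_eq_same]
    exact LinearMap.proj_comp_single_same S (fun _ => T) j
  · rw [Pi.single_eq_of_ne hji]
    exact LinearMap.proj_comp_single_ne S (fun _ => T) j i hji

lemma homT_finPow_ext {M : Type*} [AddCommGroup M] [Module (RingelDualRing S T) M]
    {u v : (T →ₗ[S] finPow T n) →ₗ[RingelDualRing S T] M}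
    (huv : ∀ i, u (finPowSingle T i) = v (finPowSingle T i)) : u = v := by
  rw [← LinearMap.cancel_right (homTFinPowEquiv T n).symm.surjective]
  refine LinearMap.pi_ext' fun i => LinearMap.ext_ring ?_
  have hi := (homTFinPowEquiv T n).symm_apply_eq.2 (homTFinPowEquiv_finPowSingle i).symm
  simpa [hi] using huv i

lemma homT_finPow_hom_ext {f g : finPow T n →ₗ[S] Y} (hfg : homTMap T f = homTMap T g) : f = g :=
  LinearMap.pi_ext' fun i => LinearMap.congr_fun hfg (finPowSingle T i)

lemma exists_homTMap_eq_of_finPow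
    (u : (T →ₗ[S] finPow T n) →ₗ[RingelDualRing S T] (T →ₗ[S] Y)) :
    ∃ f : finPow T n →ₗ[S] Y, homTMap T f = u :=
  ⟨LinearMap.lsum S (fun _ => T) ℕ fun i => u (finPowSingle T i), homT_finPow_ext fun i =>
    LinearMap.ext fun t =>
      LinearMap.lsum_piSingle S (fun _ => T) ℕ (fun i => u (finPowSingle T i)) i t⟩

variable {Λ : Type} [Fintype Λ] [PartialOrder Λ] {Q : QHData S Λ} [IsFiniteDimensionalAlgebra S]

namespace IsFullTilting

lemma isShortExact_homTMap {A B C : ModuleCat.{0} S} {f : A →ₗ[S] B} {g : B →ₗ[S] C}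
    (hT : IsFullTilting S Q T) (hse : IsShortExact f g) (hA : Filtered Q.costd A) :
    IsShortExact (homTMap T f) (homTMap T g) :=
  hse.homTMap (hT.filtered_std.extVanishes hA 0)

lemma homTMap_injective (hT : IsFullTilting S Q T) (hX : Filtered Q.costd X) {f g : X →ₗ[S] Y}
    (hfg : homTMap T f = homTMap T g) : f = g := by
  obtain ⟨n, K, i, p, hse, -⟩ := hT.exists_isShortExact_costd_pi hX
  exact (LinearMap.cancel_right hse.surjective).1
    (homT_finPow_hom_ext (congrArg (fun u => u ∘ₗ homTMap T p) hfg))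

lemma exists_homTMap_eq (hT : IsFullTilting S Q T) (hX : Filtered Q.costd X)
    (u : (T →ₗ[S] X) →ₗ[RingelDualRing S T] (T →ₗ[S] Y)) :
    ∃ f : X →ₗ[S] Y, homTMap T f = u := by
  obtain ⟨n, K, i, p, hse, hK⟩ := hT.exists_isShortExact_costd_pi hX
  have hse' := hT.isShortExact_homTMap hse hK
  obtain ⟨g, hg⟩ := exists_homTMap_eq_of_finPow (u ∘ₗ homTMap T p)
  obtain ⟨f, rfl⟩ := hse.exists_comp_right_eq g (hT.homTMap_injective hK (by
    change homTMap T g ∘ₗ homTMap T i = 0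
    rw [hg, LinearMap.comp_assoc, hse'.exact.linearMap_comp_eq_zero, LinearMap.comp_zero]))
  exact ⟨f, (LinearMap.cancel_right hse'.surjective).1 hg⟩

lemma extVanishes_homT_iff (hT : IsFullTilting S Q T) (hX : Filtered Q.costd X)
    (hY : Filtered Q.costd Y) (n : ℕ) :
    ExtVanishes (RingelDualRing S T) (n + 1) (T →ₗ[S] X) (T →ₗ[S] Y) ↔
      ExtVanishes S (n + 1) X Y := by
  induction n generalizing X with
  | zero =>
    obtain ⟨m, K, i, p, hse, hK⟩ := hT.exists_isShortExact_costd_pi hX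
    have hse' := hT.isShortExact_homTMap hse hK
    refine ⟨fun h => .of_exists_extension hse ((hT.filtered_std.extVanishes hY 0).pi_left m)
      fun φ => ?_, fun h => .of_exists_extension hse' (.of_projective 0) fun u => ?_⟩
    · obtain ⟨v, hv⟩ := h.exists_extension hse' (homTMap T φ)
      obtain ⟨ψ, rfl⟩ := exists_homTMap_eq_of_finPow v
      exact ⟨ψ, hT.homTMap_injective hK hv⟩
    · obtain ⟨φ, rfl⟩ := hT.exists_homTMap_eq hK u
      obtain ⟨ψ, rfl⟩ := h.exists_extension hse φ
      exact ⟨homTMap T ψ, rfl⟩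
  | succ n ih =>
    obtain ⟨m, K, i, p, hse, hK⟩ := hT.exists_isShortExact_costd_pi hX
    have hse' := hT.isShortExact_homTMap hse hK
    have hTY (k : ℕ) : ExtVanishes S (k + 1) (finPow T m) Y :=
      (hT.filtered_std.extVanishes hY k).pi_left m
    exact ⟨fun h => .contravariant₃ hse ((ih hK).1 (.contravariant₁ hse' h (.of_projective n)))
      (hTY _), fun h => .contravariant₃ hse' ((ih hK).2 (.contravariant₁ hse h (hTY _)))
      (.of_projective _)⟩

end IsFullTilting

lemma gfdAlg_ringelDual {Q' : QHData (RingelDualRing S T) Λᵒᵈ}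
    (hRD : IsRingelDualData S Q T Q') : gfdAlg (RingelDualRing S T) Q' = wfdAlg S Q := by
  have : Module.Finite S T := hRD.1.2.1
  refine eq_of_forall_ge_iff fun d => ?_
  rw [gfdAlg_le_iff_std, wfdAlg_le_iff_costd]
  refine forall₂_congr fun i hi => OrderDual.forall.trans <| forall_congr' fun lam =>
    OrderDual.forall.trans <| forall_congr' fun mu => ?_
  obtain ⟨n, rfl⟩ := Nat.exists_eq_succ_of_ne_zero (Nat.ne_zero_of_lt hi)
  obtain ⟨elam⟩ := hRD.2 lam
  obtain ⟨emu⟩ := hRD.2 mu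
  refine Iff.trans ?_
    (hRD.1.extVanishes_homT_iff (.of_section lam) (.of_section mu) n)
  exact ⟨fun h => .congr_left elam.symm (.congr_right emu.symm h),
    fun h => .congr_left elam (.congr_right emu h)⟩

end HomFunctor

section HomDual

lemma IsShortExact.exact_dual {R A B C : Type*} [CommRing R] [AddCommGroup A] [Module R A]
    [AddCommGroup B] [Module R B] [AddCommGroup C] [Module R C] {f : A →ₗ[R] B} {g : B →ₗ[R] C}
    (h : IsShortExact f g) : Function.Exact (CharacterModule.dual g) (CharacterModule.dual f) := by
  refine fun ξ => ⟨fun hξ => ⟨g.toAddMonoidHom.liftOfSurjective h.surjective ⟨ξ, fun b hb => ?_⟩,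
    DFunLike.ext _ _ fun b => ?_⟩, ?_⟩
  · obtain ⟨a, rfl⟩ := (h.exact b).1 hb
    exact DFunLike.congr_fun hξ a
  · exact g.toAddMonoidHom.liftOfRightInverse_comp_apply _
      (Function.rightInverse_surjInv h.surjective) ⟨ξ, _⟩ b
  · rintro ⟨η, rfl⟩
    rw [← LinearMap.comp_apply, ← CharacterModule.dual_comp, h.exact.linearMap_comp_eq_zero,
      CharacterModule.dual_zero, LinearMap.zero_apply]

variable {S : Type} [Ring S] {T X A B C M : ModuleCat.{0} S} {f : A →ₗ[S] B} {g : B →ₗ[S] C}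
  {n : ℕ}

lemma IsShortExact.compRight (h : IsShortExact f g) (hA : ExtVanishes S 1 X A) :
    IsShortExact (LinearMap.compRight ℤ f : (X →ₗ[S] A) →ₗ[ℤ] (X →ₗ[S] B))
      (LinearMap.compRight ℤ g) :=
  have h' := h.homTMap hA
  ⟨h'.injective, h'.surjective, h'.exact⟩

lemma IsShortExact.lcomp (h : IsShortExact f g) (hC : ExtVanishes S 1 C X) :
    IsShortExact (LinearMap.lcomp ℤ X g) (LinearMap.lcomp ℤ X f) where
  injective _ _ := (LinearMap.cancel_right h.surjective).1
  surjective := hC.exists_extension h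
  exact φ := ⟨h.exists_comp_right_eq φ, fun ⟨ψ, hψ⟩ => by
    rw [← hψ]; exact LinearMap.ext fun x => congrArg ψ (h.exact.apply_apply_eq_zero x) |>.trans
      (map_zero ψ)⟩

/-- The covariant functor `E = D Hom(-, T)` from `S`-modules to `S'`-modules, where `S'` is the
Ringel dual ring `End(T)ᵒᵖ`. The duality `D` is taken to be the character module, which does not
refer to the ground field. -/
def HomDual (T X : ModuleCat.{0} S) : Type := CharacterModule (X →ₗ[S] T)

instance : AddCommGroup (HomDual T X) := inferInstanceAs (AddCommGroup (CharacterModule _))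

instance : FunLike (HomDual T X) (X →ₗ[S] T) (AddCircle (1 : ℚ)) :=
  inferInstanceAs (FunLike (CharacterModule _) _ _)

instance : AddMonoidHomClass (HomDual T X) (X →ₗ[S] T) (AddCircle (1 : ℚ)) :=
  inferInstanceAs (AddMonoidHomClass (CharacterModule _) _ _)

instance : Module (RingelDualRing S T) (HomDual T X) where
  smul a ξ := CharacterModule.dual (LinearMap.compRight ℤ a.unop) ξ
  one_smul _ := rfl
  mul_smul _ _ _ := rfl
  smul_zero _ := map_zero _
  smul_add _ := map_add _
  add_smul a b ξ := DFunLike.ext _ _ fun φ => map_add ξ (a.unop ∘ₗ φ) (b.unop ∘ₗ φ)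
  zero_smul ξ := DFunLike.ext _ _ fun _ => map_zero ξ

/-- The functor `E = D Hom(-, T)` on morphisms. -/
def HomDual.map (T : ModuleCat.{0} S) (f : A →ₗ[S] B) :
    HomDual T A →ₗ[RingelDualRing S T] HomDual T B where
  toFun ξ := CharacterModule.dual (LinearMap.lcomp ℤ T f) ξ
  map_add' := map_add _
  map_smul' _ _ := rfl

lemma IsShortExact.homDual (h : IsShortExact f g) (hC : ExtVanishes S 1 C T) :
    IsShortExact (HomDual.map T f) (HomDual.map T g) where
  injective := CharacterModule.dual_injective_of_surjective _ (h.lcomp hC).surjective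
  surjective := CharacterModule.dual_surjective_of_injective _ (h.lcomp hC).injective
  exact := (h.lcomp hC).exact_dual

/-- The `i`-th projection `Tⁿ → T`. -/
abbrev finPowProj (T : ModuleCat.{0} S) (i : Fin n) : finPow T n →ₗ[S] T :=
  LinearMap.proj i

lemma sum_finPowSingle_comp_proj :
    ∑ i, finPowSingle T i ∘ₗ finPowProj T i = (LinearMap.id : finPow T n →ₗ[S] finPow T n) := by
  refine LinearMap.ext fun x => ?_
  rw [LinearMap.sum_apply]
  exact LinearMap.sum_single_apply (φ := fun _ => (T : Type)) x

lemma sum_comp_finPowSingle_comp_proj (φ : finPow T n →ₗ[S] X) :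
    ∑ i, φ ∘ₗ finPowSingle T i ∘ₗ finPowProj T i = φ :=
  (map_sum (LinearMap.compRight ℤ φ) _ _).symm.trans
    (congrArg (LinearMap.compRight ℤ φ) sum_finPowSingle_comp_proj)

lemma sum_finPowSingle_comp_proj_comp (φ : X →ₗ[S] finPow T n) :
    ∑ i, finPowSingle T i ∘ₗ finPowProj T i ∘ₗ φ = φ :=
  (map_sum (LinearMap.lcomp ℤ (finPow T n) φ) _ _).symm.trans
    (congrArg (LinearMap.lcomp ℤ (finPow T n) φ) sum_finPowSingle_comp_proj)

lemma finPowProj_comp_single (i j : Fin n) :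
    finPowProj T j ∘ₗ finPowSingle T i = if i = j then LinearMap.id else 0 := by
  split_ifs with hij
  · rw [hij]
    exact LinearMap.proj_comp_single_same S (fun _ => T) j
  · exact LinearMap.proj_comp_single_ne S (fun _ => T) j i (Ne.symm hij)

lemma sum_homDual_map_single_proj (ξ : HomDual T (finPow T n)) :
    ∑ i, HomDual.map T (finPowSingle T i) (HomDual.map T (finPowProj T i) ξ) = ξ := by
  refine DFunLike.ext _ _ fun φ => ?_
  conv_rhs => rw [← sum_comp_finPowSingle_comp_proj φ, map_sum]
  exact AddMonoidHom.finsetSum_apply _ _ _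

/-- The `S'`-linear map `B → D(S')` coinduced by a character of `B`. -/
def homDualCoinduced {B : Type*} [AddCommGroup B] [Module (RingelDualRing S T) B]
    (η : CharacterModule B) : B →ₗ[RingelDualRing S T] HomDual T T where
  toFun b := AddMonoidHom.mk' (fun φ => η (MulOpposite.op φ • b)) fun φ φ' =>
    (congrArg η (add_smul (MulOpposite.op φ) (MulOpposite.op φ') b)).trans (map_add η _ _)
  map_add' b b' := DFunLike.ext _ _ fun φ =>
    (congrArg η (smul_add (MulOpposite.op φ) b b')).trans (map_add η _ _)
  map_smul' a b := DFunLike.ext _ _ fun φ => congrArg η (smul_smul (MulOpposite.op φ) a b)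

lemma injective_homDual_self : Module.Injective (RingelDualRing S T) (HomDual T T) where
  out A B _ _ _ _ f hf g := by
    obtain ⟨η, hη⟩ := CharacterModule.dual_surjective_of_injective (f.restrictScalars ℤ) hf
      (AddMonoidHom.mk' (fun a => g a LinearMap.id) fun a b =>
        DFunLike.congr_fun (map_add g a b) LinearMap.id)
    refine ⟨homDualCoinduced η, fun a => DFunLike.ext _ _ fun φ => ?_⟩
    refine (congrArg η (map_smul f (MulOpposite.op φ) a).symm).trans ?_
    refine (DFunLike.congr_fun hη _).trans ?_
    exact DFunLike.congr_fun (map_smul g (MulOpposite.op φ) a) LinearMap.id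

lemma injective_homDual_finPow :
    Module.Injective (RingelDualRing S T) (HomDual T (finPow T n)) where
  out A B _ _ _ _ f hf g := by
    choose ψ hψ using fun i =>
      injective_homDual_self.out f hf (HomDual.map T (finPowProj T i) ∘ₗ g)
    refine ⟨∑ i, HomDual.map T (finPowSingle T i) ∘ₗ ψ i, fun a => ?_⟩
    simpa [hψ] using sum_homDual_map_single_proj (g a)

/-- The map `Hom(T, M) → D Hom(X, T)` induced by composition `Hom(X, T) × Hom(T, M) → Hom(X, M)`
and a character of `Hom(X, M)`. -/
def homDualPairing (T : ModuleCat.{0} S) (ζ : CharacterModule (X →ₗ[S] M)) :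
    (T →ₗ[S] M) →ₗ[RingelDualRing S T] HomDual T X where
  toFun u := CharacterModule.dual (LinearMap.compRight ℤ u) ζ
  map_add' u v := DFunLike.ext _ _ fun φ => map_add ζ (u ∘ₗ φ) (v ∘ₗ φ)
  map_smul' _ _ := rfl

lemma homDualPairing_dual_compRight (p : M →ₗ[S] C) (ζ : CharacterModule (X →ₗ[S] C)) :
    homDualPairing T (CharacterModule.dual (LinearMap.compRight ℤ p) ζ) =
      homDualPairing T ζ ∘ₗ homTMap T p :=
  rfl

lemma homDualPairing_injective_of_finPow :
    Function.Injective (homDualPairing (X := X) (M := finPow T n) T) := by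
  intro ζ ζ' h
  refine DFunLike.ext _ _ fun ψ => ?_
  rw [← sum_finPowSingle_comp_proj_comp ψ, map_sum, map_sum]
  exact Finset.sum_congr rfl fun i _ => DFunLike.congr_fun (LinearMap.congr_fun h _) _

lemma exists_homDualPairing_eq_of_finPow
    (θ : (T →ₗ[S] finPow T n) →ₗ[RingelDualRing S T] HomDual T X) :
    ∃ ζ, homDualPairing T ζ = θ := by
  refine ⟨∑ i, CharacterModule.dual (LinearMap.compRight ℤ (finPowProj T i))
    (θ (finPowSingle T i)), homT_finPow_ext fun j => DFunLike.ext _ _ fun φ => ?_⟩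
  have hcomp (i : Fin n) :
      finPowProj T i ∘ₗ finPowSingle T j ∘ₗ φ = if j = i then φ else 0 := by
    rw [← LinearMap.comp_assoc, finPowProj_comp_single]
    split_ifs <;> rfl
  calc (∑ i, CharacterModule.dual (LinearMap.compRight ℤ (finPowProj T i))
        (θ (finPowSingle T i))) (finPowSingle T j ∘ₗ φ)
    _ = ∑ i, θ (finPowSingle T i) (finPowProj T i ∘ₗ finPowSingle T j ∘ₗ φ) :=
      AddMonoidHom.finsetSum_apply _ _ _
    _ = ∑ i, if j = i then θ (finPowSingle T i) φ else 0 :=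
      Finset.sum_congr rfl fun i _ => by rw [hcomp]; split_ifs <;> simp
    _ = θ (finPowSingle T j) φ := by rw [Finset.sum_ite_eq, if_pos (Finset.mem_univ j)]

end HomDual

section HomDualExt

variable {S : Type} [Ring S] {T X K C : ModuleCat.{0} S} {n : ℕ}

lemma exists_retract_finPow_of_mem_span (h : LinearMap.id ∈
      Submodule.span ℤ {φ : X →ₗ[S] X | ∃ (f : X →ₗ[S] T) (h : T →ₗ[S] X), φ = h ∘ₗ f}) :
    ∃ (r : ℕ) (i : X →ₗ[S] finPow T r) (p : finPow T r →ₗ[S] X), p ∘ₗ i = LinearMap.id := by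
  obtain ⟨r, c, φ, hφ⟩ := Submodule.mem_span_set'.1 h
  choose f g hfg using fun i => (φ i).2
  refine ⟨r, LinearMap.pi f, LinearMap.lsum S (fun _ => T) ℕ fun i => c i • g i, ?_⟩
  rw [← hφ]
  refine LinearMap.ext fun x => (LinearMap.sum_apply ..).trans ?_
  simp only [LinearMap.sum_apply, LinearMap.smul_apply, hfg]
  rfl

lemma exists_character_eq_zero_of_notMem {R A : Type*} [CommRing R] [AddCommGroup A] [Module R A]
    {N : Submodule R A} {a : A} (ha : a ∉ N) :
    ∃ ξ : CharacterModule A, (∀ x ∈ N, ξ x = 0) ∧ ξ a ≠ 0 := by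
  obtain ⟨ξ, hξ⟩ := CharacterModule.exists_character_apply_ne_zero_of_ne_zero
    (mt (Submodule.Quotient.mk_eq_zero N).1 ha)
  refine ⟨CharacterModule.dual N.mkQ ξ, fun x hx => ?_, hξ⟩
  exact (congrArg ξ ((Submodule.Quotient.mk_eq_zero N).2 hx)).trans (map_zero ξ)

lemma exists_retract_of_extVanishes_homDual {q : finPow T n →ₗ[S] C} {j : X →ₗ[S] finPow T n}
    {m : ℕ} (hjq : IsShortExact j q) {c : C →ₗ[S] finPow T m} (hc : Function.Injective c)
    (h : ExtVanishes (RingelDualRing S T) 1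
      ((T →ₗ[S] finPow T m) ⧸ LinearMap.range (homTMap T (c ∘ₗ q))) (HomDual T X)) :
    ∃ (r : ℕ) (i : X →ₗ[S] finPow T r) (p : finPow T r →ₗ[S] X), p ∘ₗ i = LinearMap.id := by
  refine exists_retract_finPow_of_mem_span ?_
  by_contra hid
  obtain ⟨ξ₀, hξ₀, hne⟩ := exists_character_eq_zero_of_notMem hid
  obtain ⟨ξ, rfl⟩ := CharacterModule.dual_surjective_of_injective
    (LinearMap.compRight ℤ j : (X →ₗ[S] X) →ₗ[ℤ] _)
    (fun φ ψ hφψ => (LinearMap.cancel_left hjq.injective).1 hφψ) ξ₀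
  have hker : homDualPairing T ξ ∘ₗ
      (LinearMap.ker (homTMap T (c ∘ₗ q)).rangeRestrict).subtype = 0 := by
    refine LinearMap.ext fun ⟨u, hu⟩ => DFunLike.ext _ _ fun φ => ?_
    have hu : c ∘ₗ q ∘ₗ u = c ∘ₗ 0 := (congrArg Subtype.val hu).trans (LinearMap.comp_zero c).symm
    obtain ⟨v, rfl⟩ := hjq.exists_comp_left_eq u ((LinearMap.cancel_left hc).1 hu)
    exact hξ₀ _ (Submodule.subset_span ⟨φ, v, rfl⟩)
  obtain ⟨θ, hθ⟩ := (IsShortExact.of_surjective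
    (homTMap T (c ∘ₗ q)).surjective_rangeRestrict).exists_comp_right_eq _ hker
  obtain ⟨η, rfl⟩ := h.exists_extension (.subtype_mkQ _) θ
  obtain ⟨ζ, rfl⟩ := exists_homDualPairing_eq_of_finPow η
  have hξ : CharacterModule.dual (LinearMap.compRight ℤ (c ∘ₗ q)) ζ = ξ :=
    homDualPairing_injective_of_finPow hθ
  refine hne ?_
  rw [← hξ]
  refine (congrArg ζ ?_).trans (map_zero ζ)
  exact LinearMap.ext fun x => congrArg c (hjq.exact.apply_apply_eq_zero x) |>.trans (map_zero c)

variable {Λ : Type} [Fintype Λ] [PartialOrder Λ] {Q : QHData S Λ} [IsFiniteDimensionalAlgebra S]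

namespace IsFullTilting

lemma homDualPairing_injective [Module.Projective S X] (hT : IsFullTilting S Q T)
    (hK : Filtered Q.costd K) : Function.Injective (homDualPairing (X := X) (M := K) T) := by
  obtain ⟨m, K₁, i, p, hse, -⟩ := hT.exists_isShortExact_costd_pi hK
  have hse' := hse.compRight (X := X) (.of_projective 0)
  intro ζ ζ' h
  exact CharacterModule.dual_injective_of_surjective _ hse'.surjective
    (homDualPairing_injective_of_finPow (congrArg (fun θ => θ ∘ₗ homTMap T p) h))

lemma exists_homDualPairing_eq [Module.Projective S X] (hT : IsFullTilting S Q T)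
    (hK : Filtered Q.costd K) (θ : (T →ₗ[S] K) →ₗ[RingelDualRing S T] HomDual T X) :
    ∃ ζ, homDualPairing T ζ = θ := by
  obtain ⟨m, K₁, i, p, hse, hK₁⟩ := hT.exists_isShortExact_costd_pi hK
  have hse' := hse.compRight (X := X) (.of_projective 0)
  have hFse := hT.isShortExact_homTMap hse hK₁
  obtain ⟨ζ₁, hζ₁⟩ := exists_homDualPairing_eq_of_finPow (θ ∘ₗ homTMap T p)
  obtain ⟨ζ, rfl⟩ := (hse'.exact_dual ζ₁).1 <| hT.homDualPairing_injective hK₁ <| by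
    rw [homDualPairing_dual_compRight, hζ₁, LinearMap.comp_assoc,
      hFse.exact.linearMap_comp_eq_zero, LinearMap.comp_zero]
    rfl
  exact ⟨ζ, (LinearMap.cancel_right hFse.surjective).1 hζ₁⟩

end IsFullTilting

lemma IsFullTilting.extVanishes_homDual_iff (hT : IsFullTilting S Q T) (hX : Filtered Q.std X)
    (n : ℕ) :
    (∀ M : ModuleCat.{0} (RingelDualRing S T), Module.Finite (RingelDualRing S T) M →
        ExtVanishes (RingelDualRing S T) (n + 1) M (HomDual T X)) ↔
      ∀ lam, ExtVanishes S (n + 1) (Q.std lam) X := by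
  have : Module.Finite S T := hT.2.1
  induction n generalizing X with
  | zero =>
    have := hX.finite fun _ => inferInstance
    obtain ⟨n, C, j, q, hjq, hC⟩ := hT.exists_isShortExact_pi_std hX
    refine ⟨fun h => ?_, fun h M _ => ?_⟩
    · obtain ⟨m, C', c, q', hc, -⟩ := hT.exists_isShortExact_pi_std hC
      have hfin : Module.Finite (RingelDualRing S T)
        ((T →ₗ[S] finPow T m) ⧸ LinearMap.range (homTMap T (c ∘ₗ q))) := inferInstance
      obtain ⟨r, i, p, hpi⟩ := exists_retract_of_extVanishes_homDual hjq hc.injective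
        (h (ModuleCat.of _ _) hfin)
      exact fun lam => .retract_right i p hpi
        ((QHData.filtered_costd_iff.1 hT.filtered_costd lam).pi_right r)
    · obtain ⟨r, i, p, hpi⟩ := hT.exists_retract_pi hX (QHData.filtered_costd_iff.2 h)
      refine .retract_right (HomDual.map T i) (HomDual.map T p) ?_
        (.of_injective injective_homDual_finPow 0)
      refine LinearMap.ext fun ξ => DFunLike.ext _ _ fun φ => congrArg ξ ?_
      exact LinearMap.ext fun x => congrArg φ (LinearMap.congr_fun hpi x)
  | succ n ih =>
    obtain ⟨m, C, j, q, hjq, hC⟩ := hT.exists_isShortExact_pi_std hX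
    have hE := hjq.homDual (hC.extVanishes hT.filtered_costd 0)
    have hstd (lam : Λ) (k : ℕ) : ExtVanishes S (k + 1) (Q.std lam) (finPow T m) :=
      ((Filtered.of_section lam).extVanishes hT.filtered_costd k).pi_right m
    refine Iff.trans ?_ ((ih hC).trans ?_)
    · exact ⟨fun h M hM => .covariant₃ hE (h M hM) (.of_injective injective_homDual_finPow n),
        fun h M hM => .covariant₁ hE (h M hM) (.of_injective injective_homDual_finPow (n + 1))⟩
    · exact ⟨fun h lam => .covariant₁ hjq (h lam) (hstd lam (n + 1)),
        fun h lam => .covariant₃ hjq (h lam) (hstd lam n)⟩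

end HomDualExt

section HomDualStd

lemma exists_syzygy {R : Type u} [Ring R] [IsNoetherianRing R] (d : ℕ) (M : ModuleCat.{u} R)
    [Module.Finite R M] :
    ∃ N : ModuleCat.{u} R, Module.Finite R N ∧ ∀ (Y : ModuleCat.{u} R) (i : ℕ),
      ExtVanishes R (i + 1) N Y ↔ ExtVanishes R (i + 1 + d) M Y := by
  induction d with
  | zero => exact ⟨M, ‹_›, fun Y i => .rfl⟩
  | succ d ih =>
    obtain ⟨N, _, hN⟩ := ih
    obtain ⟨n, p, hp⟩ := Module.Finite.exists_fin' R N
    have hse := IsShortExact.of_surjective hp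
    refine ⟨ModuleCat.of R (LinearMap.ker p), hse.finite_left, fun Y i => ?_⟩
    rw [← add_assoc, add_right_comm, ← hN]
    exact ⟨fun h => .contravariant₃ hse h (.of_projective (i + 1)),
      fun h => .contravariant₁ hse h (.of_projective i)⟩

variable {S : Type} [Ring S] {T X Y : ModuleCat.{0} S} {n : ℕ}

lemma exists_surjective_homT_finPow (N : Type) [AddCommGroup N] [Module (RingelDualRing S T) N]
    [Module.Finite (RingelDualRing S T) N] :
    ∃ (n : ℕ) (p : (T →ₗ[S] finPow T n) →ₗ[RingelDualRing S T] N), Function.Surjective p := by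
  obtain ⟨n, p, hp⟩ := Module.Finite.exists_fin' (RingelDualRing S T) N
  exact ⟨n, p ∘ₗ (homTFinPowEquiv T n).toLinearMap, hp.comp (homTFinPowEquiv T n).surjective⟩

variable {Λ : Type} [Fintype Λ] [PartialOrder Λ] {Q : QHData S Λ} [IsFiniteDimensionalAlgebra S]

namespace IsFullTilting

lemma extVanishes_homT_homDual [Module.Projective S Y] (hT : IsFullTilting S Q T)
    (hX : Filtered Q.costd X) (n : ℕ) :
    ExtVanishes (RingelDualRing S T) (n + 1) (T →ₗ[S] X) (HomDual T Y) := by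
  induction n generalizing X with
  | zero =>
    obtain ⟨m, K, i, p, hse, hK⟩ := hT.exists_isShortExact_costd_pi hX
    have hse' := hT.isShortExact_homTMap hse hK
    refine .of_exists_extension hse' (.of_projective 0) fun θ => ?_
    obtain ⟨ζ, rfl⟩ := hT.exists_homDualPairing_eq hK θ
    obtain ⟨ζ', rfl⟩ := CharacterModule.dual_surjective_of_injective _
      (hse.compRight (X := Y) (.of_projective 0)).injective ζ
    exact ⟨homDualPairing T ζ', rfl⟩
  | succ n ih =>
    obtain ⟨m, K, i, p, hse, hK⟩ := hT.exists_isShortExact_costd_pi hX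
    exact .contravariant₃ (hT.isShortExact_homTMap hse hK) (ih hK) (.of_projective _)

lemma exists_equiv_homT_of_isShortExact {M : Type} [AddCommGroup M]
    [Module (RingelDualRing S T) M] (hT : IsFullTilting S Q T) (hX : Filtered Q.costd X)
    (hY : Filtered Q.costd Y) {a : (T →ₗ[S] Y) →ₗ[RingelDualRing S T] M}
    {b : M →ₗ[RingelDualRing S T] (T →ₗ[S] X)}
    (hab : IsShortExact a b) :
    ∃ Z : ModuleCat.{0} S, Filtered Q.costd Z ∧
      Nonempty (M ≃ₗ[RingelDualRing S T] (T →ₗ[S] Z)) := by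
  obtain ⟨m, K, i, p, hse, hK⟩ := hT.exists_isShortExact_costd_pi hX
  have hse' := hT.isShortExact_homTMap hse hK
  obtain ⟨h, hh⟩ := Module.projective_lifting_property b (homTMap T p) hab.surjective
  obtain ⟨u, hu⟩ := hab.exists_comp_left_eq (h ∘ₗ homTMap T i) (by
    rw [← LinearMap.comp_assoc, hh, hse'.exact.linearMap_comp_eq_zero])
  obtain ⟨k, rfl⟩ := hT.exists_homTMap_eq hK u
  obtain ⟨Z, Φ, ι, hpush⟩ := exists_isPushoutSquare i k
  obtain ⟨q, hιq, hq⟩ := hpush.exists_isShortExact hse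
  refine ⟨Z, .of_isShortExact hιq hY hX, ?_⟩
  have hM := IsPushoutSquare.of_isShortExact hse' hab hu.symm hh
  have hZ := IsPushoutSquare.of_isShortExact (φ := homTMap T k) (Φ := homTMap T Φ) hse'
    (hT.isShortExact_homTMap hιq hY) (congrArg (homTMap T) hpush.comm) (congrArg (homTMap T) hq)
  exact hM.nonempty_equiv hZ

lemma injective_of_extVanishes_homDual (hT : IsFullTilting S Q T) (hX : Filtered Q.costd X)
    {g : X →ₗ[S] finPow T n} {N : Type} [AddCommGroup N] [Module (RingelDualRing S T) N]
    {p : (T →ₗ[S] finPow T n) →ₗ[RingelDualRing S T] N} (hgp : IsShortExact (homTMap T g) p)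
    (hN : ExtVanishes (RingelDualRing S T) 1 N (HomDual T (ModuleCat.of S S))) :
    Function.Injective g := by
  have : Module.Projective S (ModuleCat.of S S) := inferInstanceAs (Module.Projective S S)
  have hsurj : Function.Surjective (CharacterModule.dual
      (LinearMap.compRight ℤ g : (ModuleCat.of S S →ₗ[S] X) →ₗ[ℤ] _)) := fun ζ => by
    obtain ⟨η, hη⟩ := hN.exists_extension hgp (homDualPairing T ζ)
    obtain ⟨ζ', rfl⟩ := exists_homDualPairing_eq_of_finPow η
    exact ⟨ζ', hT.homDualPairing_injective hX hη⟩
  intro x y hxy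
  have hspan : LinearMap.toSpanSingleton S X x = LinearMap.toSpanSingleton S X y :=
    CharacterModule.dual_surjective_iff_injective.1 hsurj
      (LinearMap.ext_ring (by simpa using hxy))
  simpa using LinearMap.congr_fun hspan 1

end IsFullTilting

namespace IsRingelDualData

variable {Q' : QHData (RingelDualRing S T) Λᵒᵈ}

lemma filtered_std_homT (hRD : IsRingelDualData S Q T Q') (hX : Filtered Q.costd X) :
    Filtered Q'.std (ModuleCat.of _ (T →ₗ[S] X)) := by
  induction hX with
  | zero X hX => exact .zero _ (inferInstanceAs (Subsingleton (T →ₗ[S] X)))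
  | extend lam f g h hA ih =>
    obtain ⟨e⟩ := hRD.2 lam
    exact .of_isShortExact (A := ModuleCat.of _ (T →ₗ[S] _)) (B := ModuleCat.of _ (T →ₗ[S] _))
      (C := ModuleCat.of _ (T →ₗ[S] _)) (hRD.1.isShortExact_homTMap h hA) ih
      (.congr (N := ModuleCat.of _ (T →ₗ[S] _)) e (.of_section _))

lemma exists_equiv_homT (hRD : IsRingelDualData S Q T Q')
    {N : ModuleCat.{0} (RingelDualRing S T)} (hN : Filtered Q'.std N) :
    ∃ X : ModuleCat.{0} S, Filtered Q.costd X ∧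
      Nonempty (N ≃ₗ[RingelDualRing S T] (T →ₗ[S] X)) := by
  induction hN with
  | zero N hN => exact ⟨ModuleCat.of S PUnit, .zero _ (inferInstanceAs (Subsingleton PUnit)), ⟨0⟩⟩
  | extend lam f g h _ ih =>
    obtain ⟨X, hX, ⟨e⟩⟩ := ih
    obtain ⟨e'⟩ := hRD.2 (OrderDual.ofDual lam)
    exact hRD.1.exists_equiv_homT_of_isShortExact (.of_section (OrderDual.ofDual lam)) hX
      (h.congr e.symm e')

lemma filtered_std_of_isShortExact (hRD : IsRingelDualData S Q T Q') (hX : Filtered Q.costd X)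
    {g : X →ₗ[S] finPow T n} (hg : Function.Injective g) {N : ModuleCat.{0} (RingelDualRing S T)}
    {p : (T →ₗ[S] finPow T n) →ₗ[RingelDualRing S T] N} (hgp : IsShortExact (homTMap T g) p) :
    Filtered Q'.std N := by
  have : Module.Finite S T := hRD.1.2.1
  obtain ⟨C, q, hse⟩ : ∃ (C : ModuleCat.{0} S) (q : finPow T n →ₗ[S] C), IsShortExact g q :=
    ⟨.of S (finPow T n ⧸ LinearMap.range g), _, .of_injective hg⟩
  have := hse.finite_right
  have hC : Filtered Q.costd C :=
    QHData.filtered_costd_iff.2 fun lam => .covariant₃ hse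
      ((Filtered.of_section lam).extVanishes hX 1)
      ((QHData.filtered_costd_iff.1 hRD.1.filtered_costd lam).pi_right n)
  obtain ⟨e⟩ := (hRD.1.isShortExact_homTMap hse hX).nonempty_equiv_right hgp rfl
  exact .congr e (hRD.filtered_std_homT hC)

variable {N : ModuleCat.{0} (RingelDualRing S T)} [Module.Finite (RingelDualRing S T) N]

lemma filtered_std_of_extVanishes_homDual (hRD : IsRingelDualData S Q T Q')
    (hN : ∀ i, ExtVanishes (RingelDualRing S T) (i + 1) N (HomDual T (ModuleCat.of S S))) :
    Filtered Q'.std N := by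
  have : Module.Finite S T := hRD.1.2.1
  obtain ⟨d, hd⟩ := Q'.exists_forall_extVanishes
  obtain ⟨k, hk⟩ : ∃ k, ∀ i lam, k ≤ i →
    ExtVanishes (RingelDualRing S T) (i + 1) N (Q'.costd lam) :=
      ⟨d, fun i lam hi => hd _ (by lia) _ _ inferInstance⟩
  induction k generalizing N with
  | zero => exact QHData.filtered_std_iff.2 fun lam => hk 0 lam le_rfl
  | succ k ih =>
    obtain ⟨n, p, hp⟩ := exists_surjective_homT_finPow (T := T) N
    have hse := IsShortExact.of_surjective hp
    have := hse.finite_left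
    obtain ⟨X, hX, ⟨e⟩⟩ := hRD.exists_equiv_homT <|
      ih (N := ModuleCat.of _ (LinearMap.ker p))
        (fun i => .contravariant₁ hse (hN (i + 1)) (.of_projective i))
        fun i lam hi => .contravariant₁ hse (hk (i + 1) lam (by lia)) (.of_projective i)
    obtain ⟨g, hg⟩ := hRD.1.exists_homTMap_eq hX ((LinearMap.ker p).subtype ∘ₗ e.symm.toLinearMap)
    have hgp : IsShortExact (homTMap T g) p := hg ▸ hse.congr e.symm (.refl _ _)
    exact hRD.filtered_std_of_isShortExact hX
      (hRD.1.injective_of_extVanishes_homDual hX hgp (hN 0)) hgp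

lemma filtered_std_iff_extVanishes_homDual (hRD : IsRingelDualData S Q T Q') :
    Filtered Q'.std N ↔
      ∀ i, ExtVanishes (RingelDualRing S T) (i + 1) N (HomDual T (ModuleCat.of S S)) := by
  refine ⟨fun hN i => hN.extVanishes_left fun lam => ?_, hRD.filtered_std_of_extVanishes_homDual⟩
  have : Module.Projective S (ModuleCat.of S S) := inferInstanceAs (Module.Projective S S)
  obtain ⟨e⟩ := hRD.2 (OrderDual.ofDual lam)
  exact .congr_left e (hRD.1.extVanishes_homT_homDual (.of_section _) i)

lemma forall_extVanishes_costd_iff (hRD : IsRingelDualData S Q T Q') (d : ℕ) :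
    (∀ i > d, ∀ lam, ExtVanishes (RingelDualRing S T) i N (Q'.costd lam)) ↔
      ∀ i > d, ExtVanishes (RingelDualRing S T) i N (HomDual T (ModuleCat.of S S)) := by
  have : Module.Finite S T := hRD.1.2.1
  obtain ⟨N', _, hN'⟩ := exists_syzygy d N
  have hshift (P : ℕ → Prop) : (∀ i > d, P i) ↔ ∀ i, P (i + 1 + d) := by
    refine ⟨fun h i => h _ (by lia), fun h i hi => ?_⟩
    obtain ⟨j, rfl⟩ : ∃ j, i = j + 1 + d := ⟨i - (d + 1), by lia⟩
    exact h j
  rw [hshift, hshift, ← forall_congr' (hN' (ModuleCat.of _ (HomDual T (ModuleCat.of S S)))),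
    ← hRD.filtered_std_iff_extVanishes_homDual]
  refine ⟨fun h => QHData.filtered_std_iff.2 fun lam => (hN' _ 0).2 (h 0 lam), fun h i lam => ?_⟩
  exact (hN' _ i).1 (h.extVanishes (.of_section lam) i)

end IsRingelDualData

lemma wfdAlg_ringelDual {Q' : QHData (RingelDualRing S T) Λᵒᵈ}
    (hRD : IsRingelDualData S Q T Q') : wfdAlg (RingelDualRing S T) Q' = gfdAlg S Q := by
  have : Module.Finite S T := hRD.1.2.1
  have : Module.Finite S (ModuleCat.of S S) := inferInstanceAs (Module.Finite S S)
  have : Module.Projective S (ModuleCat.of S S) := inferInstanceAs (Module.Projective S S)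
  have hS : Filtered Q.std (ModuleCat.of S S) := QHData.filtered_std_of_projective
  refine eq_of_forall_ge_iff fun d => ?_
  calc wfdAlg (RingelDualRing S T) Q' ≤ d
    _ ↔ ∀ M : ModuleCat.{0} (RingelDualRing S T), Module.Finite (RingelDualRing S T) M →
          ∀ i > d, ∀ lam, ExtVanishes (RingelDualRing S T) i M (Q'.costd lam) :=
      wfdAlg_le_iff.trans
        ⟨fun h M hM i hi lam => h i hi lam M hM, fun h i hi lam M hM => h M hM i hi lam⟩
    _ ↔ ∀ M : ModuleCat.{0} (RingelDualRing S T), Module.Finite (RingelDualRing S T) M →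
          ∀ i > d, ExtVanishes (RingelDualRing S T) i M (HomDual T (ModuleCat.of S S)) :=
      forall₂_congr fun M _ => hRD.forall_extVanishes_costd_iff d
    _ ↔ ∀ i > d, ∀ M : ModuleCat.{0} (RingelDualRing S T), Module.Finite (RingelDualRing S T) M →
          ExtVanishes (RingelDualRing S T) i M (HomDual T (ModuleCat.of S S)) :=
      ⟨fun h i hi M hM => h M hM i hi, fun h M hM i hi => h i hi M hM⟩
    _ ↔ ∀ i > d, ∀ lam, ExtVanishes S i (Q.std lam) S := by
      refine forall₂_congr fun i hi => ?_
      obtain ⟨n, rfl⟩ := Nat.exists_eq_succ_of_ne_zero (Nat.ne_zero_of_lt hi)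
      exact hRD.1.extVanishes_homDual_iff hS n
    _ ↔ gfdAlg S Q ≤ d := gfdAlg_le_iff_self.symm

end HomDualStd

end QHPaper

open QHPaper in
/-- Let `S` be a quasi-hereditary algebra with a simple-preserving duality
and Ringel dual `S'`. Then `gfd(S) = wfd(S) = wfd(S') = gfd(S')`. -/
theorem stmt9 (k S Λ : Type) [Field k] [Ring S] [Algebra k S] [FiniteDimensional k S]
    [Fintype Λ] [PartialOrder Λ]
    (QH : QHData S Λ) (dual : Duality S QH) (T : ModuleCat.{0} S)
    (QH' : QHData (RingelDualRing S T) Λᵒᵈ)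
    (hRD : IsRingelDualData S QH T QH') :
    gfdAlg S QH = wfdAlg S QH ∧
    wfdAlg S QH = wfdAlg (RingelDualRing S T) QH' ∧
    wfdAlg (RingelDualRing S T) QH' = gfdAlg (RingelDualRing S T) QH' := by
  have : IsFiniteDimensionalAlgebra S := ⟨k, _, _, ‹_›⟩
  have h := dual.gfdAlg_eq_wfdAlg
  have hg := gfdAlg_ringelDual hRD
  have hw := wfdAlg_ringelDual hRD
  exact ⟨h, by rw [hw, h], by rw [hw, hg, h]⟩
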